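/- arXiv:2310.01048 — 2 statements merged into one kernel-verified Lean document; each statement's English description precedes it below -/
import Mathlib

section
/- L¹–L∞ continuity estimate (Proposition 1.4): For every real μ ≥ 1 there exists a constant C > 0, independent of W, such that the following holds: for every choice of continuous ν, a : ℝ → ℝ with 1/μ ≤ ν(x) ≤ μ and 1/μ ≤ a(x) ≤ μ for all x, every real W ≥ 0, every fundamental solution P of the canonical equation, and all p₀, q₀ ∈ L∞(ℝ) with p₀ − q₀ ∈ L¹(ℝ), the functions p(t,x) := ∫_ℝ ν(y)P(t,x,y)p₀(y)dy and q(t,x) := ∫_ℝ ν(y)P(t,x,y)q₀(y)dy satisfy sup_{x ∈ ℝ} |p(t,x) − q(t,x)| ≤ (C/√t)·‖p₀ − q₀‖_{L¹(ℝ)} for every t > 0. -/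
open MeasureTheory Filter

/-- Two-sided ellipticity bounds `1/μ ≤ f ≤ μ`. -/
def Elliptic (μ : ℝ) (f : ℝ → ℝ) : Prop := ∀ x : ℝ, 1 / μ ≤ f x ∧ f x ≤ μ

/-- A classical solution of the canonical equation
`ν(x)∂ₜp − ∂ₓ(ν(x)a(x)∂ₓp) + W∂ₓp = 0` for every time `t ∈ s` and every `x ∈ ℝ`. -/
def IsCanonicalSolOn (ν a : ℝ → ℝ) (W : ℝ) (u : ℝ → ℝ → ℝ) (s : Set ℝ) : Prop :=
  ∃ ut ux q : ℝ → ℝ → ℝ, ∀ t ∈ s, ∀ x : ℝ,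
    HasDerivAt (fun τ => u τ x) (ut t x) t ∧
    HasDerivAt (fun ξ => u t ξ) (ux t x) x ∧
    HasDerivAt (fun ξ => ν ξ * a ξ * ux t ξ) (q t x) x ∧
    ν x * ut t x - q t x + W * ux t x = 0

/-- A corrector: `T(0) = 0`, `−(aνT')' + WT' = Wν` and `1/μ⁵ ≤ T' ≤ μ⁵`. -/
def IsCorrector (μ : ℝ) (ν a : ℝ → ℝ) (W : ℝ) (T : ℝ → ℝ) : Prop :=
  T 0 = 0 ∧ ∃ T' : ℝ → ℝ,
    (∀ x, HasDerivAt T (T' x) x) ∧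
    (∀ x, HasDerivAt (fun y => a y * ν y * T' y) (W * T' x - W * ν x) x) ∧
    (∀ x, 1 / μ ^ 5 ≤ T' x ∧ T' x ≤ μ ^ 5)

/-- An adjoint corrector: `T̃(0) = 0`, `(aνT̃')' + WT̃' = Wν` and `1/μ⁵ ≤ T̃' ≤ μ⁵`. -/
def IsAdjointCorrector (μ : ℝ) (ν a : ℝ → ℝ) (W : ℝ) (T : ℝ → ℝ) : Prop :=
  T 0 = 0 ∧ ∃ T' : ℝ → ℝ,
    (∀ x, HasDerivAt T (T' x) x) ∧
    (∀ x, HasDerivAt (fun y => a y * ν y * T' y) (W * ν x - W * T' x) x) ∧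
    (∀ x, 1 / μ ^ 5 ≤ T' x ∧ T' x ≤ μ ^ 5)

/-- A fundamental solution of the canonical equation. -/
def IsFundSol (ν a : ℝ → ℝ) (W : ℝ) (P : ℝ → ℝ → ℝ → ℝ) : Prop :=
  (∀ y : ℝ, IsCanonicalSolOn ν a W (fun t x => P t x y) (Set.Ioi 0)) ∧
  (∀ y : ℝ, ∀ t : ℝ, 0 < t → ∀ x : ℝ, 0 ≤ P t x y) ∧
  (∀ y : ℝ, ∀ t : ℝ, 0 < t → ∫ x : ℝ, ν x * P t x y = 1) ∧
  (∀ y : ℝ, ∀ φ : ℝ → ℝ, Continuous φ → (∃ B : ℝ, ∀ x, |φ x| ≤ B) →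
    Tendsto (fun t => ∫ x : ℝ, ν x * P t x y * φ x)
      (nhdsWithin 0 (Set.Ioi 0)) (nhds (φ y))) ∧
  (∀ s t : ℝ, 0 < s → 0 < t → ∀ x y : ℝ,
    P (t + s) x y = ∫ z : ℝ, ν z * P t x z * P s z y)

section
open MeasureTheory Filter Set Topology

/-- second symmetric difference converges to the second derivative -/
theorem second_diff_tendsto {f f' : ℝ → ℝ} {y f'' : ℝ} (h1 : ∀ᶠ z in 𝓝 y, HasDerivAt f (f' z) z)
    (h2 : HasDerivAt f' f'' y) :
    Tendsto (fun k => (f (y + k) + f (y - k) - 2 * f y) / k ^ 2) (𝓝[>] 0) (𝓝 f'') := by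
  have t1 : Tendsto (fun k : ℝ => y + k) (𝓝[>] 0) (𝓝 y) := by
    have : ContinuousAt (fun k : ℝ => y + k) 0 := by fun_prop
    simpa using this.tendsto.mono_left nhdsWithin_le_nhds
  have t2 : Tendsto (fun k : ℝ => y - k) (𝓝[>] 0) (𝓝 y) := by
    have : ContinuousAt (fun k : ℝ => y - k) 0 := by fun_prop
    simpa using this.tendsto.mono_left nhdsWithin_le_nhds
  have hfc : ContinuousAt f y := h1.self_of_nhds.continuousAt
  refine HasDerivAt.lhopital_zero_nhdsGT (f' := fun k => f' (y + k) - f' (y - k))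
    (g' := fun k => 2 * k) ?_ ?_ ?_ ?_ ?_ ?_
  · filter_upwards [t1.eventually h1, t2.eventually h1] with k hk1 hk2
    have a : HasDerivAt (fun k => f (y + k)) (f' (y + k) * 1) k :=
      hk1.comp k ((hasDerivAt_id k).const_add y)
    have b : HasDerivAt (fun k => f (y - k)) (f' (y - k) * (-1)) k :=
      hk2.comp k ((hasDerivAt_id k).const_sub y)
    have := (a.add b).sub_const (2 * f y)
    refine this.congr_deriv ?_
    ring
  · filter_upwards with k
    simpa using hasDerivAt_pow 2 k
  · filter_upwards [self_mem_nhdsWithin] with k hk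
    have : (0:ℝ) < k := hk
    positivity
  · have : Tendsto (fun k => f (y + k) + f (y - k) - 2 * f y) (𝓝[>] 0) (𝓝 (f y + f y - 2 * f y)) :=
      ((hfc.tendsto.comp t1).add (hfc.tendsto.comp t2)).sub_const (2 * f y)
    rwa [show f y + f y - 2 * f y = 0 by ring] at this
  · have : ContinuousAt (fun k : ℝ => k ^ 2) 0 := by fun_prop
    simpa using this.tendsto.mono_left nhdsWithin_le_nhds
  · have hs : Tendsto (fun k => k⁻¹ * (f' (y + k) - f' y)) (𝓝[>] 0) (𝓝 f'') := by
      have := (hasDerivAt_iff_tendsto_slope_zero.1 h2).mono_left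
        (nhdsWithin_mono 0 (fun x hx => ne_of_gt hx) : 𝓝[>] (0:ℝ) ≤ 𝓝[≠] 0)
      simpa using this
    have hs2 : Tendsto (fun k => k⁻¹ * (f' y - f' (y - k))) (𝓝[>] 0) (𝓝 f'') := by
      have h3 := (hasDerivAt_iff_tendsto_slope_zero.1 h2)
      have hneg : Tendsto (fun k : ℝ => -k) (𝓝[>] 0) (𝓝[≠] 0) := by
        refine tendsto_nhdsWithin_iff.2 ⟨?_, ?_⟩
        · have : ContinuousAt (fun k : ℝ => -k) 0 := by fun_prop
          simpa using this.tendsto.mono_left nhdsWithin_le_nhds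
        · filter_upwards [self_mem_nhdsWithin] with k hk
          have : (0:ℝ) < k := hk
          simp [this.ne']
      have := h3.comp hneg
      refine this.congr ?_
      intro k
      simp only [Function.comp, smul_eq_mul, inv_neg, ← sub_eq_add_neg]
      ring
    have := (hs.add hs2).const_mul (1/2)
    rw [show 1/2 * (f'' + f'') = f'' by ring] at this
    refine this.congr' ?_
    filter_upwards [self_mem_nhdsWithin] with k hk
    have : (0:ℝ) < k := hk
    field_simp
    ring

/-- drift-adapted second difference -/
noncomputable def Lam (W : ℝ) (g : ℝ → ℝ) (y h : ℝ) : ℝ :=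
  Real.exp (-(W * h / 2)) * (g (y + h) - g y) + Real.exp (W * h / 2) * (g (y - h) - g y)

/-- scale function -/
noncomputable def sfun (W : ℝ) (y : ℝ) : ℝ := if W = 0 then y else (Real.exp (W * y) - 1) / W

theorem sfun_deriv (W y : ℝ) : HasDerivAt (sfun W) (Real.exp (W * y)) y := by
  by_cases hW : W = 0
  · subst hW
    have : sfun 0 = fun y => y := by funext y; simp [sfun]
    rw [this]; simpa using hasDerivAt_id' y
  · have : sfun W = fun y => (Real.exp (W * y) - 1) / W := by funext y; simp [sfun, hW]
    rw [this]
    have h := ((((hasDerivAt_id y).const_mul W).exp).sub_const 1).div_const W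
    refine h.congr_deriv ?_
    simp; field_simp

theorem sfun_cont (W : ℝ) : Continuous (sfun W) :=
  continuous_iff_continuousAt.2 fun y => (sfun_deriv W y).continuousAt

theorem sfun_mono (W : ℝ) : StrictMono (sfun W) :=
  strictMono_of_hasDerivAt_pos (sfun_deriv W) (fun y => Real.exp_pos _)

theorem sfun_lin (W y : ℝ) : W * sfun W y = Real.exp (W * y) - 1 := by
  by_cases hW : W = 0
  · subst hW; simp
  · simp only [sfun, hW, if_false]; field_simp

theorem Lam_sfun (W y h : ℝ) : Lam W (sfun W) y h = 0 := by
  by_cases hW : W = 0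
  · subst hW; simp [Lam, sfun]
  · simp only [Lam, sfun, hW, if_false]
    have e1 : Real.exp (W * (y + h)) = Real.exp (W * y) * Real.exp (W * h / 2) * Real.exp (W * h / 2) := by
      rw [← Real.exp_add, ← Real.exp_add]; ring_nf
    have e2 : Real.exp (W * (y - h)) =
        Real.exp (W * y) * Real.exp (-(W * h / 2)) * Real.exp (-(W * h / 2)) := by
      rw [← Real.exp_add, ← Real.exp_add]; ring_nf
    have e3 : Real.exp (W * h / 2) * Real.exp (-(W * h / 2)) = 1 := by
      rw [← Real.exp_add]; simp
    rw [e1, e2]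
    field_simp
    linear_combination (Real.exp (W*y) * Real.exp (W * h / 2) + Real.exp (W*y) * Real.exp (-(W * h / 2))) * e3

theorem Lam_tendsto {W : ℝ} {f f' : ℝ → ℝ} {y f'' : ℝ} (h1 : ∀ᶠ z in 𝓝 y, HasDerivAt f (f' z) z)
    (h2 : HasDerivAt f' f'' y) :
    Tendsto (fun k => Lam W f y k / k ^ 2) (𝓝[>] 0) (𝓝 (f'' - W * f' y)) := by
  have hd := h1.self_of_nhds
  have A := second_diff_tendsto h1 h2
  have hexp : HasDerivAt (fun k : ℝ => Real.sinh (W * k / 2)) (W / 2) 0 := by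
    have := (((hasDerivAt_id (0:ℝ)).const_mul W).div_const 2).sinh
    simpa using this
  have hmono : 𝓝[>] (0:ℝ) ≤ 𝓝[≠] 0 := nhdsWithin_mono 0 (fun x hx => ne_of_gt hx)
  have S1 : Tendsto (fun k : ℝ => k⁻¹ * Real.sinh (W * k / 2)) (𝓝[>] 0) (𝓝 (W/2)) := by
    have := (hasDerivAt_iff_tendsto_slope_zero.1 hexp).mono_left hmono
    simpa using this
  have S2 : Tendsto (fun k : ℝ => k⁻¹ * (f (y + k) - f (y - k))) (𝓝[>] 0) (𝓝 (2 * f' y)) := by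
    have hd' : HasDerivAt (fun k => f (y + k) - f (y - k)) (2 * f' y) 0 := by
      have a : HasDerivAt (fun k => f (y + k)) (f' y * 1) 0 :=
        HasDerivAt.comp (h₂ := f) 0 (by simpa using hd) ((hasDerivAt_id (0:ℝ)).const_add y)
      have b : HasDerivAt (fun k => f (y - k)) (f' y * (-1)) 0 :=
        HasDerivAt.comp (h₂ := f) 0 (by simpa using hd) ((hasDerivAt_id (0:ℝ)).const_sub y)
      refine (a.sub b).congr_deriv (by ring)
    have := (hasDerivAt_iff_tendsto_slope_zero.1 hd').mono_left hmono
    simpa using this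
  have S3 : Tendsto (fun k : ℝ => Real.cosh (W * k / 2)) (𝓝[>] 0) (𝓝 1) := by
    have : ContinuousAt (fun k : ℝ => Real.cosh (W * k / 2)) 0 := by fun_prop
    simpa using this.tendsto.mono_left nhdsWithin_le_nhds
  have := (S3.mul A).sub (S1.mul S2)
  rw [show 1 * f'' - W / 2 * (2 * f' y) = f'' - W * f' y by ring] at this
  refine this.congr' ?_
  filter_upwards [self_mem_nhdsWithin] with k hk
  have : (0:ℝ) < k := hk
  simp only [Lam, Real.sinh_eq, Real.cosh_eq]
  field_simp
  ring

theorem Lam_qfun_tendsto (W y : ℝ) :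
    Tendsto (fun k => Lam W (fun z => Real.exp ((W+1) * z)) y k / k ^ 2) (𝓝[>] 0)
      (𝓝 ((W + 1) * Real.exp ((W+1)*y))) := by
  have d : ∀ z, HasDerivAt (fun z => Real.exp ((W+1) * z)) ((W+1) * Real.exp ((W+1)*z)) z := by
    intro z
    have := ((hasDerivAt_id z).const_mul (W+1)).exp
    refine this.congr_deriv ?_
    simp; ring
  have := Lam_tendsto (W := W) (y := y) (Eventually.of_forall d) ((d y).const_mul (W+1))
  convert this using 2
  ring

/-- generalized convexity with respect to the scale function -/
def SConv (W : ℝ) (g : ℝ → ℝ) : Prop :=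
  ∀ a b c, a < b → b < c → (g b - g a) * (sfun W c - sfun W b) ≤ (g c - g b) * (sfun W b - sfun W a)

set_option maxHeartbeats 1000000 in
theorem sconv_of_freq {W : ℝ} (hW : 0 ≤ W) {g : ℝ → ℝ} (hg : UpperSemicontinuous g)
    (h : ∀ y, ∀ ε > 0, ∃ᶠ k in 𝓝[>] (0:ℝ), -ε * k ^ 2 ≤ Lam W g y k) :
    SConv W g := by
  intro x y z hxy hyz
  by_contra hcon
  push Not at hcon
  have hs1 := sfun_mono W hxy
  have hs2 := sfun_mono W hyz
  set S := sfun W with hS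
  have h3 : 0 < S z - S x := by linarith
  set m := (g z - g x) / (S z - S x) with hm
  have key : 0 < g y - (g x + m * (S y - S x)) := by
    have : (g y - (g x + m * (S y - S x))) * (S z - S x)
        = (g y - g x) * (S z - S y) - (g z - g y) * (S y - S x) := by
      rw [hm]; field_simp; ring
    by_contra h'
    push Not at h'
    nlinarith
  set δ := g y - (g x + m * (S y - S x)) with hδ
  let q : ℝ → ℝ := fun z => Real.exp ((W+1) * z)
  have hq0 : ∀ t, 0 < q t := fun t => Real.exp_pos _
  set ε := δ / (2 * q z) with hε
  have hε0 : 0 < ε := div_pos key (by have := hq0 z; positivity)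
  have hεq : ε * q z = δ / 2 := by rw [hε]; have := (hq0 z).ne'; field_simp
  have hqx : q x ≤ q z := Real.exp_le_exp.2 (by nlinarith)
  let G : ℝ → ℝ := fun s => g s + (-(g x + m * (S s - S x)) + ε * q s)
  have hGc : UpperSemicontinuous G := by
    refine hg.add (Continuous.upperSemicontinuous ?_)
    have := sfun_cont W
    fun_prop
  obtain ⟨s, hs, hmax⟩ := (hGc.upperSemicontinuousOn (Icc x z)).exists_isMaxOn
    (nonempty_Icc.2 (hxy.trans hyz).le) isCompact_Icc
  have hGx : G x ≤ δ / 2 := by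
    simp only [G]; nlinarith
  have hGz : G z ≤ δ / 2 := by
    have : G z = ε * q z := by simp only [G, hm]; field_simp; ring
    linarith
  have hGy : δ < G y := by
    have : G y = δ + ε * q y := by simp only [G, hδ]; ring
    rw [this]
    have := mul_pos hε0 (hq0 y)
    linarith
  have hGs : δ < G s := lt_of_lt_of_le hGy (hmax ⟨hxy.le, hyz.le⟩)
  have hsx : x < s := by
    rcases hs.1.lt_or_eq with h | h
    · exact h
    · rw [← h] at hGs; linarith
  have hsz : s < z := by
    rcases hs.2.lt_or_eq with h | h
    · exact h
    · rw [h] at hGs; linarith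
  set c := (W + 1) * q s with hc
  have hc0 : 0 < c := mul_pos (by linarith) (hq0 s)
  have hf := h s (ε * (c / 4)) (by positivity)
  have hev : ∀ᶠ k in 𝓝[>] (0:ℝ), 0 < k ∧ k < min (s - x) (z - s) := by
    have : Ioo (0:ℝ) (min (s - x) (z - s)) ∈ 𝓝[>] (0:ℝ) :=
      Ioo_mem_nhdsGT (lt_min (by linarith) (by linarith))
    filter_upwards [this] with k hk using hk
  have hev2 : ∀ᶠ k in 𝓝[>] (0:ℝ), c / 2 < Lam W q s k / k ^ 2 :=
    (Lam_qfun_tendsto W s).eventually (lt_mem_nhds (by linarith))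
  obtain ⟨k, hk1, ⟨hk0, hk2⟩, hk3⟩ := (hf.and_eventually (hev.and hev2)).exists
  have ha := lt_of_lt_of_le hk2 (min_le_left _ _)
  have hb := lt_of_lt_of_le hk2 (min_le_right _ _)
  have m1 : G (s + k) ≤ G s := hmax ⟨by linarith, by linarith⟩
  have m2 : G (s - k) ≤ G s := hmax ⟨by linarith, by linarith⟩
  have hLG : Lam W G s k ≤ 0 := by
    have a1 := mul_nonneg (Real.exp_pos (-(W * k / 2))).le (sub_nonneg.2 m1)
    have a2 := mul_nonneg (Real.exp_pos (W * k / 2)).le (sub_nonneg.2 m2)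
    simp only [Lam]; nlinarith
  have hdec : Lam W G s k = Lam W g s k - m * Lam W S s k + ε * Lam W q s k := by
    simp only [Lam, G]; ring
  rw [hdec, hS, Lam_sfun] at hLG
  rw [lt_div_iff₀ (by positivity)] at hk3
  have := mul_lt_mul_of_pos_left hk3 hε0
  nlinarith [mul_pos hε0 (mul_pos hc0 (pow_pos hk0 2))]

theorem SConv.Lam_nonneg {W : ℝ} {g : ℝ → ℝ} (hg : SConv W g) (y : ℝ) {k : ℝ} (hk : 0 < k) :
    0 ≤ Lam W g y k := by
  have h := hg (y - k) y (y + k) (by linarith) (by linarith)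
  have e := Lam_sfun W y k
  have hm := sfun_mono W (show y - k < y by linarith)
  simp only [Lam] at e ⊢
  set E := Real.exp (W * k / 2) with hE
  have hE0 : 0 < E := Real.exp_pos _
  have e3 : Real.exp (-(W * k / 2)) = E⁻¹ := by rw [Real.exp_neg]
  rw [e3] at e ⊢
  have e' : sfun W (y + k) - sfun W y = E * E * (sfun W y - sfun W (y - k)) := by
    field_simp at e; linarith
  rw [e'] at h
  have hd : 0 < sfun W y - sfun W (y - k) := by linarith
  have h2 : (g y - g (y - k)) * (E * E) ≤ g (y + k) - g y := by
    by_contra hh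
    push Not at hh
    nlinarith
  have : 0 ≤ E * (E⁻¹ * (g (y + k) - g y) + E * (g (y - k) - g y)) := by
    have : E * (E⁻¹ * (g (y + k) - g y) + E * (g (y - k) - g y)) = (g (y + k) - g y) + E * E * (g (y - k) - g y) := by
      field_simp
    rw [this]; linarith
  exact nonneg_of_mul_nonneg_right this hE0

theorem SConv.continuous {W : ℝ} {g : ℝ → ℝ} (hg : SConv W g) (hu : UpperSemicontinuous g) :
    Continuous g := by
  rw [continuous_iff_continuousAt]
  intro y
  have hm1 := sfun_mono W (show y - 1 < y by linarith)
  have hm2 := sfun_mono W (show y < y + 1 by linarith)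
  set A := |g y - g (y - 1)| / (sfun W y - sfun W (y - 1)) with hA
  set B := |g (y + 1) - g y| / (sfun W (y + 1) - sfun W y) with hB
  have hA0 : 0 ≤ A := div_nonneg (abs_nonneg _) (by linarith)
  have hB0 : 0 ≤ B := div_nonneg (abs_nonneg _) (by linarith)
  have hlow : ∀ z, g y - (A + B) * |sfun W z - sfun W y| ≤ g z := by
    intro z
    rcases lt_trichotomy z y with h | h | h
    · have := hg z y (y + 1) h (by linarith)
      have hm := sfun_mono W h
      rw [abs_of_neg (by linarith)]
      have h1 : (g (y + 1) - g y) * (sfun W y - sfun W z) ≤ B * (sfun W (y+1) - sfun W y) * (sfun W y - sfun W z) := by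
        refine mul_le_mul_of_nonneg_right ?_ (by linarith)
        rw [hB, div_mul_cancel₀ _ (by linarith)]
        exact le_abs_self _
      have h2 : g y - g z ≤ B * (sfun W y - sfun W z) := by
        by_contra hh
        push Not at hh
        nlinarith
      nlinarith [mul_nonneg hA0 (show 0 ≤ sfun W y - sfun W z by linarith)]
    · subst h; simp
    · have := hg (y - 1) y z (by linarith) h
      have hm := sfun_mono W h
      rw [abs_of_pos (by linarith)]
      have h1 : -(A * (sfun W y - sfun W (y-1)) * (sfun W z - sfun W y)) ≤ (g y - g (y - 1)) * (sfun W z - sfun W y) := by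
        rw [← neg_mul]
        refine mul_le_mul_of_nonneg_right ?_ (by linarith)
        rw [hA, div_mul_cancel₀ _ (by linarith)]
        exact neg_abs_le _
      have h2 : -(A * (sfun W z - sfun W y)) ≤ g z - g y := by
        by_contra hh
        push Not at hh
        nlinarith
      nlinarith [mul_nonneg hB0 (show 0 ≤ sfun W z - sfun W y by linarith)]
  rw [continuousAt_iff_lower_upperSemicontinuousAt]
  refine ⟨?_, hu y⟩
  intro c hc
  have hcont : ContinuousAt (fun z => g y - (A + B) * |sfun W z - sfun W y|) y := by
    have := sfun_cont W
    fun_prop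
  have : ∀ᶠ z in 𝓝 y, c < g y - (A + B) * |sfun W z - sfun W y| :=
    hcont.eventually (lt_mem_nhds (by simpa using hc))
  filter_upwards [this] with z hz using hz.trans_le (hlow z)

end

section
open MeasureTheory Filter Set Topology

noncomputable def Gop (W : ℝ) (f : ℝ → ℝ) (y : ℝ) : ℝ :=
  ∫ ξ in (0:ℝ)..y, Real.exp (W * ξ) * ∫ ζ in (0:ℝ)..ξ, Real.exp (-(W * ζ)) * f ζ

theorem Gop_inner_deriv {W : ℝ} {f : ℝ → ℝ} (hf : Continuous f) (y : ℝ) :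
    HasDerivAt (fun ξ => ∫ ζ in (0:ℝ)..ξ, Real.exp (-(W * ζ)) * f ζ) (Real.exp (-(W * y)) * f y) y := by
  have hc : Continuous fun ζ => Real.exp (-(W * ζ)) * f ζ := by fun_prop
  exact hc.integral_hasStrictDerivAt 0 y |>.hasDerivAt

theorem Gop_inner_cont {W : ℝ} {f : ℝ → ℝ} (hf : Continuous f) :
    Continuous (fun ξ => ∫ ζ in (0:ℝ)..ξ, Real.exp (-(W * ζ)) * f ζ) :=
  continuous_iff_continuousAt.2 fun y => (Gop_inner_deriv hf y).continuousAt

theorem Gop_deriv {W : ℝ} {f : ℝ → ℝ} (hf : Continuous f) (y : ℝ) :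
    HasDerivAt (Gop W f) (Real.exp (W * y) * ∫ ζ in (0:ℝ)..y, Real.exp (-(W * ζ)) * f ζ) y := by
  have hc : Continuous fun ξ => Real.exp (W * ξ) * ∫ ζ in (0:ℝ)..ξ, Real.exp (-(W * ζ)) * f ζ := by
    have := Gop_inner_cont (W := W) hf
    fun_prop
  exact hc.integral_hasStrictDerivAt 0 y |>.hasDerivAt

theorem Gop_deriv2 {W : ℝ} {f : ℝ → ℝ} (hf : Continuous f) (y : ℝ) :
    HasDerivAt (fun y => Real.exp (W * y) * ∫ ζ in (0:ℝ)..y, Real.exp (-(W * ζ)) * f ζ)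
      (W * (Real.exp (W * y) * ∫ ζ in (0:ℝ)..y, Real.exp (-(W * ζ)) * f ζ) + f y) y := by
  have h1 := ((hasDerivAt_id y).const_mul W).exp
  have := h1.mul (Gop_inner_deriv (W := W) hf y)
  refine this.congr_deriv ?_
  have e : Real.exp (W * y) * Real.exp (-(W * y)) = 1 := by rw [← Real.exp_add]; simp
  simp only [id]
  linear_combination (f y) * e

theorem Gop_cont {W : ℝ} {f : ℝ → ℝ} (hf : Continuous f) : Continuous (Gop W f) :=
  continuous_iff_continuousAt.2 fun y => (Gop_deriv hf y).continuousAt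

theorem Gop_Lam {W : ℝ} {f : ℝ → ℝ} (hf : Continuous f) (y : ℝ) :
    Tendsto (fun k => Lam W (Gop W f) y k / k ^ 2) (𝓝[>] 0) (𝓝 (f y)) := by
  have := Lam_tendsto (W := W) (y := y) (Eventually.of_forall (Gop_deriv (W := W) hf)) (Gop_deriv2 hf y)
  convert this using 2
  ring

theorem Gop_tendsto {W : ℝ} {f : ℝ → ℝ} {F : ℕ → ℝ → ℝ} {b : ℝ → ℝ} (hb : Continuous b)
    (hF : ∀ n, Continuous (F n)) (hFb : ∀ n y, |F n y| ≤ b y)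
    (hlim : ∀ y, Tendsto (fun n => F n y) atTop (𝓝 (f y))) (y : ℝ) :
    Tendsto (fun n => Gop W (F n) y) atTop (𝓝 (Gop W f y)) := by
  have inner : ∀ ξ, Tendsto (fun n => ∫ ζ in (0:ℝ)..ξ, Real.exp (-(W * ζ)) * F n ζ) atTop
      (𝓝 (∫ ζ in (0:ℝ)..ξ, Real.exp (-(W * ζ)) * f ζ)) := by
    intro ξ
    refine intervalIntegral.tendsto_integral_filter_of_dominated_convergence
      (fun ζ => Real.exp (-(W * ζ)) * b ζ) ?_ ?_ ?_ ?_
    · refine Eventually.of_forall fun n => ?_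
      have := hF n
      exact (by fun_prop : Continuous fun ζ => Real.exp (-(W * ζ)) * F n ζ).aestronglyMeasurable
    · refine Eventually.of_forall fun n => Eventually.of_forall fun ζ _ => ?_
      rw [Real.norm_eq_abs, abs_mul, abs_of_pos (Real.exp_pos _)]
      exact mul_le_mul_of_nonneg_left (hFb n ζ) (Real.exp_pos _).le
    · exact (by fun_prop : Continuous fun ζ => Real.exp (-(W * ζ)) * b ζ).intervalIntegrable _ _
    · exact Eventually.of_forall fun ζ _ => (hlim ζ).const_mul _
  have hB := Gop_inner_cont (W := W) hb
  refine intervalIntegral.tendsto_integral_filter_of_dominated_convergence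
    (fun ξ => Real.exp (W * ξ) * |∫ ζ in (0:ℝ)..ξ, Real.exp (-(W * ζ)) * b ζ|) ?_ ?_ ?_ ?_
  · refine Eventually.of_forall fun n => ?_
    have := Gop_inner_cont (W := W) (hF n)
    exact (by fun_prop : Continuous fun ξ => Real.exp (W * ξ) *
      ∫ ζ in (0:ℝ)..ξ, Real.exp (-(W * ζ)) * F n ζ).aestronglyMeasurable
  · refine Eventually.of_forall fun n => Eventually.of_forall fun ξ _ => ?_
    rw [Real.norm_eq_abs, abs_mul, abs_of_pos (Real.exp_pos _)]
    refine mul_le_mul_of_nonneg_left ?_ (Real.exp_pos _).le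
    rw [← Real.norm_eq_abs]
    refine intervalIntegral.norm_integral_le_abs_of_norm_le ?_ ?_
    · refine Eventually.of_forall fun ζ => ?_
      rw [Real.norm_eq_abs, abs_mul, abs_of_pos (Real.exp_pos _)]
      exact mul_le_mul_of_nonneg_left (hFb n ζ) (Real.exp_pos _).le
    · exact (by fun_prop : Continuous fun ζ => Real.exp (-(W * ζ)) * b ζ).intervalIntegrable _ _
  · exact (by fun_prop : Continuous fun ξ => Real.exp (W * ξ) *
      |∫ ζ in (0:ℝ)..ξ, Real.exp (-(W * ζ)) * b ζ|).intervalIntegrable _ _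
  · exact Eventually.of_forall fun ξ _ => (inner ξ).const_mul _

theorem SConv.of_tendsto {W : ℝ} {F : ℕ → ℝ → ℝ} {f : ℝ → ℝ} (hF : ∀ n, SConv W (F n))
    (hlim : ∀ y, Tendsto (fun n => F n y) atTop (𝓝 (f y))) : SConv W f := by
  intro a b c hab hbc
  exact le_of_tendsto_of_tendsto' (((hlim b).sub (hlim a)).mul_const _)
    (((hlim c).sub (hlim b)).mul_const _) (fun n => hF n a b c hab hbc)

/-- being a (generalized) supersolution at a point -/
def SupAt (W : ℝ) (ρ : ℝ → ℝ) (w : ℝ → ℝ → ℝ) (t y : ℝ) : Prop :=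
  ∃ wt, HasDerivAt (fun s => w s y) wt t ∧
    ∀ η > 0, ∀ᶠ h in 𝓝[>] (0:ℝ), Lam W (w t) y h ≤ (ρ y * wt + η) * h ^ 2

theorem ic_exists {w : ℝ → ℝ → ℝ} {T1 T2 ε : ℝ} (hT : T1 ≤ T2)
    (hl : ∀ t ∈ Icc T1 T2, ∀ y, LowerSemicontinuousAt (fun p : ℝ × ℝ => w p.1 p.2) (t, y)) :
    ∃ z σ : ℝ → ℝ → ℝ, (∀ t y, σ t y ∈ Icc T1 T2) ∧
      (∀ t y, z t y = w (σ t y) y + (t - σ t y) ^ 2 / (2 * ε)) ∧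
      (∀ t y, ∀ s ∈ Icc T1 T2, z t y ≤ w s y + (t - s) ^ 2 / (2 * ε)) ∧
      (∀ t, LowerSemicontinuous (z t)) := by
  have key : ∀ t y, ∃ s ∈ Icc T1 T2, ∀ s' ∈ Icc T1 T2,
      w s y + (t - s) ^ 2 / (2 * ε) ≤ w s' y + (t - s') ^ 2 / (2 * ε) := by
    intro t y
    have hls : LowerSemicontinuousOn (fun s => w s y + (t - s) ^ 2 / (2 * ε)) (Icc T1 T2) := by
      refine LowerSemicontinuousOn.add ?_ ((Continuous.lowerSemicontinuous (by fun_prop)).lowerSemicontinuousOn _)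
      intro s hs
      have h1 : LowerSemicontinuousAt (fun s => w s y) s := by
        intro c hc
        have := hl s hs y c hc
        have hcont : Tendsto (fun s : ℝ => (s, y)) (𝓝 s) (𝓝 (s, y)) := by
          have : Continuous fun s : ℝ => (s, y) := by fun_prop
          exact this.tendsto s
        exact hcont.eventually this
      exact h1.lowerSemicontinuousWithinAt _
    obtain ⟨s, hs, hmin⟩ := hls.exists_isMinOn (nonempty_Icc.2 hT) isCompact_Icc
    exact ⟨s, hs, fun s' hs' => hmin hs'⟩
  choose σ hσ hmin using key
  refine ⟨fun t y => w (σ t y) y + (t - σ t y) ^ 2 / (2 * ε), σ, hσ, fun _ _ => rfl,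
    fun t y s hs => hmin t y s hs, ?_⟩
  intro t y c hc
  have : ∀ᶠ y' in 𝓝 y, ∀ s ∈ Icc T1 T2, c < w s y' + (t - s) ^ 2 / (2 * ε) := by
    refine isCompact_Icc.eventually_forall_of_forall_eventually ?_
    intro s hs
    have hh : LowerSemicontinuousAt (fun p : ℝ × ℝ => w p.1 p.2 + (t - p.1) ^ 2 / (2 * ε)) (s, y) :=
      (hl s hs y).add (Continuous.lowerSemicontinuous (by fun_prop) _)
    have := hh c (lt_of_lt_of_le hc (hmin t y s hs))
    have hsw : Tendsto (fun p : ℝ × ℝ => (p.2, p.1)) (𝓝 (y, s)) (𝓝 (s, y)) :=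
      (continuous_swap.tendsto (y, s))
    exact hsw.eventually this
  filter_upwards [this] with y' hy' using hy' _ (hσ t y')

end

section
open MeasureTheory Filter Set Topology

set_option maxHeartbeats 1000000 in
theorem ws_eps {W Λ M T1 T2 t1 t2 ε d : ℝ} (hW : 0 ≤ W) {ρ : ℝ → ℝ} {w : ℝ → ℝ → ℝ}
    (hρ : Continuous ρ) (hρ0 : ∀ y, 0 ≤ ρ y) (hρ1 : ∀ y, ρ y ≤ Λ)
    (hw0 : ∀ t ∈ Icc T1 T2, ∀ y, 0 ≤ w t y) (hwM : ∀ t ∈ Icc T1 T2, ∀ y, w t y ≤ M)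
    (hsup : ∀ t ∈ Icc T1 T2, ∀ y, SupAt W ρ w t y)
    (h1 : T1 + d ≤ t1) (h12 : t1 ≤ t2) (h2 : t2 + d ≤ T2) (hd : 0 < d) (hε : 0 < ε)
    (hεd : 2 * ε * M < d ^ 2) {z σ : ℝ → ℝ → ℝ} (hσ : ∀ t y, σ t y ∈ Icc T1 T2)
    (hz : ∀ t y, z t y = w (σ t y) y + (t - σ t y) ^ 2 / (2 * ε))
    (hzle : ∀ t y, ∀ s ∈ Icc T1 T2, z t y ≤ w s y + (t - s) ^ 2 / (2 * ε))
    (hzl : ∀ t, LowerSemicontinuous (z t)) :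
    (∀ t ∈ Icc t1 t2, ∀ y, (t - σ t y) ^ 2 ≤ 2 * ε * M) ∧
    (∀ t ∈ Icc t1 t2, Continuous (z t)) ∧ (∀ y, Continuous fun t => z t y) ∧
    (∀ t ∈ Icc t1 t2, ∀ y, 0 ≤ z t y ∧ z t y ≤ w t y) ∧
    SConv W (fun y => Gop W (fun x => ρ x * (z t2 x - z t1 x)) y - ∫ s in t1..t2, z s y) := by
  have hsubI : ∀ t ∈ Icc t1 t2, t ∈ Icc T1 T2 := fun t ht => ⟨by linarith [ht.1], by linarith [ht.2]⟩
  have hT12 : T1 < T2 := by linarith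
  have hΛ : 0 ≤ Λ := (hρ0 0).trans (hρ1 0)
  have hz0 : ∀ t y, 0 ≤ z t y := by
    intro t y
    rw [hz]
    have := hw0 _ (hσ t y) y
    positivity
  have hzw : ∀ t ∈ Icc T1 T2, ∀ y, z t y ≤ w t y := by
    intro t ht y
    have := hzle t y t ht
    simpa using this
  have ha : ∀ t ∈ Icc t1 t2, ∀ y, (t - σ t y) ^ 2 ≤ 2 * ε * M := by
    intro t ht y
    have e1 := (hzw t (hsubI t ht) y).trans (hwM t (hsubI t ht) y)
    rw [hz] at e1
    have e2 := hw0 _ (hσ t y) y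
    have : (t - σ t y) ^ 2 / (2 * ε) ≤ M := by linarith
    rw [div_le_iff₀ (by positivity)] at this
    linarith
  -- supersolution with maximal slope
  have hb : ∀ t ∈ Icc t1 t2, ∀ y, ∀ η > 0, ∀ᶠ h in 𝓝[>] (0:ℝ),
      Lam W (z t) y h ≤ (ρ y * ((t - σ t y) / ε) + η) * h ^ 2 := by
    intro t ht y η hη
    have hinteg : |t - σ t y| < d := abs_lt_of_sq_lt_sq ((ha t ht y).trans_lt hεd) hd.le
    rw [abs_lt] at hinteg
    set s := σ t y with hs
    have hsI : s ∈ Ioo T1 T2 := ⟨by linarith [ht.1], by linarith [ht.2]⟩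
    obtain ⟨wt, hwt, hLam⟩ := hsup s (hσ t y) y
    have hlm : IsLocalMin (fun s => w s y + (t - s) ^ 2 / (2 * ε)) s := by
      filter_upwards [Ioo_mem_nhds hsI.1 hsI.2] with s' hs'
      have := hzle t y s' ⟨hs'.1.le, hs'.2.le⟩
      rw [hz] at this
      exact this
    have hder : HasDerivAt (fun s => w s y + (t - s) ^ 2 / (2 * ε)) (wt + (s - t) / ε) s := by
      have := (((hasDerivAt_id s).const_sub t).pow 2).div_const (2 * ε)
      refine (hwt.add this).congr_deriv ?_
      simp; field_simp; ring
    have hwt' : wt = (t - s) / ε := by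
      have := hlm.hasDerivAt_eq_zero hder
      have e : (s - t) / ε = -((t - s) / ε) := by rw [← neg_div]; ring_nf
      linarith
    rw [hwt'] at hLam
    filter_upwards [hLam η hη] with h hh
    refine le_trans ?_ hh
    have a1 := hzle t y s (hσ t y)
    have a2 := hzle t (y + h) s (hσ t y)
    have a3 := hzle t (y - h) s (hσ t y)
    have a4 := hz t y
    rw [← hs] at a4
    have b1 : z t (y + h) - z t y ≤ w s (y + h) - w s y := by linarith
    have b2 : z t (y - h) - z t y ≤ w s (y - h) - w s y := by linarith
    simp only [Lam]
    exact add_le_add (mul_le_mul_of_nonneg_left b1 (Real.exp_pos _).le)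
      (mul_le_mul_of_nonneg_left b2 (Real.exp_pos _).le)
  have hc : ∀ t y, ∀ τ > 0, (t - σ t y) / ε ≤ (z t y - z (t - τ) y) / τ + τ / (2 * ε) := by
    intro t y τ hτ
    have := hzle (t - τ) y _ (hσ t y)
    have e := hz t y
    have e2 : z (t - τ) y ≤ z t y - τ * ((t - σ t y) / ε) + τ ^ 2 / (2 * ε) := by
      have : (t - τ - σ t y) ^ 2 / (2 * ε) = (t - σ t y) ^ 2 / (2 * ε) - τ * ((t - σ t y) / ε) + τ ^ 2 / (2 * ε) := by
        field_simp; ring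
      linarith
    have e3 : (z t y - z (t - τ) y) / τ + τ / (2 * ε) = (z t y - z (t - τ) y + τ ^ 2 / (2 * ε)) / τ := by
      field_simp
    rw [e3, le_div_iff₀ hτ]
    linarith
  set C := Λ * ((T2 - T1) / ε) with hC
  have hC0 : 0 ≤ C := mul_nonneg hΛ (div_nonneg (by linarith) hε.le)
  have hpC : ∀ t ∈ Icc t1 t2, ∀ y, ρ y * ((t - σ t y) / ε) ≤ C := by
    intro t ht y
    have hs := hσ t y
    have : (t - σ t y) / ε ≤ (T2 - T1) / ε := by
      gcongr
      · linarith [ht.2]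
      · exact hs.1
    calc ρ y * ((t - σ t y) / ε) ≤ ρ y * ((T2 - T1) / ε) := mul_le_mul_of_nonneg_left this (hρ0 y)
      _ ≤ C := mul_le_mul_of_nonneg_right (hρ1 y) (div_nonneg (by linarith) hε.le)
  have hGC : Continuous (Gop W (fun _ => C)) := Gop_cont continuous_const
  have husc : ∀ t, UpperSemicontinuous (fun y => Gop W (fun _ => C) y - z t y) := by
    intro t
    have : UpperSemicontinuous (fun y => - z t y) := by
      intro y c hc
      have hc' : -c < z t y := by linarith
      filter_upwards [hzl t y (-c) hc'] with y' hy'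
      linarith
    simpa [sub_eq_add_neg] using hGC.upperSemicontinuous.add this
  have hsc : ∀ t ∈ Icc t1 t2, SConv W (fun y => Gop W (fun _ => C) y - z t y) := by
    intro t ht
    refine sconv_of_freq hW (husc t) ?_
    intro y η hη
    refine Eventually.frequently ?_
    have e1 := hb t ht y (η / 2) (by positivity)
    have e2 : ∀ᶠ k in 𝓝[>] (0:ℝ), C - η / 2 < Lam W (Gop W (fun _ => C)) y k / k ^ 2 :=
      (Gop_Lam (W := W) (f := fun _ => C) continuous_const y).eventually (lt_mem_nhds (by linarith))
    filter_upwards [e1, e2, self_mem_nhdsWithin] with k hk1 hk2 hk3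
    have hk : (0:ℝ) < k := hk3
    rw [lt_div_iff₀ (by positivity)] at hk2
    have : Lam W (fun y => Gop W (fun _ => C) y - z t y) y k = Lam W (Gop W (fun _ => C)) y k - Lam W (z t) y k := by
      simp only [Lam]; ring
    rw [this]
    have := mul_le_mul_of_nonneg_right (hpC t ht y) (sq_nonneg k)
    nlinarith
  have hzc : ∀ t ∈ Icc t1 t2, Continuous (z t) := by
    intro t ht
    have := hGC.sub ((hsc t ht).continuous (husc t))
    refine this.congr fun y => ?_
    simp
  have hzt : ∀ y, Continuous fun t => z t y := by
    intro y
    set R := |T1| + |T2| with hR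
    have hRs : ∀ t, |σ t y| ≤ R := by
      intro t
      have := hσ t y
      rw [abs_le]
      constructor
      · have := neg_abs_le T1; have := abs_nonneg T2; linarith [(hσ t y).1]
      · have := le_abs_self T2; have := abs_nonneg T1; linarith [(hσ t y).2]
    have hlip : ∀ t t', z t y - z t' y ≤ |t - t'| * (|t + t'| + 2 * R) / (2 * ε) := by
      intro t t'
      have e1 := hzle t y _ (hσ t' y)
      have e2 := hz t' y
      have e3 : (t - σ t' y) ^ 2 / (2 * ε) - (t' - σ t' y) ^ 2 / (2 * ε)
          = (t - t') * (t + t' - 2 * σ t' y) / (2 * ε) := by ring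
      have e4 : (t - t') * (t + t' - 2 * σ t' y) ≤ |t - t'| * (|t + t'| + 2 * R) := by
        refine (le_abs_self _).trans ?_
        rw [abs_mul]
        refine mul_le_mul_of_nonneg_left ?_ (abs_nonneg _)
        refine (abs_sub _ _).trans ?_
        rw [abs_mul, abs_two]
        linarith [hRs t']
      have e5 := div_le_div_of_nonneg_right e4 (show (0:ℝ) ≤ 2 * ε by positivity)
      linarith
    rw [continuous_iff_continuousAt]
    intro t0
    rw [ContinuousAt, tendsto_iff_norm_sub_tendsto_zero]
    have hlim : Tendsto (fun t => |t - t0| * (|t + t0| + 2 * R) / (2 * ε)) (𝓝 t0) (𝓝 0) := by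
      have : Continuous (fun t => |t - t0| * (|t + t0| + 2 * R) / (2 * ε)) := by fun_prop
      have := this.tendsto t0
      simpa using this
    refine squeeze_zero (fun _ => norm_nonneg _) (fun t => ?_) hlim
    rw [Real.norm_eq_abs, abs_le']
    refine ⟨hlip t t0, ?_⟩
    have := hlip t0 t
    rw [abs_sub_comm, add_comm t0 t] at this
    linarith
  refine ⟨ha, hzc, hzt, fun t ht y => ⟨hz0 t y, hzw t (hsubI t ht) y⟩, ?_⟩
  -- main part
  have ht1 : t1 ∈ Icc t1 t2 := ⟨le_rfl, h12⟩
  have ht2 : t2 ∈ Icc t1 t2 := ⟨h12, le_rfl⟩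
  have hDc : Continuous (fun x => ρ x * (z t2 x - z t1 x)) := by
    have := hzc t1 ht1
    have := hzc t2 ht2
    fun_prop
  have hVc : Continuous (fun y => ∫ s in t1..t2, z s y) := by
    have hrw : (fun y => ∫ s in t1..t2, z s y) = fun y => ∫ s in t1..t2, z (max t1 (min s t2)) y := by
      funext y
      refine intervalIntegral.integral_congr ?_
      intro s hs
      rw [uIcc_of_le h12] at hs
      simp only
      rw [min_eq_left hs.2, max_eq_right hs.1]
    rw [hrw]
    have hcl : ∀ s, max t1 (min s t2) ∈ Icc t1 t2 := fun s => ⟨le_max_left _ _, max_le h12 (min_le_right _ _)⟩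
    refine intervalIntegral.continuous_of_dominated_interval (bound := fun _ => M) ?_ ?_ ?_ ?_
    · intro y
      have := hzt y
      exact (by fun_prop : Continuous fun s => z (max t1 (min s t2)) y).aestronglyMeasurable
    · intro y
      refine Eventually.of_forall fun s _ => ?_
      rw [Real.norm_eq_abs, abs_of_nonneg (hz0 _ _)]
      exact (hzw _ (hsubI _ (hcl s)) y).trans (hwM _ (hsubI _ (hcl s)) y)
    · exact intervalIntegrable_const
    · exact Eventually.of_forall fun s _ => hzc _ (hcl s)
  have hgc : Continuous (fun y => Gop W (fun x => ρ x * (z t2 x - z t1 x)) y - ∫ s in t1..t2, z s y) :=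
    (Gop_cont hDc).sub hVc
  refine sconv_of_freq hW hgc.upperSemicontinuous ?_
  intro y η hη
  let hk : ℕ → ℝ := fun k => 1 / ((k:ℝ) + 1)
  have hk0 : ∀ k, 0 < hk k := fun k => by simp only [hk]; positivity
  have hklim : Tendsto hk atTop (𝓝[>] 0) := by
    refine tendsto_nhdsWithin_iff.2 ⟨tendsto_one_div_add_atTop_nhds_zero_nat, ?_⟩
    exact Eventually.of_forall hk0
  refine hklim.frequently (Eventually.frequently ?_)
  have hzy := hzt y
  have hzint : ∀ x x' : ℝ, IntervalIntegrable (fun t => z t y) volume x x' :=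
    fun x x' => hzy.intervalIntegrable _ _
  -- choice of τ
  let ℓ : ℝ → ℝ → ℝ := fun τ t => (z t y - z (t - τ) y) / τ + τ / (2 * ε)
  have hℓc : ∀ τ, Continuous (ℓ τ) := by
    intro τ
    simp only [ℓ]
    have : Continuous fun t => z (t - τ) y := hzy.comp (continuous_id.sub continuous_const)
    fun_prop
  have hℓlim : Tendsto (fun τ => ∫ t in t1..t2, ℓ τ t) (𝓝[>] 0) (𝓝 (z t2 y - z t1 y)) := by
    let Φ : ℝ → ℝ := fun x => ∫ t in (0:ℝ)..x, z t y
    have hΦ : ∀ x, HasDerivAt Φ (z x y) x := fun x => (hzy.integral_hasStrictDerivAt 0 x).hasDerivAt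
    have hsl : ∀ x, Tendsto (fun τ => τ⁻¹ * (Φ x - Φ (x - τ))) (𝓝[>] 0) (𝓝 (z x y)) := by
      intro x
      have hd0 : HasDerivAt (fun τ => - Φ (x - τ)) (z x y) 0 := by
        have : HasDerivAt (fun τ => Φ (x - τ)) (z x y * (-1)) 0 :=
          HasDerivAt.comp (h₂ := Φ) 0 (by simpa using hΦ x) ((hasDerivAt_id (0:ℝ)).const_sub x)
        exact this.neg.congr_deriv (by ring)
      have := (hasDerivAt_iff_tendsto_slope_zero.1 hd0).mono_left
        (nhdsWithin_mono 0 (fun x hx => ne_of_gt hx) : 𝓝[>] (0:ℝ) ≤ 𝓝[≠] 0)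
      refine this.congr fun τ => ?_
      simp only [zero_add, sub_zero, smul_eq_mul]; ring
    have hlast : Tendsto (fun τ : ℝ => (t2 - t1) * (τ / (2 * ε))) (𝓝[>] 0) (𝓝 0) := by
      have : Continuous (fun τ : ℝ => (t2 - t1) * (τ / (2 * ε))) := by fun_prop
      have := (this.tendsto 0).mono_left (nhdsWithin_le_nhds (s := Ioi 0))
      simpa using this
    have hsum := ((hsl t2).sub (hsl t1)).add hlast
    rw [add_zero] at hsum
    refine hsum.congr fun τ => ?_
    simp only [ℓ]
    have i1 : IntervalIntegrable (fun t => (z t y - z (t - τ) y) / τ) volume t1 t2 := by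
      have : Continuous fun t => z (t - τ) y := hzy.comp (continuous_id.sub continuous_const)
      exact (by fun_prop : Continuous fun t => (z t y - z (t - τ) y) / τ).intervalIntegrable _ _
    have i2 : IntervalIntegrable (fun t => z (t - τ) y) volume t1 t2 :=
      (hzy.comp (continuous_id.sub continuous_const)).intervalIntegrable _ _
    rw [intervalIntegral.integral_add i1 intervalIntegrable_const, intervalIntegral.integral_div,
      intervalIntegral.integral_sub (hzint _ _) i2, intervalIntegral.integral_comp_sub_right (fun t => z t y) τ,
      intervalIntegral.integral_const, smul_eq_mul]
    have f1 : Φ t2 - Φ (t2 - τ) = ∫ t in (t2 - τ)..t2, z t y := by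
      simp only [Φ]
      exact intervalIntegral.integral_interval_sub_left (hzint _ _) (hzint _ _)
    have f2 : Φ t1 - Φ (t1 - τ) = ∫ t in (t1 - τ)..t1, z t y := by
      simp only [Φ]
      exact intervalIntegral.integral_interval_sub_left (hzint _ _) (hzint _ _)
    have f3 : Φ t2 - Φ t1 = ∫ t in t1..t2, z t y :=
      intervalIntegral.integral_interval_sub_left (hzint _ _) (hzint _ _)
    have f4 : Φ (t2 - τ) - Φ (t1 - τ) = ∫ t in (t1 - τ)..(t2 - τ), z t y :=
      intervalIntegral.integral_interval_sub_left (hzint _ _) (hzint _ _)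
    rw [← f3, ← f4]
    ring
  obtain ⟨τ, hτlt, hτ0⟩ : ∃ τ, ρ y * (∫ t in t1..t2, ℓ τ t) < ρ y * (z t2 y - z t1 y) + η / 3 ∧ 0 < τ := by
    have e1 : ∀ᶠ τ in 𝓝[>] (0:ℝ), ρ y * (∫ t in t1..t2, ℓ τ t) < ρ y * (z t2 y - z t1 y) + η / 3 :=
      (hℓlim.const_mul (ρ y)).eventually (gt_mem_nhds (by linarith))
    exact (e1.and self_mem_nhdsWithin).exists
  -- dominated convergence
  let f : ℕ → ℝ → ℝ := fun k t => max (Lam W (z t) y (hk k) / hk k ^ 2) (ρ y * ℓ τ t)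
  have hLc : ∀ h, Continuous fun t => Lam W (z t) y h := by
    intro h
    have a1 := hzt (y + h)
    have a2 := hzt (y - h)
    simp only [Lam]
    fun_prop
  have hfc : ∀ k, Continuous (f k) := by
    intro k
    have b1 := hLc (hk k)
    have b2 := hℓc τ
    simp only [f]
    fun_prop
  have hbound : ∀ᶠ k in atTop, ∀ t ∈ Icc t1 t2, Lam W (z t) y (hk k) / hk k ^ 2 ≤ C + 1 := by
    have e2 : ∀ᶠ k in 𝓝[>] (0:ℝ), Lam W (Gop W (fun _ => C)) y k / k ^ 2 < C + 1 :=
      (Gop_Lam (W := W) (f := fun _ => C) continuous_const y).eventually (gt_mem_nhds (by linarith))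
    filter_upwards [hklim.eventually e2] with k hkk t ht
    refine le_trans ?_ hkk.le
    have := (hsc t ht).Lam_nonneg y (hk0 k)
    have e : Lam W (fun y => Gop W (fun _ => C) y - z t y) y (hk k) = Lam W (Gop W (fun _ => C)) y (hk k) - Lam W (z t) y (hk k) := by
      simp only [Lam]; ring
    rw [e] at this
    exact div_le_div_of_nonneg_right (by linarith) (sq_nonneg _)
  have hflim : Tendsto (fun k => ∫ t in t1..t2, f k t) atTop (𝓝 (∫ t in t1..t2, ρ y * ℓ τ t)) := by
    have hbc : Continuous fun t => |ρ y * ℓ τ t| + (C + 1) := by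
      have := hℓc τ
      fun_prop
    refine intervalIntegral.tendsto_integral_filter_of_dominated_convergence
      (fun t => |ρ y * ℓ τ t| + (C + 1)) ?_ ?_ ?_ ?_
    · exact Eventually.of_forall fun k => (hfc k).aestronglyMeasurable
    · filter_upwards [hbound] with k hkk
      refine Eventually.of_forall fun t ht => ?_
      rw [uIoc_of_le h12] at ht
      have h3 := hkk t ⟨ht.1.le, ht.2⟩
      have h4 := neg_abs_le (ρ y * ℓ τ t)
      have h5 := le_abs_self (ρ y * ℓ τ t)
      have h6 := abs_nonneg (ρ y * ℓ τ t)
      rw [Real.norm_eq_abs, abs_le]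
      constructor
      · have := le_max_right (Lam W (z t) y (hk k) / hk k ^ 2) (ρ y * ℓ τ t)
        simp only [f]; linarith
      · simp only [f]
        refine max_le ?_ ?_ <;> linarith
    · exact hbc.intervalIntegrable _ _
    · refine Eventually.of_forall fun t ht => ?_
      rw [uIoc_of_le h12] at ht
      have htI : t ∈ Icc t1 t2 := ⟨ht.1.le, ht.2⟩
      rw [tendsto_order]
      constructor
      · intro c hc
        exact Eventually.of_forall fun k => hc.trans_le (le_max_right _ _)
      · intro c hc'
        have := hb t htI y ((c - ρ y * ℓ τ t) / 2) (by linarith)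
        filter_upwards [hklim.eventually this] with k hkk
        refine max_lt ?_ hc'
        rw [div_lt_iff₀ (pow_pos (hk0 k) 2)]
        refine hkk.trans_lt ?_
        have h7 := mul_le_mul_of_nonneg_left (hc t y τ hτ0) (hρ0 y)
        have h8 : ρ y * ((t - σ t y) / ε) ≤ ρ y * ℓ τ t := h7
        exact mul_lt_mul_of_pos_right (by linarith) (pow_pos (hk0 k) 2)
  have e3 : ∀ᶠ k in atTop, (∫ t in t1..t2, f k t) < ρ y * (z t2 y - z t1 y) + η / 3 := by
    rw [intervalIntegral.integral_const_mul] at hflim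
    exact hflim.eventually (gt_mem_nhds hτlt)
  have e4 : ∀ᶠ k in 𝓝[>] (0:ℝ), ρ y * (z t2 y - z t1 y) - η / 3 <
      Lam W (Gop W (fun x => ρ x * (z t2 x - z t1 x))) y k / k ^ 2 :=
    (Gop_Lam (W := W) hDc y).eventually (lt_mem_nhds (by linarith))
  filter_upwards [e3, hklim.eventually e4] with k h3 h4
  have hkp := pow_pos (hk0 k) 2
  have hV : Lam W (fun y => ∫ s in t1..t2, z s y) y (hk k) / hk k ^ 2
      = ∫ t in t1..t2, Lam W (z t) y (hk k) / hk k ^ 2 := by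
    rw [intervalIntegral.integral_div]
    congr 1
    simp only [Lam]
    have i0 := hzint t1 t2
    have ip : IntervalIntegrable (fun t => z t (y + hk k)) volume t1 t2 := (hzt _).intervalIntegrable _ _
    have im : IntervalIntegrable (fun t => z t (y - hk k)) volume t1 t2 := (hzt _).intervalIntegrable _ _
    rw [intervalIntegral.integral_add ((ip.sub i0).const_mul _) ((im.sub i0).const_mul _),
      intervalIntegral.integral_const_mul, intervalIntegral.integral_const_mul,
      intervalIntegral.integral_sub ip i0, intervalIntegral.integral_sub im i0]
  have hVle : Lam W (fun y => ∫ s in t1..t2, z s y) y (hk k) / hk k ^ 2 ≤ ∫ t in t1..t2, f k t := by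
    rw [hV]
    refine intervalIntegral.integral_mono_on h12 ?_ ((hfc k).intervalIntegrable _ _) ?_
    · exact ((hLc (hk k)).div_const _).intervalIntegrable _ _
    · intro t _
      exact le_max_left _ _
  have hfin : Lam W (fun y => Gop W (fun x => ρ x * (z t2 x - z t1 x)) y - ∫ s in t1..t2, z s y) y (hk k)
      = Lam W (Gop W (fun x => ρ x * (z t2 x - z t1 x))) y (hk k)
        - Lam W (fun y => ∫ s in t1..t2, z s y) y (hk k) := by
    simp only [Lam]; ring
  rw [hfin]
  have h5 := hVle.trans_lt h3
  rw [div_lt_iff₀ hkp] at h5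
  rw [lt_div_iff₀ hkp] at h4
  nlinarith

end

section
open MeasureTheory Filter Set Topology

set_option maxHeartbeats 1000000 in
theorem ws_bounded {W Λ M T1 T2 t1 t2 : ℝ} (hW : 0 ≤ W) {ρ : ℝ → ℝ} {w : ℝ → ℝ → ℝ}
    (hρ : Continuous ρ) (hρ0 : ∀ y, 0 ≤ ρ y) (hρ1 : ∀ y, ρ y ≤ Λ) (hM : 0 < M)
    (hw0 : ∀ t ∈ Icc T1 T2, ∀ y, 0 ≤ w t y) (hwM : ∀ t ∈ Icc T1 T2, ∀ y, w t y ≤ M)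
    (hl : ∀ t ∈ Icc T1 T2, ∀ y, LowerSemicontinuousAt (fun p : ℝ × ℝ => w p.1 p.2) (t, y))
    (hsup : ∀ t ∈ Icc T1 T2, ∀ y, SupAt W ρ w t y)
    (h1 : T1 < t1) (h12 : t1 ≤ t2) (h2 : t2 < T2) :
    SConv W (fun y => Gop W (fun x => ρ x * (w t2 x - w t1 x)) y - ∫ s in t1..t2, w s y) := by
  set d := min (t1 - T1) (T2 - t2) with hd
  have hd0 : 0 < d := lt_min (by linarith) (by linarith)
  have hd1 : T1 + d ≤ t1 := by have := min_le_left (t1 - T1) (T2 - t2); linarith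
  have hd2 : t2 + d ≤ T2 := by have := min_le_right (t1 - T1) (T2 - t2); linarith
  have hT : T1 ≤ T2 := by linarith
  let ε : ℕ → ℝ := fun n => d ^ 2 / (4 * M) * (1 / ((n:ℝ) + 1))
  have hε0 : ∀ n, 0 < ε n := fun n => by simp only [ε]; positivity
  have hεd : ∀ n, 2 * ε n * M < d ^ 2 := by
    intro n
    have e : 2 * ε n * M = d ^ 2 / 2 * (1 / ((n:ℝ) + 1)) := by
      simp only [ε]; field_simp; ring
    have : 1 / ((n:ℝ) + 1) ≤ 1 := by
      rw [div_le_one (by positivity)]; linarith [(Nat.cast_nonneg n : (0:ℝ) ≤ n)]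
    rw [e]
    nlinarith [pow_pos hd0 2]
  have hεlim : Tendsto (fun n => 2 * ε n * M) atTop (𝓝 0) := by
    have := (tendsto_one_div_add_atTop_nhds_zero_nat (𝕜 := ℝ)).const_mul (d ^ 2 / 2)
    rw [mul_zero] at this
    refine this.congr fun n => ?_
    simp only [ε]; field_simp; ring
  choose z σ hσ hz hzle hzl using fun n => ic_exists (w := w) (ε := ε n) hT hl
  have key := fun n => ws_eps hW hρ hρ0 hρ1 hw0 hwM hsup hd1 h12 hd2 hd0 (hε0 n) (hεd n)
    (hσ n) (hz n) (hzle n) (hzl n)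
  have hsubI : ∀ t ∈ Icc t1 t2, t ∈ Icc T1 T2 := fun t ht => ⟨by linarith [ht.1], by linarith [ht.2]⟩
  have hlim : ∀ t ∈ Icc t1 t2, ∀ y, Tendsto (fun n => z n t y) atTop (𝓝 (w t y)) := by
    intro t ht y
    have hs : Tendsto (fun n => σ n t y) atTop (𝓝 t) := by
      rw [tendsto_iff_norm_sub_tendsto_zero]
      have h3 : Tendsto (fun n => Real.sqrt (2 * ε n * M)) atTop (𝓝 0) := by
        have := hεlim.sqrt
        simpa using this
      refine squeeze_zero (fun _ => norm_nonneg _) (fun n => ?_) h3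
      rw [Real.norm_eq_abs, abs_sub_comm]
      exact Real.abs_le_sqrt ((key n).1 t ht y)
    obtain ⟨wt, hwt, -⟩ := hsup t (hsubI t ht) y
    have h4 : Tendsto (fun n => w (σ n t y) y) atTop (𝓝 (w t y)) := hwt.continuousAt.tendsto.comp hs
    refine tendsto_of_tendsto_of_tendsto_of_le_of_le h4 tendsto_const_nhds ?_ ?_
    · intro n
      simp only
      rw [hz n t y]
      have := hε0 n
      have : 0 ≤ (t - σ n t y) ^ 2 / (2 * ε n) := by positivity
      linarith
    · intro n
      exact ((key n).2.2.2.1 t ht y).2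
  have ht1 : t1 ∈ Icc t1 t2 := ⟨le_rfl, h12⟩
  have ht2 : t2 ∈ Icc t1 t2 := ⟨h12, le_rfl⟩
  have hzM : ∀ n, ∀ t ∈ Icc t1 t2, ∀ y, |z n t y| ≤ M := by
    intro n t ht y
    have := (key n).2.2.2.1 t ht y
    rw [abs_of_nonneg this.1]
    exact this.2.trans (hwM t (hsubI t ht) y)
  refine SConv.of_tendsto (fun n => (key n).2.2.2.2) ?_
  intro y
  refine Tendsto.sub ?_ ?_
  · refine Gop_tendsto (b := fun x => ρ x * (2 * M)) (by fun_prop) ?_ ?_ ?_ y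
    · intro n
      have := (key n).2.1 t1 ht1
      have := (key n).2.1 t2 ht2
      fun_prop
    · intro n x
      rw [abs_mul, abs_of_nonneg (hρ0 x)]
      refine mul_le_mul_of_nonneg_left ?_ (hρ0 x)
      refine (abs_sub _ _).trans ?_
      linarith [hzM n t1 ht1 x, hzM n t2 ht2 x]
    · intro x
      exact ((hlim t2 ht2 x).sub (hlim t1 ht1 x)).const_mul _
  · refine intervalIntegral.tendsto_integral_filter_of_dominated_convergence (fun _ => M) ?_ ?_ ?_ ?_
    · exact Eventually.of_forall fun n => ((key n).2.2.1 y).aestronglyMeasurable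
    · refine Eventually.of_forall fun n => Eventually.of_forall fun t ht => ?_
      rw [uIoc_of_le h12] at ht
      exact hzM n t ⟨ht.1.le, ht.2⟩ y
    · exact intervalIntegrable_const
    · refine Eventually.of_forall fun t ht => ?_
      rw [uIoc_of_le h12] at ht
      exact hlim t ⟨ht.1.le, ht.2⟩ y

/-- normalized solutions -/
structure NSol (W Λ : ℝ) (ρ : ℝ → ℝ) (v : ℝ → ℝ → ℝ) : Prop where
  hW : 0 ≤ W
  hΛ : 1 ≤ Λ
  hρ : Continuous ρ
  lo : ∀ y, 1 / Λ ≤ ρ y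
  hi : ∀ y, ρ y ≤ Λ
  eq : ∃ vt vx vxx : ℝ → ℝ → ℝ, ∀ t, 0 < t → ∀ y,
    HasDerivAt (fun s => v s y) (vt t y) t ∧ HasDerivAt (v t) (vx t y) y ∧
    HasDerivAt (vx t) (vxx t y) y ∧ ρ y * vt t y = vxx t y - W * vx t y
  nonneg : ∀ t, 0 < t → ∀ y, 0 ≤ v t y
  mass : ∀ t, 0 < t → ∫ y, ρ y * v t y = 1
  lsc : ∀ t, 0 < t → ∀ y, LowerSemicontinuousAt (fun p : ℝ × ℝ => v p.1 p.2) (t, y)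

namespace NSol
variable {W Λ : ℝ} {ρ : ℝ → ℝ} {v : ℝ → ℝ → ℝ}

theorem rpos (h : NSol W Λ ρ v) (y : ℝ) : 0 < ρ y :=
  lt_of_lt_of_le (by have := h.hΛ; positivity) (h.lo y)

theorem contx (h : NSol W Λ ρ v) {t : ℝ} (ht : 0 < t) : Continuous (v t) := by
  obtain ⟨vt, vx, vxx, H⟩ := h.eq
  exact continuous_iff_continuousAt.2 fun y => (H t ht y).2.1.continuousAt

theorem contt (h : NSol W Λ ρ v) {t : ℝ} (ht : 0 < t) (y : ℝ) : ContinuousAt (fun s => v s y) t := by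
  obtain ⟨vt, vx, vxx, H⟩ := h.eq
  exact (H t ht y).1.continuousAt

theorem lam (h : NSol W Λ ρ v) {t : ℝ} (ht : 0 < t) (y : ℝ) :
    ∃ vt, HasDerivAt (fun s => v s y) vt t ∧
      Tendsto (fun k => Lam W (v t) y k / k ^ 2) (𝓝[>] 0) (𝓝 (ρ y * vt)) := by
  obtain ⟨vt, vx, vxx, H⟩ := h.eq
  refine ⟨vt t y, (H t ht y).1, ?_⟩
  rw [(H t ht y).2.2.2]
  exact Lam_tendsto (Eventually.of_forall fun z => (H t ht z).2.1) (H t ht y).2.2.1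

theorem contOn (h : NSol W Λ ρ v) {t1 t2 : ℝ} (h1 : 0 < t1) (y : ℝ) :
    ContinuousOn (fun s => v s y) (Icc t1 t2) := fun s hs =>
  (h.contt (lt_of_lt_of_le h1 hs.1) y).continuousWithinAt

theorem intv (h : NSol W Λ ρ v) {t1 t2 : ℝ} (h1 : 0 < t1) (h12 : t1 ≤ t2) (y : ℝ) :
    IntervalIntegrable (fun s => v s y) volume t1 t2 := by
  refine ContinuousOn.intervalIntegrable ?_
  rw [uIcc_of_le h12]
  exact h.contOn h1 y

set_option maxHeartbeats 1000000 in
theorem ws (h : NSol W Λ ρ v) {t1 t2 : ℝ} (h1 : 0 < t1) (h12 : t1 ≤ t2) :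
    SConv W (fun y => Gop W (fun x => ρ x * (v t2 x - v t1 x)) y - ∫ s in t1..t2, v s y) := by
  let w : ℕ → ℝ → ℝ → ℝ := fun n t y => ((n:ℝ) + 1) * v t y / (((n:ℝ) + 1) + v t y)
  have hn : ∀ n : ℕ, (0:ℝ) < (n:ℝ) + 1 := fun n => by positivity
  have hw0 : ∀ n t, 0 < t → ∀ y, 0 ≤ w n t y := by
    intro n t ht y
    have := h.nonneg t ht y
    have := hn n
    simp only [w]; positivity
  have hwv : ∀ n t, 0 < t → ∀ y, w n t y ≤ v t y := by
    intro n t ht y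
    have a := h.nonneg t ht y
    have b := hn n
    simp only [w]
    rw [div_le_iff₀ (by positivity)]
    nlinarith
  have hwlim : ∀ t, 0 < t → ∀ y, Tendsto (fun n => w n t y) atTop (𝓝 (v t y)) := by
    intro t ht y
    have a := h.nonneg t ht y
    have h0 : Tendsto (fun n : ℕ => 1 / ((n:ℝ) + 1)) atTop (𝓝 0) := tendsto_one_div_add_atTop_nhds_zero_nat
    have h3 : Tendsto (fun n : ℕ => v t y / (1 + v t y * (1 / ((n:ℝ) + 1)))) atTop (𝓝 (v t y / (1 + v t y * 0))) := by
      refine Tendsto.div tendsto_const_nhds ((h0.const_mul _).const_add 1) (by simp)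
    simp only [mul_zero, add_zero, div_one] at h3
    refine h3.congr fun n => ?_
    have b := hn n
    simp only [w]
    field_simp
  have hwc : ∀ n t, 0 < t → Continuous (w n t) := by
    intro n t ht
    have a := h.contx ht
    have b := hn n
    simp only [w]
    refine Continuous.div (by fun_prop) (by fun_prop) ?_
    intro y
    have := h.nonneg t ht y
    positivity
  have hpos : ∀ t ∈ Icc (t1 / 2) (t2 + 1), 0 < t := fun t ht => lt_of_lt_of_le (by positivity) ht.1
  have hws : ∀ n, SConv W (fun y => Gop W (fun x => ρ x * (w n t2 x - w n t1 x)) y - ∫ s in t1..t2, w n s y) := by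
    intro n
    have b := hn n
    refine ws_bounded (M := (n:ℝ) + 1) (T1 := t1 / 2) (T2 := t2 + 1) h.hW h.hρ (fun y => (h.rpos y).le) h.hi b
      (fun t ht y => hw0 n t (hpos t ht) y) ?_ ?_ ?_ (by linarith) h12 (by linarith)
    · intro t ht y
      have a := h.nonneg t (hpos t ht) y
      simp only [w]
      rw [div_le_iff₀ (by positivity)]
      nlinarith
    · intro t ht y
      have ht0 := hpos t ht
      let B : ℝ → ℝ := fun r => ((n:ℝ) + 1) * max r 0 / (((n:ℝ) + 1) + max r 0)
      have hBm : Monotone B := by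
        intro r r' hr
        simp only [B]
        have c1 : 0 ≤ max r 0 := le_max_right _ _
        have c2 : max r 0 ≤ max r' 0 := max_le_max_right _ hr
        rw [div_le_div_iff₀ (by positivity) (by linarith)]
        nlinarith [mul_nonneg b.le (sub_nonneg.2 c2)]
      have hBc : Continuous B := by
        simp only [B]
        refine Continuous.div (by fun_prop) (by fun_prop) ?_
        intro r
        have c1 : 0 ≤ max r 0 := le_max_right _ _
        positivity
      have hl := hBc.continuousAt.comp_lowerSemicontinuousAt (h.lsc t ht0 y) hBm
      have hev : ∀ᶠ p : ℝ × ℝ in 𝓝 (t, y), 0 < p.1 :=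
        (continuous_fst.tendsto (t, y)).eventually (lt_mem_nhds ht0)
      have heq : ∀ p : ℝ × ℝ, 0 < p.1 → B (v p.1 p.2) = w n p.1 p.2 := by
        intro p hp
        simp only [B, w]
        rw [max_eq_left (h.nonneg _ hp _)]
      intro c hc
      have hc' : c < B (v t y) := by rw [heq (t, y) ht0]; exact hc
      filter_upwards [hl c hc', hev] with p hp1 hp2
      rw [← heq p hp2]; exact hp1
    · intro t ht y
      have ht0 := hpos t ht
      have a := h.nonneg t ht0 y
      obtain ⟨vt, hvt, hL⟩ := h.lam ht0 y
      set β := ((n:ℝ) + 1) ^ 2 / (((n:ℝ) + 1) + v t y) ^ 2 with hβ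
      have hβ0 : 0 ≤ β := by positivity
      have hβ1 : β ≤ 1 := by
        rw [hβ, div_le_one (by positivity)]
        exact pow_le_pow_left₀ b.le (by linarith) 2
      refine ⟨β * vt, ?_, ?_⟩
      · have := (hvt.const_mul ((n:ℝ) + 1)).div (hvt.const_add ((n:ℝ) + 1)) (by positivity)
        refine this.congr_deriv ?_
        rw [hβ]; field_simp; ring
      · intro η hη
        have e1 : ∀ᶠ k in 𝓝[>] (0:ℝ), Lam W (v t) y k / k ^ 2 < ρ y * vt + η :=
          hL.eventually (gt_mem_nhds (by linarith))
        filter_upwards [e1, self_mem_nhdsWithin] with k hk1 hk2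
        have hk : (0:ℝ) < k := hk2
        rw [div_lt_iff₀ (by positivity)] at hk1
        have conc : ∀ y', w n t y' - w n t y ≤ β * (v t y' - v t y) := by
          intro y'
          have a' := h.nonneg t ht0 y'
          have : β * (v t y' - v t y) - (w n t y' - w n t y)
              = ((n:ℝ) + 1) ^ 2 * (v t y' - v t y) ^ 2 / ((((n:ℝ) + 1) + v t y) ^ 2 * (((n:ℝ) + 1) + v t y')) := by
            simp only [w, hβ]
            field_simp
            ring
          have h5 : 0 ≤ ((n:ℝ) + 1) ^ 2 * (v t y' - v t y) ^ 2 / ((((n:ℝ) + 1) + v t y) ^ 2 * (((n:ℝ) + 1) + v t y')) := by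
            positivity
          linarith
        have h6 : Lam W (w n t) y k ≤ β * Lam W (v t) y k := by
          simp only [Lam]
          have c1 := mul_le_mul_of_nonneg_left (conc (y + k)) (Real.exp_pos (-(W * k / 2))).le
          have c2 := mul_le_mul_of_nonneg_left (conc (y - k)) (Real.exp_pos (W * k / 2)).le
          nlinarith
        have h7 := mul_le_mul_of_nonneg_left hk1.le hβ0
        have h8 : β * (η * k ^ 2) ≤ η * k ^ 2 := by
          have : 0 ≤ η * k ^ 2 := by positivity
          nlinarith
        nlinarith
  have ht2 : 0 < t2 := by linarith
  refine SConv.of_tendsto hws ?_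
  intro y
  have c1 := h.contx h1
  have c2 := h.contx ht2
  have c3 := h.hρ
  refine Tendsto.sub ?_ ?_
  · refine Gop_tendsto (b := fun x => ρ x * (v t1 x + v t2 x)) (by fun_prop) ?_ ?_ ?_ y
    · intro n
      have := hwc n t1 h1
      have := hwc n t2 ht2
      fun_prop
    · intro n x
      rw [abs_mul, abs_of_nonneg (h.rpos x).le]
      refine mul_le_mul_of_nonneg_left ?_ (h.rpos x).le
      rw [abs_le]
      have := hw0 n t1 h1 x
      have := hw0 n t2 ht2 x
      have := hwv n t1 h1 x
      have := hwv n t2 ht2 x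
      constructor <;> linarith
    · intro x
      exact ((hwlim t2 ht2 x).sub (hwlim t1 h1 x)).const_mul _
  · refine intervalIntegral.tendsto_integral_filter_of_dominated_convergence (fun s => v s y) ?_ ?_ ?_ ?_
    · refine Eventually.of_forall fun n => ?_
      rw [uIoc_of_le h12]
      refine ContinuousOn.aestronglyMeasurable ?_ measurableSet_Ioc
      have c := (h.contOn (t2 := t2) h1 y).mono Ioc_subset_Icc_self
      simp only [w]
      refine ContinuousOn.div (by fun_prop) (by fun_prop) ?_
      intro s hs
      have := h.nonneg s (h1.trans hs.1) y
      have := hn n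
      positivity
    · refine Eventually.of_forall fun n => Eventually.of_forall fun t ht => ?_
      rw [uIoc_of_le h12] at ht
      have ht0 := h1.trans ht.1
      rw [Real.norm_eq_abs, abs_of_nonneg (hw0 n t ht0 y)]
      exact hwv n t ht0 y
    · exact h.intv h1 h12 y
    · refine Eventually.of_forall fun t ht => ?_
      rw [uIoc_of_le h12] at ht
      exact hwlim t (h1.trans ht.1) y

end NSol

end

section
open MeasureTheory Filter Set Topology

theorem sfun_gap (W : ℝ) (hW : 0 ≤ W) (y : ℝ) : Real.exp (W * y) ≤ sfun W (y + 1) - sfun W y := by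
  obtain ⟨c, hc, he⟩ := exists_hasDerivAt_eq_slope (sfun W) (fun y => Real.exp (W * y)) (show y < y + 1 by linarith)
    (sfun_cont W).continuousOn (fun x _ => sfun_deriv W x)
  have : (y + 1 - y) = 1 := by ring
  rw [this, div_one] at he
  rw [← he]
  exact Real.exp_le_exp.2 (mul_le_mul_of_nonneg_left hc.1.le hW)

theorem freq_small_top {V : ℝ → ℝ} (hV : Integrable V) {ε : ℝ} (hε : 0 < ε) :
    ∃ᶠ y in atTop, V y < ε := by
  intro hc
  obtain ⟨N, hN⟩ := eventually_atTop.1 hc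
  have h1 : IntegrableOn (fun _ : ℝ => ε) (Ioi N) := by
    refine Integrable.mono' (g := V) hV.integrableOn aestronglyMeasurable_const ?_
    refine (ae_restrict_iff' measurableSet_Ioi).2 (Eventually.of_forall fun y hy => ?_)
    rw [Real.norm_eq_abs, abs_of_pos hε]
    exact not_lt.1 (hN y (le_of_lt hy))
  rw [integrableOn_const_iff] at h1
  simp [hε.ne'] at h1

theorem freq_small_bot {V : ℝ → ℝ} (hV : Integrable V) {ε : ℝ} (hε : 0 < ε) :
    ∃ᶠ y in atBot, V y < ε := by
  have h := freq_small_top (V := fun y => V (-y)) hV.comp_neg hε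
  exact tendsto_neg_atTop_atBot.frequently h

theorem tail_top {f : ℝ → ℝ} (hf : Integrable f) : Tendsto (fun y => ∫ x in Ioi y, |f x|) atTop (𝓝 0) :=
  tendsto_integral_Ioi_zero tendsto_id

theorem tail_bot {f : ℝ → ℝ} (hf : Integrable f) : Tendsto (fun y => ∫ x in Iic y, |f x|) atBot (𝓝 0) :=
  tendsto_integral_Iic_zero tendsto_id

theorem Gop_flux {W : ℝ} {f : ℝ → ℝ} (hf : Continuous f) (y1 y2 : ℝ) :
    (Real.exp (W * y2) * (∫ ζ in (0:ℝ)..y2, Real.exp (-(W * ζ)) * f ζ) - W * Gop W f y2)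
     - (Real.exp (W * y1) * (∫ ζ in (0:ℝ)..y1, Real.exp (-(W * ζ)) * f ζ) - W * Gop W f y1)
     = ∫ x in y1..y2, f x := by
  symm
  refine (intervalIntegral.integral_eq_sub_of_hasDerivAt (f := fun y => Real.exp (W * y) * (∫ ζ in (0:ℝ)..y, Real.exp (-(W * ζ)) * f ζ) - W * Gop W f y) ?_ ?_)
  · intro x _
    have := (Gop_deriv2 (W := W) hf x).sub ((Gop_deriv (W := W) hf x).const_mul W)
    refine this.congr_deriv ?_
    ring
  · exact hf.intervalIntegrable _ _

theorem Gop_ratio {W : ℝ} {f : ℝ → ℝ} (hf : Continuous f) {y1 y2 : ℝ} (h : y1 < y2) :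
    ∃ ξ ∈ Ioo y1 y2, Gop W f y2 - Gop W f y1 = (∫ ζ in (0:ℝ)..ξ, Real.exp (-(W * ζ)) * f ζ) * (sfun W y2 - sfun W y1) := by
  obtain ⟨ξ, hξ, he⟩ := exists_ratio_hasDerivAt_eq_ratio_slope (Gop W f) _ h (Gop_cont hf).continuousOn
    (fun x _ => Gop_deriv hf x) (sfun W) _ (sfun_cont W).continuousOn (fun x _ => sfun_deriv W x)
  refine ⟨ξ, hξ, ?_⟩
  have := Real.exp_pos (W * ξ)
  apply mul_right_cancel₀ this.ne'
  linarith

theorem I_bound {W : ℝ} (hW : 0 ≤ W) {f : ℝ → ℝ} (hf : Continuous f) {y1 y2 : ℝ} (h : y1 ≤ y2) :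
    |(∫ ζ in (0:ℝ)..y2, Real.exp (-(W * ζ)) * f ζ) - (∫ ζ in (0:ℝ)..y1, Real.exp (-(W * ζ)) * f ζ)|
     ≤ Real.exp (-(W * y1)) * ∫ x in y1..y2, |f x| := by
  have c : Continuous (fun ζ => Real.exp (-(W * ζ)) * f ζ) := by fun_prop
  rw [intervalIntegral.integral_interval_sub_left (c.intervalIntegrable _ _) (c.intervalIntegrable _ _)]
  rw [← intervalIntegral.integral_const_mul]
  refine (intervalIntegral.abs_integral_le_integral_abs h).trans ?_
  refine intervalIntegral.integral_mono_on h (by apply Continuous.intervalIntegrable; fun_prop) (by apply Continuous.intervalIntegrable; fun_prop) ?_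
  intro x hx
  rw [abs_mul, abs_of_pos (Real.exp_pos _)]
  refine mul_le_mul_of_nonneg_right (Real.exp_le_exp.2 ?_) (abs_nonneg _)
  nlinarith [hx.1]

set_option maxHeartbeats 2000000 in
theorem saffine {W : ℝ} (hW : 0 ≤ W) {f V : ℝ → ℝ} (hf : Continuous f) (hfi : Integrable f) (hf0 : ∫ x, f x = 0)
    (hV0 : ∀ y, 0 ≤ V y) (hV : Integrable V) (hS : SConv W (fun y => Gop W f y - V y)) :
    ∀ a b c, a < b → b < c → (Gop W f c - V c - (Gop W f b - V b)) * (sfun W b - sfun W a) =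
       (Gop W f b - V b - (Gop W f a - V a)) * (sfun W c - sfun W b) := by
  intro a b c hab hbc
  have hsab : 0 < sfun W b - sfun W a := sub_pos.2 (sfun_mono W hab)
  have hsbc : 0 < sfun W c - sfun W b := sub_pos.2 (sfun_mono W hbc)
  refine le_antisymm ?_ (hS a b c hab hbc)
  set g : ℝ → ℝ := fun y => Gop W f y - V y with hg
  set s := sfun W with hs
  have key : ∀ ε > 0, Real.exp (W * b) * ((g c - g b) / (s c - s b) - (g b - g a) / (s b - s a)) ≤
      ε * (1 + 1 + Real.exp W + Real.exp W + W + 1) := by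
    intro ε hε
    obtain ⟨N, hN⟩ : ∃ N : ℝ, ∀ y1 y2, y1 ≤ -N → N ≤ y2 → |∫ x in y1..y2, f x| < ε := by
      have h2 : Tendsto (fun p : ℝ × ℝ => ∫ x in p.1..p.2, f x) (atBot ×ˢ atTop) (𝓝 0) := by
        rw [← hf0]
        exact intervalIntegral_tendsto_integral hfi tendsto_fst tendsto_snd
      have h3 := (Metric.tendsto_nhds.1 h2) ε hε
      obtain ⟨p, hp, q, hq, h4⟩ := eventually_prod_iff.1 h3
      obtain ⟨N1, hN1⟩ := eventually_atBot.1 hp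
      obtain ⟨N2, hN2⟩ := eventually_atTop.1 hq
      refine ⟨max (-N1) N2, fun y1 y2 e1 e2 => ?_⟩
      have := h4 (hN1 y1 (by have := le_max_left (-N1) N2; linarith)) (hN2 y2 (by have := le_max_right (-N1) N2; linarith))
      simpa [Real.dist_eq] using this
    obtain ⟨y1, hv1, hy1a, hy1N, ht1⟩ := ((freq_small_bot hV hε).and_eventually ((eventually_lt_atBot a).and
      ((eventually_le_atBot (-N)).and ((tail_bot hfi).eventually (gt_mem_nhds hε))))).exists
    obtain ⟨y2, hv2, hy2c, hy2N, ht2⟩ := ((freq_small_top hV hε).and_eventually ((eventually_gt_atTop c).and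
      ((eventually_ge_atTop N).and ((tail_top hfi).eventually (gt_mem_nhds hε))))).exists
    have hmid := hN y1 y2 hy1N hy2N
    -- slopes
    have slope_mono : ∀ p q r, p < q → q < r → (g q - g p) / (s q - s p) ≤ (g r - g q) / (s r - s q) := by
      intro p q r h1 h2
      have e1 : 0 < s q - s p := sub_pos.2 (sfun_mono W h1)
      have e2 : 0 < s r - s q := sub_pos.2 (sfun_mono W h2)
      rw [div_le_div_iff₀ e1 e2]
      exact hS p q r h1 h2
    have left_mono : ∀ p q r, p < q → q < r → (g r - g p) / (s r - s p) ≤ (g r - g q) / (s r - s q) := by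
      intro p q r h1 h2
      have e1 : 0 < s q - s p := sub_pos.2 (sfun_mono W h1)
      have e2 : 0 < s r - s q := sub_pos.2 (sfun_mono W h2)
      rw [div_le_div_iff₀ (by linarith) e2]
      have := hS p q r h1 h2
      simp only [← hs] at this
      nlinarith
    have right_mono : ∀ p q r, p < q → q < r → (g q - g p) / (s q - s p) ≤ (g r - g p) / (s r - s p) := by
      intro p q r h1 h2
      have e1 : 0 < s q - s p := sub_pos.2 (sfun_mono W h1)
      have e2 : 0 < s r - s q := sub_pos.2 (sfun_mono W h2)
      rw [div_le_div_iff₀ e1 (by linarith)]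
      have := hS p q r h1 h2
      simp only [← hs] at this
      nlinarith
    have hb1 : y1 < b := by linarith
    have hb2 : b < y2 := by linarith
    have S01 := slope_mono (y1 - 1) y1 b (by linarith) hb1
    have S1 := left_mono y1 a b hy1a hab
    have S2 := right_mono b c y2 hbc hy2c
    have S23 := slope_mono b y2 (y2 + 1) hb2 (by linarith)
    have p0 : 0 < s y1 - s (y1 - 1) := sub_pos.2 (sfun_mono W (by linarith))
    have p1 : 0 < s b - s y1 := sub_pos.2 (sfun_mono W hb1)
    have p2 : 0 < s y2 - s b := sub_pos.2 (sfun_mono W hb2)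
    have p3 : 0 < s (y2 + 1) - s y2 := sub_pos.2 (sfun_mono W (by linarith))
    set S0 := (g y1 - g (y1 - 1)) / (s y1 - s (y1 - 1)) with hS0
    set S1' := (g b - g y1) / (s b - s y1) with hS1'
    set S2' := (g y2 - g b) / (s y2 - s b) with hS2'
    set S3 := (g (y2 + 1) - g y2) / (s (y2 + 1) - s y2) with hS3
    have q1 : S1' * (s b - s y1) = g b - g y1 := div_mul_cancel₀ _ p1.ne'
    have q2 : S2' * (s y2 - s b) = g y2 - g b := div_mul_cancel₀ _ p2.ne'
    have hφ1 := Real.exp_pos (W * y1)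
    have hφb := Real.exp_pos (W * b)
    have hφ2 := Real.exp_pos (W * y2)
    have l1 := sfun_lin W y1
    have lb := sfun_lin W b
    have l2 := sfun_lin W y2
    rw [← hs] at l1 lb l2
    set φ1 := Real.exp (W * y1) with hφ1d
    set φb := Real.exp (W * b) with hφbd
    set φ2 := Real.exp (W * y2) with hφ2d
    have sum1 : φb * ((g c - g b) / (s c - s b) - (g b - g a) / (s b - s a)) ≤
        φ1 * (S1' - S0) + φb * (S2' - S1') + φ2 * (S3 - S2') := by
      have a1 := mul_nonneg hφ1.le (sub_nonneg.2 S01)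
      have a2 := mul_nonneg hφ2.le (sub_nonneg.2 S23)
      have a3 : φb * ((g c - g b) / (s c - s b) - (g b - g a) / (s b - s a)) ≤ φb * (S2' - S1') :=
        mul_le_mul_of_nonneg_left (by linarith) hφb.le
      linarith
    have sum2 : φ1 * (S1' - S0) + φb * (S2' - S1') + φ2 * (S3 - S2') = -(φ1 * S0) - W * (g y2 - g y1) + φ2 * S3 := by
      have e1 : φ1 = 1 + W * s y1 := by linarith
      have e2 : φb = 1 + W * s b := by linarith
      have e3 : φ2 = 1 + W * s y2 := by linarith
      have : (φ1 - φb) * S1' = - W * (g b - g y1) := by rw [← q1, e1, e2]; ring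
      have : (φb - φ2) * S2' = - W * (g y2 - g b) := by rw [← q2, e3, e2]; ring
      linarith
    -- Gop parts
    obtain ⟨ξ0, hξ0, hG0⟩ := Gop_ratio (W := W) hf (show y1 - 1 < y1 by linarith)
    obtain ⟨ξ3, hξ3, hG3⟩ := Gop_ratio (W := W) hf (show y2 < y2 + 1 by linarith)
    have flux := Gop_flux (W := W) hf y1 y2
    have ib0 := I_bound hW hf hξ0.2.le
    have ib3 := I_bound hW hf hξ3.1.le
    set I := fun y => ∫ ζ in (0:ℝ)..y, Real.exp (-(W * ζ)) * f ζ with hI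
    change Gop W f y1 - Gop W f (y1 - 1) = I ξ0 * _ at hG0
    change Gop W f (y2 + 1) - Gop W f y2 = I ξ3 * _ at hG3
    change (φ2 * I y2 - _) - (φ1 * I y1 - _) = _ at flux
    change |I y1 - I ξ0| ≤ _ at ib0
    change |I ξ3 - I y2| ≤ _ at ib3
    have t0 : ∫ x in ξ0..y1, |f x| ≤ ε := by
      rw [intervalIntegral.integral_of_le hξ0.2.le]
      refine (setIntegral_mono_set hfi.abs.integrableOn (Eventually.of_forall fun _ => abs_nonneg _)
        (LE.le.eventuallyLE fun x hx => hx.2)).trans ht1.le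
    have t3 : ∫ x in y2..ξ3, |f x| ≤ ε := by
      rw [intervalIntegral.integral_of_le hξ3.1.le]
      refine (setIntegral_mono_set hfi.abs.integrableOn (Eventually.of_forall fun _ => abs_nonneg _)
        (LE.le.eventuallyLE fun x hx => hx.1)).trans ht2.le
    have b0 : φ1 * (I y1 - I ξ0) ≤ Real.exp W * ε := by
      have e1 := (le_abs_self _).trans ib0
      have e2 : I y1 - I ξ0 ≤ Real.exp (-(W * (y1 - 1))) * ε := by
        refine e1.trans (mul_le_mul ?_ t0 ?_ (Real.exp_pos _).le)
        · exact Real.exp_le_exp.2 (by have := mul_le_mul_of_nonneg_left hξ0.1.le hW; linarith)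
        · exact intervalIntegral.integral_nonneg hξ0.2.le (fun _ _ => abs_nonneg _)
      have e3 := mul_le_mul_of_nonneg_left e2 hφ1.le
      refine e3.trans (le_of_eq ?_)
      rw [← mul_assoc, hφ1d, ← Real.exp_add]
      congr 2; ring
    have b3 : φ2 * (I ξ3 - I y2) ≤ ε := by
      have e1 := (le_abs_self _).trans ib3
      have e2 : I ξ3 - I y2 ≤ Real.exp (-(W * y2)) * ε :=
        e1.trans (mul_le_mul_of_nonneg_left t3 (Real.exp_pos _).le)
      have e3 := mul_le_mul_of_nonneg_left e2 hφ2.le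
      refine e3.trans (le_of_eq ?_)
      rw [← mul_assoc, hφ2d, ← Real.exp_add]
      simp
    have S0e : S0 = I ξ0 - (V y1 - V (y1 - 1)) / (s y1 - s (y1 - 1)) := by
      rw [hS0, eq_sub_iff_add_eq, ← add_div, div_eq_iff p0.ne', ← hG0]; simp only [hg]; ring
    have S3e : S3 = I ξ3 - (V (y2 + 1) - V y2) / (s (y2 + 1) - s y2) := by
      rw [hS3, eq_sub_iff_add_eq, ← add_div, div_eq_iff p3.ne', ← hG3]; simp only [hg]; ring
    have gap0 : Real.exp (W * (y1 - 1)) ≤ s y1 - s (y1 - 1) := by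
      have := sfun_gap W hW (y1 - 1)
      rwa [sub_add_cancel] at this
    have gap3 : φ2 ≤ s (y2 + 1) - s y2 := sfun_gap W hW y2
    have V0 : φ1 * ((V y1 - V (y1 - 1)) / (s y1 - s (y1 - 1))) ≤ Real.exp W * ε := by
      rw [← mul_div_assoc, div_le_iff₀ p0]
      have e1 : φ1 * (V y1 - V (y1 - 1)) ≤ φ1 * ε := mul_le_mul_of_nonneg_left (by linarith [hV0 (y1 - 1)]) hφ1.le
      have e2 : φ1 = Real.exp W * Real.exp (W * (y1 - 1)) := by
        rw [hφ1d, ← Real.exp_add]; congr 1; ring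
      have e3 := mul_le_mul_of_nonneg_left gap0 (mul_pos (Real.exp_pos W) hε).le
      rw [e2] at e1 ⊢
      nlinarith
    have V3 : -(φ2 * ((V (y2 + 1) - V y2) / (s (y2 + 1) - s y2))) ≤ ε := by
      rw [← mul_div_assoc, ← neg_div, div_le_iff₀ p3]
      have e1 : φ2 * -(V (y2 + 1) - V y2) ≤ φ2 * ε := mul_le_mul_of_nonneg_left (by linarith [hV0 (y2 + 1)]) hφ2.le
      nlinarith [mul_le_mul_of_nonneg_left gap3 hε.le]
    have m1 : (∫ x in y1..y2, f x) ≤ ε := (le_abs_self _).trans hmid.le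
    have m2 : W * (V y2 - V y1) ≤ W * ε := mul_le_mul_of_nonneg_left (by linarith [hV0 y1]) hW
    rw [sum2] at sum1
    refine sum1.trans ?_
    rw [S0e, S3e]
    have hgg : g y2 - g y1 = Gop W f y2 - Gop W f y1 - (V y2 - V y1) := by simp only [hg]; ring
    rw [hgg]
    nlinarith
  have hle : Real.exp (W * b) * ((g c - g b) / (s c - s b) - (g b - g a) / (s b - s a)) ≤ 0 := by
    set K := 1 + 1 + Real.exp W + Real.exp W + W + 1 with hK
    have hKp : 0 < K := by have := Real.exp_pos W; positivity
    refine le_of_forall_pos_le_add fun ε hε => ?_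
    have := key (ε / K) (by positivity)
    rw [div_mul_cancel₀ _ hKp.ne'] at this
    linarith
  have h2 : (g c - g b) / (s c - s b) - (g b - g a) / (s b - s a) ≤ 0 := by
    have := Real.exp_pos (W * b)
    by_contra hc
    push Not at hc
    have := mul_pos this hc
    linarith
  have h3 := sub_nonpos.1 h2
  rwa [div_le_div_iff₀ hsbc hsab] at h3

end

section
open MeasureTheory Filter Set Topology

namespace NSol
variable {W Λ : ℝ} {ρ : ℝ → ℝ} {v : ℝ → ℝ → ℝ}

theorem intx (h : NSol W Λ ρ v) {t : ℝ} (ht : 0 < t) : Integrable (fun y => ρ y * v t y) := by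
  by_contra hc
  have := h.mass t ht
  rw [integral_undef hc] at this
  norm_num at this

/-- clamped version is jointly measurable -/
theorem clampMeas (h : NSol W Λ ρ v) {t1 t2 : ℝ} (h1 : 0 < t1) :
    Measurable (Function.uncurry (fun s y : ℝ => v (max t1 (min s t2)) y)) := by
  have hcl : ∀ s, 0 < max t1 (min s t2) := fun s => lt_of_lt_of_le h1 (le_max_left _ _)
  refine measurable_uncurry_of_continuous_of_measurable (u := fun s y : ℝ => v (max t1 (min s t2)) y) ?_ ?_
  · intro y
    refine continuous_iff_continuousAt.2 fun s => ?_
    have c : ContinuousAt (fun s : ℝ => max t1 (min s t2)) s := by fun_prop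
    exact ContinuousAt.comp (f := fun s : ℝ => max t1 (min s t2)) (g := fun s => v s y) (h.contt (hcl s) y) c
  · intro s
    exact (h.contx (hcl s)).measurable

theorem prodInt (h : NSol W Λ ρ v) {t1 t2 : ℝ} (h1 : 0 < t1) :
    Integrable (Function.uncurry (fun s y : ℝ => ρ y * v (max t1 (min s t2)) y))
      ((volume.restrict (Ioc t1 t2)).prod volume) := by
  have hcl : ∀ s, 0 < max t1 (min s t2) := fun s => lt_of_lt_of_le h1 (le_max_left _ _)
  have hm : Measurable (Function.uncurry (fun s y : ℝ => ρ y * v (max t1 (min s t2)) y)) :=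
    (h.hρ.measurable.comp measurable_snd).mul (h.clampMeas h1)
  rw [integrable_prod_iff hm.aestronglyMeasurable]
  refine ⟨Eventually.of_forall fun s => h.intx (hcl s), ?_⟩
  have : (fun s => ∫ y, ‖Function.uncurry (fun s y : ℝ => ρ y * v (max t1 (min s t2)) y) (s, y)‖) = fun _ => (1:ℝ) := by
    funext s
    rw [← h.mass _ (hcl s)]
    refine integral_congr_ae (Eventually.of_forall fun y => ?_)
    simp only [Function.uncurry]
    rw [Real.norm_eq_abs, abs_of_nonneg (mul_nonneg (h.rpos y).le (h.nonneg _ (hcl s) y))]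
  rw [this]
  exact integrable_const _

theorem clamp_eq (h : NSol W Λ ρ v) {t1 t2 : ℝ} (h12 : t1 ≤ t2) (y : ℝ) :
    ∫ s in Ioc t1 t2, ρ y * v (max t1 (min s t2)) y = ρ y * ∫ s in t1..t2, v s y := by
  rw [integral_const_mul, intervalIntegral.integral_of_le h12]
  congr 1
  refine setIntegral_congr_fun measurableSet_Ioc fun s hs => ?_
  rw [min_eq_left hs.2, max_eq_right hs.1.le]

theorem avg_int (h : NSol W Λ ρ v) {t1 t2 : ℝ} (h1 : 0 < t1) (h12 : t1 ≤ t2) :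
    Integrable (fun y => ρ y * ∫ s in t1..t2, v s y) := by
  have := (h.prodInt (t2 := t2) h1).integral_prod_right
  refine this.congr (Eventually.of_forall fun y => ?_)
  exact h.clamp_eq h12 y

theorem avg_mass (h : NSol W Λ ρ v) {t1 t2 : ℝ} (h1 : 0 < t1) (h12 : t1 ≤ t2) :
    ∫ y, ρ y * ∫ s in t1..t2, v s y = t2 - t1 := by
  have hcl : ∀ s, 0 < max t1 (min s t2) := fun s => lt_of_lt_of_le h1 (le_max_left _ _)
  have := integral_integral_swap (h.prodInt (t2 := t2) h1)
  simp only [h.clamp_eq h12] at this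
  rw [← this]
  simp only [h.mass _ (hcl _)]
  simp [h12]

theorem avg_nonneg (h : NSol W Λ ρ v) {t1 t2 : ℝ} (h1 : 0 < t1) (h12 : t1 ≤ t2) (y : ℝ) :
    0 ≤ ∫ s in t1..t2, v s y :=
  intervalIntegral.integral_nonneg h12 fun s hs => h.nonneg s (lt_of_lt_of_le h1 hs.1) y

theorem unweight (h : NSol W Λ ρ v) {g : ℝ → ℝ} (hg : Integrable (fun y => ρ y * g y)) : Integrable g := by
  have h2 : Integrable (fun y => (ρ y)⁻¹ * (ρ y * g y)) := by
    refine Integrable.bdd_mul (c := Λ) hg ?_ ?_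
    · exact (Continuous.inv₀ h.hρ fun y => (h.rpos y).ne').aestronglyMeasurable
    · refine Eventually.of_forall fun y => ?_
      rw [Real.norm_eq_abs, abs_of_pos (inv_pos.2 (h.rpos y))]
      have := h.lo y
      rw [one_div] at this
      have hL : 0 < Λ := lt_of_lt_of_le one_pos h.hΛ
      exact inv_le_of_inv_le₀ hL this
  refine h2.congr (Eventually.of_forall fun y => ?_)
  exact inv_mul_cancel_left₀ (h.rpos y).ne' _

theorem avg_eq (h : NSol W Λ ρ v) {t1 t2 : ℝ} (h1 : 0 < t1) (h12 : t1 ≤ t2) :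
    ∃ Vx : ℝ → ℝ, ∀ y, HasDerivAt (fun y => ∫ s in t1..t2, v s y) (Vx y) y ∧
      HasDerivAt Vx (W * Vx y + ρ y * (v t2 y - v t1 y)) y := by
  have h2 : 0 < t2 := by linarith
  set f := fun x => ρ x * (v t2 x - v t1 x) with hf
  set V := fun y => ∫ s in t1..t2, v s y with hV
  have c1 := h.contx h1
  have c2 := h.contx h2
  have c3 := h.hρ
  have hfc : Continuous f := by fun_prop
  have hfe : f = fun x => ρ x * v t2 x - ρ x * v t1 x := by funext x; simp only [hf]; ring
  have hfi : Integrable f := by rw [hfe]; exact (h.intx h2).sub (h.intx h1)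
  have hf0 : ∫ x, f x = 0 := by
    rw [hfe, integral_sub (h.intx h2) (h.intx h1), h.mass _ h2, h.mass _ h1]; ring
  have A := saffine h.hW hfc hfi hf0 (fun y => h.avg_nonneg h1 h12 y) (h.unweight (h.avg_int h1 h12)) (h.ws h1 h12)
  set g := fun y => Gop W f y - V y with hg
  have A' : ∀ a b c, a < b → b < c → (g c - g b) * (sfun W b - sfun W a) = (g b - g a) * (sfun W c - sfun W b) := A
  have sm := sfun_mono W
  have hs01 : 0 < sfun W 1 - sfun W 0 := sub_pos.2 (sm one_pos)
  set m := (g 1 - g 0) / (sfun W 1 - sfun W 0) with hm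
  have hm' : m * (sfun W 1 - sfun W 0) = g 1 - g 0 := div_mul_cancel₀ _ hs01.ne'
  have aff : ∀ y, g y = g 0 + m * (sfun W y - sfun W 0) := by
    intro y
    apply mul_right_cancel₀ hs01.ne'
    have e : (g 0 + m * (sfun W y - sfun W 0)) * (sfun W 1 - sfun W 0) = g 0 * (sfun W 1 - sfun W 0) + (g 1 - g 0) * (sfun W y - sfun W 0) := by
      rw [← hm']; ring
    rw [e]
    rcases lt_trichotomy y 0 with hy | hy | hy
    · have := A' y 0 1 hy one_pos; linarith
    · subst hy; ring
    · rcases lt_trichotomy y 1 with hy1 | hy1 | hy1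
      · have := A' 0 y 1 hy hy1; linarith
      · subst hy1; ring
      · have := A' 0 1 y one_pos hy1; linarith
  have hVe : V = fun y => Gop W f y - (g 0 + m * (sfun W y - sfun W 0)) := by
    funext y; rw [← aff y]; simp only [hg]; ring
  refine ⟨fun y => Real.exp (W * y) * (∫ ζ in (0:ℝ)..y, Real.exp (-(W * ζ)) * f ζ) - m * Real.exp (W * y), fun y => ⟨?_, ?_⟩⟩
  · rw [hVe]
    exact (Gop_deriv hfc y).sub ((((sfun_deriv W y).sub_const _).const_mul m).const_add _)
  · have e : HasDerivAt (fun y => m * Real.exp (W * y)) (m * (Real.exp (W * y) * W)) y := by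
      have := ((hasDerivAt_id y).const_mul W).exp.const_mul m
      simpa using this
    refine ((Gop_deriv2 hfc y).sub e).congr_deriv ?_
    simp only [hf]; ring

end NSol

end

section
open MeasureTheory Filter Set Topology

structure ASol (W Λ K : ℝ) (ρ : ℝ → ℝ) (U Ux d : ℝ → ℝ → ℝ) : Prop where
  hW : 0 ≤ W
  hΛ : 1 ≤ Λ
  hρ : Continuous ρ
  lo : ∀ y, 1 / Λ ≤ ρ y
  hi : ∀ y, ρ y ≤ Λ
  U0 : ∀ t, 0 < t → ∀ y, 0 ≤ U t y
  Ui : ∀ t, 0 < t → Integrable (fun y => ρ y * U t y)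
  mass : ∀ t, 0 < t → ∫ y, ρ y * U t y = 1
  dx : ∀ t, 0 < t → ∀ y, HasDerivAt (U t) (Ux t y) y
  dxx : ∀ t, 0 < t → ∀ y, HasDerivAt (Ux t) (W * Ux t y + ρ y * d t y) y
  dt : ∀ t, 0 < t → ∀ y, HasDerivAt (fun s => U s y) (d t y) t
  dc : ∀ t, 0 < t → Continuous (d t)
  dct : ∀ t, 0 < t → ∀ y, ContinuousAt (fun s => d s y) t
  di : ∀ t, 0 < t → Integrable (fun y => ρ y * |d t y|)
  dK : ∀ t, 0 < t → ∫ y, ρ y * |d t y| ≤ K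

namespace ASol
variable {W Λ K : ℝ} {ρ : ℝ → ℝ} {U Ux d : ℝ → ℝ → ℝ}

theorem rpos (h : ASol W Λ K ρ U Ux d) (y : ℝ) : 0 < ρ y :=
  lt_of_lt_of_le (by have := h.hΛ; positivity) (h.lo y)

theorem cU (h : ASol W Λ K ρ U Ux d) {t : ℝ} (ht : 0 < t) : Continuous (U t) :=
  continuous_iff_continuousAt.2 fun y => (h.dx t ht y).continuousAt

theorem cUx (h : ASol W Λ K ρ U Ux d) {t : ℝ} (ht : 0 < t) : Continuous (Ux t) :=
  continuous_iff_continuousAt.2 fun y => (h.dxx t ht y).continuousAt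

theorem one_le (h : ASol W Λ K ρ U Ux d) (y : ℝ) : 1 ≤ Λ * ρ y := by
  have hL : 0 < Λ := lt_of_lt_of_le one_pos h.hΛ
  have := h.lo y
  rw [div_le_iff₀ hL] at this
  linarith

theorem unw (h : ASol W Λ K ρ U Ux d) {g : ℝ → ℝ} (gc : Continuous g) (hg : Integrable (fun y => ρ y * g y)) :
    Integrable g := by
  refine Integrable.mono' (hg.abs.const_mul Λ) gc.aestronglyMeasurable (Eventually.of_forall fun y => ?_)
  rw [abs_mul, abs_of_pos (h.rpos y), Real.norm_eq_abs, ← mul_assoc]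
  exact le_mul_of_one_le_left (abs_nonneg _) (h.one_le y)

theorem iU (h : ASol W Λ K ρ U Ux d) {t : ℝ} (ht : 0 < t) : Integrable (U t) := h.unw (h.cU ht) (h.Ui t ht)

theorem massle (h : ASol W Λ K ρ U Ux d) {t : ℝ} (ht : 0 < t) : ∫ y, U t y ≤ Λ := by
  have : ∫ y, U t y ≤ ∫ y, Λ * (ρ y * U t y) := by
    refine integral_mono (h.iU ht) ((h.Ui t ht).const_mul Λ) fun y => ?_
    have := mul_le_mul_of_nonneg_right (h.one_le y) (h.U0 t ht y)
    simp only; linarith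
  rw [integral_const_mul, h.mass t ht] at this
  linarith

/-- in each unit interval there is a point with `U ≤ Λ` -/
theorem good (h : ASol W Λ K ρ U Ux d) {t : ℝ} (ht : 0 < t) (y : ℝ) : ∃ z ∈ Icc y (y + 1), U t z ≤ Λ := by
  by_contra hc
  push Not at hc
  have h1 : ∫ z in y..(y+1), (Λ:ℝ) < ∫ z in y..(y+1), U t z := by
    refine intervalIntegral.integral_lt_integral_of_continuousOn_of_le_of_exists_lt (by linarith)
      continuousOn_const (h.cU ht).continuousOn (fun x hx => (hc x ⟨hx.1.le, hx.2⟩).le) ⟨y, ⟨le_refl _, by linarith⟩, hc y ⟨le_refl _, by linarith⟩⟩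
  have h2 : ∫ z in y..(y+1), U t z ≤ ∫ z, U t z := by
    rw [intervalIntegral.integral_of_le (by linarith)]
    exact setIntegral_le_integral (h.iU ht) (Eventually.of_forall fun z => h.U0 t ht z)
  have := h.massle ht
  simp at h1
  linarith

theorem Gosc (h : ASol W Λ K ρ U Ux d) {t : ℝ} (ht : 0 < t) (y z : ℝ) :
    (Ux t y - W * U t y) - (Ux t z - W * U t z) ≤ K := by
  have c := h.hρ
  have cd := h.dc t ht
  have e : ∫ x in z..y, ρ x * d t x = (Ux t y - W * U t y) - (Ux t z - W * U t z) := by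
    refine intervalIntegral.integral_eq_sub_of_hasDerivAt (f := fun y => Ux t y - W * U t y) ?_ ?_
    · intro x _
      refine ((h.dxx t ht x).sub ((h.dx t ht x).const_mul W)).congr_deriv ?_
      ring
    · apply Continuous.intervalIntegrable; fun_prop
  rw [← e]
  refine (le_abs_self _).trans ?_
  rw [← Real.norm_eq_abs]
  refine (intervalIntegral.norm_integral_le_integral_norm_uIoc).trans ?_
  have e2 : ∀ x, ‖ρ x * d t x‖ = ρ x * |d t x| := fun x => by
    rw [Real.norm_eq_abs, abs_mul, abs_of_pos (h.rpos x)]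
  simp only [e2]
  refine (setIntegral_le_integral (h.di t ht) (Eventually.of_forall fun z => mul_nonneg (h.rpos z).le (abs_nonneg _))).trans (h.dK t ht)

theorem Uslope (h : ASol W Λ K ρ U Ux d) {t : ℝ} (ht : 0 < t) : ∃ ξ, |Ux t ξ| ≤ Λ := by
  obtain ⟨p, hp, hpU⟩ := h.good ht 0
  obtain ⟨q, hq, hqU⟩ := h.good ht 2
  have hpq : p < q := by linarith [hp.2, hq.1]
  obtain ⟨ξ, hξ, he⟩ := exists_hasDerivAt_eq_slope (U t) (Ux t) hpq (h.cU ht).continuousOn (fun x _ => h.dx t ht x)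
  refine ⟨ξ, ?_⟩
  have a1 := h.U0 t ht p
  have a2 := h.U0 t ht q
  have g : 1 ≤ q - p := by linarith [hp.2, hq.1]
  have hL : 0 ≤ Λ := by linarith [h.hΛ]
  rw [he, abs_div, abs_of_pos (by linarith : 0 < q - p), div_le_iff₀ (by linarith)]
  rw [abs_le]
  constructor <;> nlinarith

theorem bound (h : ASol W Λ K ρ U Ux d) {t : ℝ} (ht : 0 < t) (y : ℝ) :
    U t y ≤ Real.exp W * (Λ + (Λ + K)) := by
  obtain ⟨ξ, hξ⟩ := h.Uslope ht
  have hG : ∀ z, Ux t z - W * U t z ≤ Λ + K := by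
    intro z
    have a := h.Gosc ht z ξ
    have b := (abs_le.1 hξ).2
    have c := mul_nonneg h.hW (h.U0 t ht ξ)
    linarith
  have hK : 0 ≤ K := by
    have := h.Gosc ht 0 0
    linarith
  have hL : 0 ≤ Λ := by linarith [h.hΛ]
  obtain ⟨p, hp, hpU⟩ := h.good ht (y - 1)
  have hpy : p ≤ y := by linarith [hp.2]
  have hw := h.hW
  rcases eq_or_lt_of_le hpy with rfl | hlt
  · have : 1 ≤ Real.exp W := Real.one_le_exp h.hW
    nlinarith
  · have hd : ∀ z, HasDerivAt (fun z => U t z * Real.exp (-(W * z))) ((Ux t z - W * U t z) * Real.exp (-(W * z))) z := by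
      intro z
      have e : HasDerivAt (fun y => Real.exp (-(W * y))) (Real.exp (-(W * z)) * (-W)) z := by
        have := ((hasDerivAt_id z).const_mul W).neg.exp
        simpa using this
      refine ((h.dx t ht z).mul e).congr_deriv ?_
      ring
    obtain ⟨ζ, hζ, he⟩ := exists_hasDerivAt_eq_slope (fun z => U t z * Real.exp (-(W * z))) _ hlt
      (continuous_iff_continuousAt.2 fun z => (hd z).continuousAt).continuousOn (fun x _ => hd x)
    rw [eq_div_iff (by linarith)] at he
    have b1 : Real.exp (-(W * ζ)) ≤ Real.exp (-(W * p)) := Real.exp_le_exp.2 (by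
      have := mul_le_mul_of_nonneg_left hζ.1.le h.hW; linarith)
    have b2 : (Ux t ζ - W * U t ζ) * Real.exp (-(W * ζ)) * (y - p) ≤ (Λ + K) * Real.exp (-(W * p)) := by
      have p1 := Real.exp_pos (-(W * ζ))
      have q1 : (Ux t ζ - W * U t ζ) * Real.exp (-(W * ζ)) ≤ (Λ + K) * Real.exp (-(W * p)) := by
        refine (mul_le_mul_of_nonneg_right (hG ζ) p1.le).trans (mul_le_mul_of_nonneg_left b1 (by linarith))
      have q2 : 0 ≤ (Λ + K) * Real.exp (-(W * p)) := by positivity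
      have q3 : y - p ≤ 1 := by linarith [hp.1]
      have q4 : 0 < y - p := by linarith
      nlinarith
    have b3 : U t y * Real.exp (-(W * y)) ≤ (Λ + (Λ + K)) * Real.exp (-(W * p)) := by
      have := mul_le_mul_of_nonneg_right hpU (Real.exp_pos (-(W * p))).le
      linarith
    have b4 : U t y = U t y * Real.exp (-(W * y)) * Real.exp (W * y) := by
      rw [mul_assoc, ← Real.exp_add]; simp
    rw [b4]
    refine (mul_le_mul_of_nonneg_right b3 (Real.exp_pos _).le).trans ?_
    rw [mul_assoc, ← Real.exp_add, mul_comm]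
    refine mul_le_mul_of_nonneg_right (Real.exp_le_exp.2 ?_) (by linarith)
    have : W * (y - p) ≤ W * 1 := mul_le_mul_of_nonneg_left (by linarith [hp.1]) h.hW
    linarith

theorem Uxbound (h : ASol W Λ K ρ U Ux d) {t : ℝ} (ht : 0 < t) : ∃ B, 0 ≤ B ∧ ∀ y, |Ux t y| ≤ B := by
  obtain ⟨ξ, hξ⟩ := h.Uslope ht
  set M := Real.exp W * (Λ + (Λ + K)) with hM
  have hb := h.bound ht
  refine ⟨Λ + K + W * M + W * M, ?_, ?_⟩
  · have : 0 ≤ K := by have := h.Gosc ht 0 0; linarith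
    have := h.hΛ
    have := h.hW
    have := Real.exp_pos W
    positivity
  intro y
  have a1 := h.Gosc ht y ξ
  have a2 := h.Gosc ht ξ y
  have a3 := mul_nonneg h.hW (h.U0 t ht ξ)
  have a4 := mul_nonneg h.hW (h.U0 t ht y)
  have a5 := mul_le_mul_of_nonneg_left (hb y) h.hW
  have a6 := mul_le_mul_of_nonneg_left (hb ξ) h.hW
  have a7 := abs_le.1 hξ
  rw [abs_le]
  constructor <;> linarith [a7.1, a7.2]

theorem bUi (h : ASol W Λ K ρ U Ux d) {t : ℝ} (ht : 0 < t) {b : ℝ → ℝ} (hb : Continuous b) {M : ℝ}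
    (hM : ∀ r ∈ Icc 0 (Real.exp W * (Λ + (Λ + K))), |b r| ≤ M) :
    Integrable (fun y => ρ y * b (U t y) * d t y) := by
  have c1 := h.hρ
  have c2 := h.cU ht
  have c3 := h.dc t ht
  refine Integrable.mono' ((h.di t ht).const_mul M) (by apply Continuous.aestronglyMeasurable; fun_prop) (Eventually.of_forall fun y => ?_)
  rw [Real.norm_eq_abs, abs_mul, abs_mul, abs_of_pos (h.rpos y)]
  have := hM (U t y) ⟨h.U0 t ht y, h.bound ht y⟩
  have p : 0 ≤ ρ y * |d t y| := mul_nonneg (h.rpos y).le (abs_nonneg _)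
  nlinarith

theorem diss (h : ASol W Λ K ρ U Ux d) {t : ℝ} (ht : 0 < t) {β b b' : ℝ → ℝ} (hb'c : Continuous b')
    (hβ : ∀ r, HasDerivAt β (b r) r) (hb : ∀ r, HasDerivAt b (b' r) r) (hb'0 : ∀ r, 0 ≤ r → 0 ≤ b' r)
    (b0 : b 0 = 0) (β0 : β 0 = 0) {p q : ℝ} (hpq : p ≤ q) :
    ∫ y in p..q, b' (U t y) * Ux t y ^ 2 ≤ - ∫ y, ρ y * b (U t y) * d t y := by
  have c1 := h.hρ
  have c2 := h.cU ht
  have c3 := h.dc t ht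
  have c4 := h.cUx ht
  have cb : Continuous b := continuous_iff_continuousAt.2 fun y => (hb y).continuousAt
  have cβ : Continuous β := continuous_iff_continuousAt.2 fun y => (hβ y).continuousAt
  obtain ⟨M, hM⟩ := (isCompact_Icc (a := (0:ℝ)) (b := Real.exp W * (Λ + (Λ + K)))).exists_bound_of_continuousOn cb.continuousOn
  have hbi := h.bUi ht cb (M := M) (fun r hr => by simpa using hM r hr)
  obtain ⟨B, hB0, hB⟩ := h.Uxbound ht
  refine le_of_forall_pos_le_add fun ε hε => ?_
  -- smallness threshold
  have hsm : ∀ᶠ r in 𝓝 (0:ℝ), |b r| * B + W * |β r| < ε / 3 := by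
    have : Continuous (fun r => |b r| * B + W * |β r|) := by fun_prop
    have h1 := this.tendsto 0
    simp only [b0, β0, abs_zero, zero_mul, mul_zero, add_zero] at h1
    exact h1.eventually (gt_mem_nhds (by positivity))
  obtain ⟨η, hη, hsm⟩ := Metric.eventually_nhds_iff.1 hsm
  have hH : ∀ y, U t y < η → |b (U t y) * Ux t y - W * β (U t y)| < ε / 3 := by
    intro y hy
    have := hsm (y := U t y) (by rw [Real.dist_eq, sub_zero, abs_of_nonneg (h.U0 t ht y)]; exact hy)
    refine lt_of_le_of_lt ?_ this
    refine (abs_sub _ _).trans ?_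
    rw [abs_mul, abs_mul, abs_of_nonneg h.hW]
    have := mul_le_mul_of_nonneg_left (hB y) (abs_nonneg (b (U t y)))
    linarith
  have h2 : Tendsto (fun p : ℝ × ℝ => ∫ x in p.1..p.2, ρ x * b (U t x) * d t x) (atBot ×ˢ atTop) (𝓝 (∫ y, ρ y * b (U t y) * d t y)) :=
    intervalIntegral_tendsto_integral hbi tendsto_fst tendsto_snd
  have h3 := (Metric.tendsto_nhds.1 h2) (ε / 3) (by positivity)
  obtain ⟨P, hP, Q, hQ, h4⟩ := eventually_prod_iff.1 h3
  obtain ⟨y1, hv1, hy1p, hy1P⟩ := ((freq_small_bot (h.iU ht) hη).and_eventually ((eventually_le_atBot p).and hP)).exists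
  obtain ⟨y2, hv2, hy2q, hy2Q⟩ := ((freq_small_top (h.iU ht) hη).and_eventually ((eventually_ge_atTop q).and hQ)).exists
  have h5 := h4 hy1P hy2Q
  rw [Real.dist_eq] at h5
  have h6 := abs_lt.1 h5
  simp only at h6
  have ci1 : Continuous (fun y => b' (U t y) * Ux t y ^ 2) := by fun_prop
  have ci2 : Continuous (fun y => ρ y * b (U t y) * d t y) := by fun_prop
  have e : ∫ y in y1..y2, (b' (U t y) * Ux t y ^ 2 + ρ y * b (U t y) * d t y)
     = (b (U t y2) * Ux t y2 - W * β (U t y2)) - (b (U t y1) * Ux t y1 - W * β (U t y1)) := by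
    refine intervalIntegral.integral_eq_sub_of_hasDerivAt (f := fun y => b (U t y) * Ux t y - W * β (U t y)) ?_ ?_
    · intro x _
      have d1 := (hb (U t x)).comp x (h.dx t ht x)
      have d2 := (hβ (U t x)).comp x (h.dx t ht x)
      refine ((d1.mul (h.dxx t ht x)).sub (d2.const_mul W)).congr_deriv ?_
      simp only [Function.comp]
      ring
    · exact (ci1.add ci2).intervalIntegrable _ _
  rw [intervalIntegral.integral_add (ci1.intervalIntegrable _ _) (ci2.intervalIntegrable _ _)] at e
  have g1 := abs_lt.1 (hH y1 hv1)
  have g2 := abs_lt.1 (hH y2 hv2)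
  have m : ∫ y in p..q, b' (U t y) * Ux t y ^ 2 ≤ ∫ y in y1..y2, b' (U t y) * Ux t y ^ 2 := by
    refine intervalIntegral.integral_mono_interval hy1p hpq hy2q (Eventually.of_forall fun y => ?_) (ci1.intervalIntegrable _ _)
    exact mul_nonneg (hb'0 _ (h.U0 t ht y)) (sq_nonneg _)
  linarith [g1.1, g1.2, g2.1, g2.2, h6.1, h6.2]

end ASol

end

section
open MeasureTheory Filter Set Topology

namespace ASol
variable {W Λ K : ℝ} {ρ : ℝ → ℝ} {U Ux d : ℝ → ℝ → ℝ}

theorem clampM {f : ℝ → ℝ → ℝ} (h1 : ∀ t, 0 < t → Continuous (f t)) (h2 : ∀ t, 0 < t → ∀ y, ContinuousAt (fun s => f s y) t)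
    {t1 t2 : ℝ} (ht : 0 < t1) :
    Measurable (Function.uncurry (fun s y : ℝ => f (max t1 (min s t2)) y)) := by
  have hcl : ∀ s, 0 < max t1 (min s t2) := fun s => lt_of_lt_of_le ht (le_max_left _ _)
  refine measurable_uncurry_of_continuous_of_measurable (u := fun s y : ℝ => f (max t1 (min s t2)) y) ?_ ?_
  · intro y
    refine continuous_iff_continuousAt.2 fun s => ?_
    have c : ContinuousAt (fun s : ℝ => max t1 (min s t2)) s := by fun_prop
    exact ContinuousAt.comp (f := fun s : ℝ => max t1 (min s t2)) (g := fun s => f s y) (h2 _ (hcl s) y) c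
  · intro s
    exact (h1 _ (hcl s)).measurable

theorem betaInt (h : ASol W Λ K ρ U Ux d) {t : ℝ} (ht : 0 < t) {β b : ℝ → ℝ} (cb : Continuous b)
    (hβ : ∀ r, HasDerivAt β (b r) r) (β0 : β 0 = 0) : Integrable (fun y => ρ y * β (U t y)) := by
  obtain ⟨M, hM⟩ := (isCompact_Icc (a := (0:ℝ)) (b := Real.exp W * (Λ + (Λ + K)))).exists_bound_of_continuousOn cb.continuousOn
  have cβ : Continuous β := continuous_iff_continuousAt.2 fun y => (hβ y).continuousAt
  have hl : ∀ r ∈ Icc 0 (Real.exp W * (Λ + (Λ + K))), |β r| ≤ M * r := by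
    intro r hr
    have := (convex_Icc (0:ℝ) (Real.exp W * (Λ + (Λ + K)))).norm_image_sub_le_of_norm_hasDerivWithin_le
      (fun x _ => (hβ x).hasDerivWithinAt) hM (x := 0) (y := r) ⟨le_refl _, hr.1.trans hr.2⟩ hr
    rw [β0, sub_zero, sub_zero, Real.norm_eq_abs, Real.norm_eq_abs, abs_of_nonneg hr.1] at this
    exact this
  have c1 := h.hρ
  have c2 := h.cU ht
  refine Integrable.mono' ((h.Ui t ht).const_mul M) (by apply Continuous.aestronglyMeasurable; fun_prop) (Eventually.of_forall fun y => ?_)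
  rw [Real.norm_eq_abs, abs_mul, abs_of_pos (h.rpos y)]
  have := mul_le_mul_of_nonneg_left (hl (U t y) ⟨h.U0 t ht y, h.bound ht y⟩) (h.rpos y).le
  linarith

theorem timeId (h : ASol W Λ K ρ U Ux d) {t1 t2 : ℝ} (h1 : 0 < t1) (h12 : t1 ≤ t2) {β b : ℝ → ℝ} (cb : Continuous b)
    (hβ : ∀ r, HasDerivAt β (b r) r) (β0 : β 0 = 0) :
    IntegrableOn (fun s => ∫ y, ρ y * b (U s y) * d s y) (Ioc t1 t2) ∧
    ∫ s in Ioc t1 t2, ∫ y, ρ y * b (U s y) * d s y = (∫ y, ρ y * β (U t2 y)) - ∫ y, ρ y * β (U t1 y) := by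
  have h2 : 0 < t2 := by linarith
  have hcl : ∀ s, 0 < max t1 (min s t2) := fun s => lt_of_lt_of_le h1 (le_max_left _ _)
  have hce : ∀ s ∈ Ioc t1 t2, max t1 (min s t2) = s := fun s hs => by
    rw [min_eq_left hs.2, max_eq_right hs.1.le]
  have mU := clampM (t1 := t1) (t2 := t2) (fun t ht => h.cU ht) (fun t ht y => (h.dt t ht y).continuousAt) h1
  have md := clampM (t1 := t1) (t2 := t2) h.dc h.dct h1
  set F : ℝ → ℝ → ℝ := fun s y => ρ y * b (U (max t1 (min s t2)) y) * d (max t1 (min s t2)) y with hF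
  have mF : Measurable (Function.uncurry F) := by
    exact ((h.hρ.measurable.comp measurable_snd).mul (cb.measurable.comp mU)).mul md
  obtain ⟨M, hM⟩ := (isCompact_Icc (a := (0:ℝ)) (b := Real.exp W * (Λ + (Λ + K)))).exists_bound_of_continuousOn cb.continuousOn
  have hM' : ∀ r ∈ Icc 0 (Real.exp W * (Λ + (Λ + K))), |b r| ≤ M := fun r hr => by simpa using hM r hr
  have hM0 : 0 ≤ M := by
    have := hM' (U t1 0) ⟨h.U0 t1 h1 0, h.bound h1 0⟩
    exact (abs_nonneg _).trans this
  have iF : Integrable (Function.uncurry F) ((volume.restrict (Ioc t1 t2)).prod volume) := by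
    rw [integrable_prod_iff mF.aestronglyMeasurable]
    refine ⟨Eventually.of_forall fun s => h.bUi (hcl s) cb hM', ?_⟩
    refine Integrable.mono' (g := fun _ => M * K) (integrable_const _) ?_ (Eventually.of_forall fun s => ?_)
    · exact mF.norm.aestronglyMeasurable.integral_prod_right'
    · rw [Real.norm_eq_abs, abs_of_nonneg (integral_nonneg fun _ => norm_nonneg _)]
      have : ∫ y, ‖Function.uncurry F (s, y)‖ ≤ ∫ y, M * (ρ y * |d (max t1 (min s t2)) y|) := by
        refine integral_mono (h.bUi (hcl s) cb hM').norm ((h.di _ (hcl s)).const_mul M) fun y => ?_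
        simp only [Function.uncurry, hF]
        rw [Real.norm_eq_abs, abs_mul, abs_mul, abs_of_pos (h.rpos y)]
        have := hM' (U (max t1 (min s t2)) y) ⟨h.U0 _ (hcl s) y, h.bound (hcl s) y⟩
        have p : 0 ≤ ρ y * |d (max t1 (min s t2)) y| := mul_nonneg (h.rpos y).le (abs_nonneg _)
        nlinarith
      rw [integral_const_mul] at this
      exact this.trans (mul_le_mul_of_nonneg_left (h.dK _ (hcl s)) hM0)
  have hcongr : ∀ s ∈ Ioc t1 t2, ∫ y, F s y = ∫ y, ρ y * b (U s y) * d s y := by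
    intro s hs
    simp only [hF, hce s hs]
  constructor
  · have := iF.integral_prod_left
    refine IntegrableOn.congr_fun (f := fun s => ∫ y, F s y) this hcongr measurableSet_Ioc
  · rw [← setIntegral_congr_fun measurableSet_Ioc hcongr]
    rw [integral_integral_swap iF, ← integral_sub (h.betaInt h2 cb hβ β0) (h.betaInt h1 cb hβ β0)]
    refine integral_congr_ae (Eventually.of_forall fun y => ?_)
    simp only
    rw [setIntegral_congr_fun (g := fun s => ρ y * b (U s y) * d s y) measurableSet_Ioc (fun s hs => by simp only [hF, hce s hs])]
    rw [← intervalIntegral.integral_of_le h12]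
    refine intervalIntegral.integral_eq_sub_of_hasDerivAt (f := fun s => ρ y * β (U s y)) ?_ ?_
    · intro s hs
      rw [uIcc_of_le h12] at hs
      have hs0 := lt_of_lt_of_le h1 hs.1
      refine (((hβ (U s y)).comp s (h.dt s hs0 y)).const_mul (ρ y)).congr_deriv ?_
      ring
    · refine ContinuousOn.intervalIntegrable ?_
      rw [uIcc_of_le h12]
      intro s hs
      have hs0 := lt_of_lt_of_le h1 hs.1
      refine ContinuousAt.continuousWithinAt ?_
      have a1 := (h.dt s hs0 y).continuousAt
      have a2 := h.dct s hs0 y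
      have a3 : ContinuousAt (fun s => b (U s y)) s := ContinuousAt.comp (g := b) cb.continuousAt a1
      exact (a3.const_mul (ρ y)).mul a2

/-- energy and dissipation -/
theorem sqd (r : ℝ) : HasDerivAt (fun r : ℝ => r ^ 2) (2 * r) r := by
  simpa using hasDerivAt_pow 2 r

theorem lind (r : ℝ) : HasDerivAt (fun r : ℝ => 2 * r) 2 r := by
  simpa using (hasDerivAt_id r).const_mul 2

theorem Eint (h : ASol W Λ K ρ U Ux d) {t : ℝ} (ht : 0 < t) : Integrable (fun y => ρ y * U t y ^ 2) :=
  h.betaInt ht (β := fun r => r ^ 2) (b := fun r => 2 * r) (by fun_prop) sqd (by simp)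

theorem supbd (h : ASol W Λ K ρ U Ux d) {t : ℝ} (ht : 0 < t) (y : ℝ) {l : ℝ} (hl : 0 < l) :
    U t y ^ 2 ≤ l * (Λ * ∫ y, ρ y * U t y ^ 2) + (- ∫ y, ρ y * (2 * U t y) * d t y) / (2 * l) := by
  have c2 := h.cU ht
  have c4 := h.cUx ht
  refine le_of_forall_pos_le_add fun ε hε => ?_
  obtain ⟨z, hz1, hz2⟩ := ((freq_small_bot (h.iU ht) (show 0 < min ε 1 by positivity)).and_eventually (eventually_le_atBot y)).exists
  have hz0 := h.U0 t ht z
  have hz3 : U t z ^ 2 ≤ ε := by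
    have := (lt_min_iff.1 hz1)
    nlinarith
  have e : ∫ x in z..y, 2 * U t x * Ux t x = U t y ^ 2 - U t z ^ 2 := by
    refine intervalIntegral.integral_eq_sub_of_hasDerivAt (f := fun x => U t x ^ 2) ?_ ?_
    · intro x _
      refine ((h.dx t ht x).pow 2).congr_deriv ?_
      simp
    · apply Continuous.intervalIntegrable; fun_prop
  have D := h.diss ht (β := fun r => r ^ 2) (b := fun r => 2 * r) (b' := fun _ => 2) continuous_const sqd lind
    (fun _ _ => by norm_num) (by simp) (by simp) hz2
  have ci1 : Continuous (fun x => l * U t x ^ 2) := by fun_prop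
  have ci2 : Continuous (fun x => 1 / (2 * l) * (2 * Ux t x ^ 2)) := by fun_prop
  have m : ∫ x in z..y, 2 * U t x * Ux t x ≤ ∫ x in z..y, (l * U t x ^ 2 + 1 / (2 * l) * (2 * Ux t x ^ 2)) := by
    refine intervalIntegral.integral_mono_on hz2 (by apply Continuous.intervalIntegrable; fun_prop) ((ci1.add ci2).intervalIntegrable _ _) ?_
    intro x _
    have : l * U t x ^ 2 + 1 / (2 * l) * (2 * Ux t x ^ 2) - 2 * U t x * Ux t x = (l * U t x - Ux t x) ^ 2 / l := by
      field_simp; ring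
    have : 0 ≤ (l * U t x - Ux t x) ^ 2 / l := by positivity
    linarith
  rw [intervalIntegral.integral_add (ci1.intervalIntegrable _ _) (ci2.intervalIntegrable _ _),
    intervalIntegral.integral_const_mul, intervalIntegral.integral_const_mul] at m
  have i1 : ∫ x in z..y, U t x ^ 2 ≤ Λ * ∫ y, ρ y * U t y ^ 2 := by
    have iu : Integrable (fun x => U t x ^ 2) := h.unw (by fun_prop) (h.Eint ht)
    rw [intervalIntegral.integral_of_le hz2]
    refine (setIntegral_le_integral iu (Eventually.of_forall fun _ => sq_nonneg _)).trans ?_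
    rw [← integral_const_mul]
    refine integral_mono iu ((h.Eint ht).const_mul Λ) fun x => ?_
    have := mul_le_mul_of_nonneg_right (h.one_le x) (sq_nonneg (U t x))
    simp only; linarith
  have i2 := mul_le_mul_of_nonneg_left i1 hl.le
  have i3 := mul_le_mul_of_nonneg_left D (show 0 ≤ 1 / (2 * l) by positivity)
  have i4 : 1 / (2 * l) * (-∫ y, ρ y * (2 * U t y) * d t y) = (-∫ y, ρ y * (2 * U t y) * d t y) / (2 * l) := by ring
  linarith

theorem Enn (h : ASol W Λ K ρ U Ux d) (t : ℝ) : 0 ≤ ∫ y, ρ y * U t y ^ 2 :=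
  integral_nonneg fun y => mul_nonneg (h.rpos y).le (sq_nonneg _)

theorem E_le (h : ASol W Λ K ρ U Ux d) {t : ℝ} (ht : 0 < t) {M : ℝ} (hM : ∀ y, U t y ≤ M) :
    ∫ y, ρ y * U t y ^ 2 ≤ M := by
  have : ∫ y, ρ y * U t y ^ 2 ≤ ∫ y, M * (ρ y * U t y) := by
    refine integral_mono (h.Eint ht) ((h.Ui t ht).const_mul M) fun y => ?_
    have := mul_le_mul_of_nonneg_left (hM y) (mul_nonneg (h.rpos y).le (h.U0 t ht y))
    simp only; linarith
  rwa [integral_const_mul, h.mass t ht, mul_one] at this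

theorem Dlow (h : ASol W Λ K ρ U Ux d) {t : ℝ} (ht : 0 < t) :
    (∫ y, ρ y * U t y ^ 2) ^ 3 / (2 * Λ) ≤ - ∫ y, ρ y * (2 * U t y) * d t y := by
  have hL : 0 < Λ := lt_of_lt_of_le one_pos h.hΛ
  have D0 : 0 ≤ - ∫ y, ρ y * (2 * U t y) * d t y := by
    have D := h.diss ht (β := fun r => r ^ 2) (b := fun r => 2 * r) (b' := fun _ => 2) continuous_const sqd lind
      (fun _ _ => by norm_num) (by simp) (by simp) (le_refl 0)
    simpa using D
  have hs := fun y (l : ℝ) (hl : 0 < l) => h.supbd ht y hl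
  have hE := fun M => h.E_le ht (M := M)
  have hE0 := h.Enn t
  set E := ∫ y, ρ y * U t y ^ 2 with hEd
  set D := - ∫ y, ρ y * (2 * U t y) * d t y with hDd
  rcases eq_or_lt_of_le hE0 with h0 | h0
  · rw [← h0]; simpa using D0
  · have hl : 0 < E / (2 * Λ) := by positivity
    have e1 : E / (2 * Λ) * (Λ * E) + D / (2 * (E / (2 * Λ))) = E ^ 2 / 2 + Λ * D / E := by field_simp
    have k1 : E ≤ Real.sqrt (E ^ 2 / 2 + Λ * D / E) := by
      refine hE _ fun y => ?_
      refine Real.le_sqrt_of_sq_le ?_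
      rw [← e1]; exact hs y _ hl
    have k2 : E ^ 2 ≤ E ^ 2 / 2 + Λ * D / E := by
      have := (Real.le_sqrt h0.le (by positivity)).1 k1
      exact this
    rw [div_le_iff₀ (by positivity)]
    have k3 : E ^ 2 / 2 ≤ Λ * D / E := by linarith
    rw [le_div_iff₀ h0] at k3
    nlinarith

theorem Estep (h : ASol W Λ K ρ U Ux d) {t1 t2 : ℝ} (h1 : 0 < t1) (h12 : t1 ≤ t2) :
    (∫ y, ρ y * U t2 y ^ 2) ≤ (∫ y, ρ y * U t1 y ^ 2) := by
  obtain ⟨i, e⟩ := h.timeId h1 h12 (β := fun r => r ^ 2) (b := fun r => 2 * r) (by fun_prop) sqd (by simp)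
  have : ∫ s in Ioc t1 t2, ∫ y, ρ y * (2 * U s y) * d s y ≤ 0 := by
    refine setIntegral_nonpos measurableSet_Ioc fun s hs => ?_
    have hs0 := h1.trans hs.1
    have a := h.Dlow hs0
    have b := h.Enn s
    have hL : 0 < Λ := lt_of_lt_of_le one_pos h.hΛ
    have : 0 ≤ (∫ y, ρ y * U s y ^ 2) ^ 3 / (2 * Λ) := by positivity
    linarith
  linarith

theorem Estep2 (h : ASol W Λ K ρ U Ux d) {t1 t2 : ℝ} (h1 : 0 < t1) (h12 : t1 ≤ t2) :
    (∫ y, ρ y * U t2 y ^ 2) + (t2 - t1) * ((∫ y, ρ y * U t2 y ^ 2) ^ 3 / (2 * Λ)) ≤ (∫ y, ρ y * U t1 y ^ 2) := by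
  obtain ⟨i, e⟩ := h.timeId h1 h12 (β := fun r => r ^ 2) (b := fun r => 2 * r) (by fun_prop) sqd (by simp)
  have hL : 0 < Λ := lt_of_lt_of_le one_pos h.hΛ
  have : ∫ s in Ioc t1 t2, ∫ y, ρ y * (2 * U s y) * d s y ≤ ∫ s in Ioc t1 t2, -((∫ y, ρ y * U t2 y ^ 2) ^ 3 / (2 * Λ)) := by
    refine setIntegral_mono_on i (integrableOn_const (by simp)) measurableSet_Ioc fun s hs => ?_
    have hs0 := h1.trans hs.1
    have a := h.Dlow hs0
    have b := h.Estep hs0 hs.2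
    have c := pow_le_pow_left₀ (h.Enn t2) b 3
    have : (∫ y, ρ y * U t2 y ^ 2) ^ 3 / (2 * Λ) ≤ (∫ y, ρ y * U s y ^ 2) ^ 3 / (2 * Λ) := by gcongr
    linarith
  rw [e, setIntegral_const] at this
  simp [h12] at this
  linarith

theorem Edecay (h : ASol W Λ K ρ U Ux d) {t : ℝ} (ht : 0 < t) : (∫ y, ρ y * U t y ^ 2) ^ 2 * t ≤ 4 * Λ := by
  have hL : 0 < Λ := lt_of_lt_of_le one_pos h.hΛ
  by_contra hc
  push Not at hc
  have ind : ∀ n : ℕ, ∀ t, 0 < t → 4 * Λ < (∫ y, ρ y * U t y ^ 2) ^ 2 * t →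
      2 ^ n * (∫ y, ρ y * U t y ^ 2) ≤ ∫ y, ρ y * U (t / 2 ^ n) y ^ 2 := by
    intro n
    induction n with
    | zero => intro t ht hc; simp
    | succ n ih =>
      intro t ht hc
      have s := h.Estep2 (half_pos ht) (half_le_self ht.le)
      have n0 := h.Enn t
      have key : 2 * (∫ y, ρ y * U t y ^ 2) ≤ ∫ y, ρ y * U (t / 2) y ^ 2 := by
        refine le_trans ?_ s
        set E := ∫ y, ρ y * U t y ^ 2
        have : (t - t / 2) * (E ^ 3 / (2 * Λ)) = E * ((E ^ 2 * t) / (4 * Λ)) := by field_simp; ring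
        rw [this]
        have : 1 ≤ (E ^ 2 * t) / (4 * Λ) := by
          rw [le_div_iff₀ (by positivity)]; linarith
        nlinarith
      have i := ih (t / 2) (half_pos ht) (by
        have : (2 * (∫ y, ρ y * U t y ^ 2)) ^ 2 ≤ (∫ y, ρ y * U (t / 2) y ^ 2) ^ 2 := pow_le_pow_left₀ (by positivity) key 2
        have := mul_le_mul_of_nonneg_right this (half_pos ht).le
        nlinarith)
      have e : t / 2 / 2 ^ n = t / 2 ^ (n + 1) := by rw [div_div, pow_succ']
      rw [e] at i
      refine le_trans ?_ i
      rw [pow_succ, mul_assoc]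
      exact mul_le_mul_of_nonneg_left key (by positivity)
  have hE : 0 < ∫ y, ρ y * U t y ^ 2 := by
    rcases eq_or_lt_of_le (h.Enn t) with h0 | h0
    · rw [← h0] at hc; simp at hc; linarith
    · exact h0
  obtain ⟨n, hn⟩ := pow_unbounded_of_one_lt ((Real.exp W * (Λ + (Λ + K))) / (∫ y, ρ y * U t y ^ 2)) (one_lt_two (α := ℝ))
  rw [div_lt_iff₀ hE] at hn
  have a := ind n t ht hc
  have ht' : 0 < t / 2 ^ n := by positivity
  have b := h.E_le ht' (M := Real.exp W * (Λ + (Λ + K))) (h.bound ht')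
  linarith

theorem mulcont {k : ℝ} {m : ℝ → ℝ} (hm : ContinuousAt m k) (h0 : m k = 0) : HasDerivAt (fun r => (r - k) * m r) 0 k := by
  rw [hasDerivAt_iff_tendsto_slope]
  have h1 : Tendsto m (𝓝[≠] k) (𝓝 0) := by
    have := hm.tendsto
    rw [h0] at this
    exact this.mono_left nhdsWithin_le_nhds
  refine h1.congr' ?_
  filter_upwards [self_mem_nhdsWithin] with r hr
  rw [slope_def_field]
  have : r - k ≠ 0 := sub_ne_zero.2 hr
  field_simp
  simp

theorem maxpow (k r : ℝ) (n : ℕ) : HasDerivAt (fun r : ℝ => (max (r - k) 0) ^ (n + 2)) (((n:ℝ) + 2) * (max (r - k) 0) ^ (n + 1)) r := by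
  rcases lt_trichotomy r k with hr | hr | hr
  · rw [max_eq_right (by linarith)]
    simp only [ne_eq, Nat.add_eq_zero_iff, one_ne_zero, and_false, not_false_eq_true, zero_pow, mul_zero]
    refine (hasDerivAt_const r (0:ℝ)).congr_of_eventuallyEq ?_
    filter_upwards [gt_mem_nhds hr] with x hx
    rw [max_eq_right (by linarith)]; simp
  · subst hr
    have hc : ContinuousAt (fun x : ℝ => (max (x - r) 0) ^ (n + 1)) r := by fun_prop
    have := mulcont hc (by simp)
    simp only [sub_self, max_self, ne_eq, Nat.add_eq_zero_iff, one_ne_zero, and_false, not_false_eq_true, zero_pow, mul_zero]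
    refine this.congr_of_eventuallyEq (Eventually.of_forall fun x => ?_)
    simp only
    rcases le_total (x - r) 0 with h | h
    · rw [max_eq_right h]; simp
    · rw [max_eq_left h]; ring
  · rw [max_eq_left (by linarith)]
    have := ((hasDerivAt_id r).sub_const k).pow (n + 2)
    refine (this.congr_of_eventuallyEq ?_).congr_deriv ?_
    · filter_upwards [lt_mem_nhds hr] with x hx
      rw [max_eq_left (by linarith)]; simp
    · simp

theorem cubed (k r : ℝ) : HasDerivAt (fun r : ℝ => (max (r - k) 0) ^ 3) (3 * (max (r - k) 0) ^ 2) r := by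
  have := maxpow k r 1
  refine this.congr_deriv ?_
  norm_num

theorem sqmd (k r : ℝ) : HasDerivAt (fun r : ℝ => 3 * (max (r - k) 0) ^ 2) (6 * (max (r - k) 0)) r := by
  have := (maxpow k r 0).const_mul 3
  refine this.congr_deriv ?_
  norm_num
  ring

theorem goodtime (h : ASol W Λ K ρ U Ux d) {t : ℝ} (ht : 0 < t) : ∃ s ∈ Ioc t (2 * t), ∀ y, U s y ≤ 2 * Λ / Real.sqrt t := by
  have hL : 0 < Λ := lt_of_lt_of_le one_pos h.hΛ
  obtain ⟨i, e⟩ := h.timeId ht (by linarith : t ≤ 2 * t) (β := fun r => r ^ 2) (b := fun r => 2 * r) (by fun_prop) sqd (by simp)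
  have hex : ∃ s ∈ Ioc t (2 * t), - (∫ y, ρ y * (2 * U s y) * d s y) ≤ (∫ y, ρ y * U t y ^ 2) / t := by
    obtain ⟨s, hs, hle⟩ := exists_setAverage_le (s := Ioc t (2 * t)) (by simp; linarith) (by simp) i
    refine ⟨s, hs, ?_⟩
    rw [setAverage_eq, e] at hle
    have e2 : (volume.real (Ioc t (2 * t))) = t := by rw [Real.volume_real_Ioc_of_le (by linarith)]; ring
    rw [e2, smul_eq_mul] at hle
    have n2 : 0 ≤ t⁻¹ * ∫ y, ρ y * U (2 * t) y ^ 2 := mul_nonneg (by positivity) (h.Enn _)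
    rw [div_eq_inv_mul]
    linarith
  obtain ⟨s, hs, hD⟩ := hex
  refine ⟨s, hs, fun y => ?_⟩
  have hs0 := ht.trans hs.1
  have hst : 0 < Real.sqrt t := Real.sqrt_pos.2 ht
  have b := h.supbd hs0 y (l := 1 / Real.sqrt t) (by positivity)
  have E1 := h.Estep ht hs.1.le
  have E0 := h.Enn t
  have dec := h.Edecay ht
  set E := ∫ y, ρ y * U t y ^ 2
  have hsq : Real.sqrt t ^ 2 = t := Real.sq_sqrt ht.le
  set r := Real.sqrt t
  have q1 : E * r ≤ 2 * Λ := by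
    have : (E * r) ^ 2 ≤ (2 * Λ) ^ 2 := by
      rw [mul_pow, hsq]; nlinarith [h.hΛ]
    exact le_of_sq_le_sq this (by positivity)
  have q2 : U s y ^ 2 * t ≤ (2 * Λ) ^ 2 := by
    have b1 : U s y ^ 2 ≤ 1 / r * (Λ * E) + (E / t) / (2 * (1 / r)) := by
      refine b.trans ?_
      gcongr
    have b2 := mul_le_mul_of_nonneg_right b1 ht.le
    have b3 : (1 / r * (Λ * E) + (E / t) / (2 * (1 / r))) * t = (Λ + 1 / 2) * (E * r) := by
      rw [← hsq]; field_simp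
    rw [b3] at b2
    have := mul_le_mul_of_nonneg_left q1 (show 0 ≤ Λ + 1 / 2 by positivity)
    nlinarith [h.hΛ]
  rw [le_div_iff₀ hst]
  refine le_of_sq_le_sq ?_ (by positivity)
  rw [mul_pow, hsq]; exact q2

theorem final (h : ASol W Λ K ρ U Ux d) {t : ℝ} (ht : 0 < t) (y : ℝ) : U (2 * t) y ≤ 2 * Λ / Real.sqrt t := by
  have hL : 0 < Λ := lt_of_lt_of_le one_pos h.hΛ
  obtain ⟨s, hs, hk⟩ := h.goodtime ht
  set k := 2 * Λ / Real.sqrt t with hkd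
  have hk0 : 0 ≤ k := by positivity
  have hs0 := ht.trans hs.1
  have ht2 : 0 < 2 * t := by positivity
  have z2 : max (0 - k) 0 = 0 := max_eq_right (by linarith)
  obtain ⟨i, e⟩ := h.timeId hs0 hs.2 (β := fun r => (max (r - k) 0) ^ 3) (b := fun r => 3 * (max (r - k) 0) ^ 2) (by fun_prop) (cubed k)
    (by simp only [z2]; norm_num)
  have n : ∫ s in Ioc s (2 * t), ∫ y, ρ y * (3 * (max (U s y - k) 0) ^ 2) * d s y ≤ 0 := by
    refine setIntegral_nonpos measurableSet_Ioc fun τ hτ => ?_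
    have hτ0 := hs0.trans hτ.1
    have D := h.diss hτ0 (β := fun r => (max (r - k) 0) ^ 3) (b := fun r => 3 * (max (r - k) 0) ^ 2) (b' := fun r => 6 * max (r - k) 0)
      (by fun_prop) (cubed k) (sqmd k) (fun r _ => by have := le_max_right (r - k) 0; positivity)
      (by simp only [z2]; norm_num) (by simp only [z2]; norm_num) (le_refl 0)
    simp at D
    linarith
  have z : ∫ y, ρ y * (max (U s y - k) 0) ^ 3 = 0 := by
    have : (fun y => ρ y * (max (U s y - k) 0) ^ 3) = fun _ => 0 := by
      funext y
      rw [max_eq_right (by linarith [hk y])]; simp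
    rw [this]; simp
  rw [e, z, sub_zero] at n
  have c1 := h.hρ
  have c2 := h.cU ht2
  have cont : Continuous (fun y => ρ y * (max (U (2 * t) y - k) 0) ^ 3) := by fun_prop
  have nn : ∀ y, 0 ≤ ρ y * (max (U (2 * t) y - k) 0) ^ 3 := fun y =>
    mul_nonneg (h.rpos y).le (pow_nonneg (le_max_right _ _) 3)
  by_contra hc
  push Not at hc
  have := integral_pos_of_integrable_nonneg_nonzero (x := y) cont (h.betaInt ht2 (β := fun r => (max (r - k) 0) ^ 3) (b := fun r => 3 * (max (r - k) 0) ^ 2) (by fun_prop) (cubed k)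
    (by simp only [z2]; norm_num)) nn (by
      have : 0 < max (U (2 * t) y - k) 0 := lt_max_of_lt_left (by linarith)
      have := h.rpos y
      positivity)
  linarith

end ASol

end

section
open MeasureTheory Filter Set Topology

namespace NSol
variable {W Λ : ℝ} {ρ : ℝ → ℝ} {v : ℝ → ℝ → ℝ}

theorem contIoi (h : NSol W Λ ρ v) (y : ℝ) : ContinuousOn (fun s => v s y) (Ioi 0) := fun _ hs =>
  (h.contt hs y).continuousWithinAt

theorem ivi (h : NSol W Λ ρ v) {a b : ℝ} (ha : 0 < a) (hb : 0 < b) (y : ℝ) :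
    IntervalIntegrable (fun s => v s y) volume a b := by
  refine ContinuousOn.intervalIntegrable ((h.contIoi y).mono fun s hs => ?_)
  exact lt_of_lt_of_le (lt_min ha hb) hs.1

theorem primd (h : NSol W Λ ρ v) {c t : ℝ} (hc : 0 < c) (ht : 0 < t) (y : ℝ) :
    HasDerivAt (fun t => ∫ s in c..t, v s y) (v t y) t :=
  intervalIntegral.integral_hasDerivAt_right (h.ivi hc ht y)
    ((h.contIoi y).stronglyMeasurableAtFilter isOpen_Ioi t ht) (h.contt ht y)

theorem windd (h : NSol W Λ ρ v) {t k : ℝ} (hk : 0 < k) (ht : 0 < t) (y : ℝ) :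
    HasDerivAt (fun t => ∫ s in t..(t + k), v s y) (v (t + k) y - v t y) t := by
  have d1 := h.primd ht (add_pos ht hk) y
  have d2 := h.primd ht ht y
  have d3 : HasDerivAt (fun τ => ∫ s in t..(τ + k), v s y) (v (t + k) y) t := by
    have := HasDerivAt.comp (h := fun τ => τ + k) t (h₂ := fun τ => ∫ s in t..τ, v s y) d1 ((hasDerivAt_id t).add_const k)
    simpa [Function.comp_def] using this
  refine (d3.sub d2).congr_of_eventuallyEq ?_
  filter_upwards [lt_mem_nhds ht] with τ hτ
  exact (intervalIntegral.integral_interval_sub_left (h.ivi ht (add_pos hτ hk) y) (h.ivi ht hτ y)).symm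

theorem toASol (h : NSol W Λ ρ v) {k : ℝ} (hk : 0 < k) :
    ∃ Ux, ASol W Λ (2 / k) ρ (fun t y => k⁻¹ * ∫ s in t..(t + k), v s y) Ux (fun t y => k⁻¹ * (v (t + k) y - v t y)) := by
  have hA : ∀ t, 0 < t → ∃ Vx : ℝ → ℝ, ∀ y, HasDerivAt (fun y => ∫ s in t..(t+k), v s y) (Vx y) y ∧
      HasDerivAt Vx (W * Vx y + ρ y * (v (t+k) y - v t y)) y := fun t ht => h.avg_eq ht (by linarith)
  choose! Vx hVx using hA
  have hk' : 0 < k⁻¹ := inv_pos.2 hk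
  have ibd : ∀ t, 0 < t → Integrable (fun y => k⁻¹ * (ρ y * v (t + k) y + ρ y * v t y)) := fun t ht =>
    ((h.intx (add_pos ht hk)).add (h.intx ht)).const_mul _
  have hbd : ∀ t, 0 < t → ∀ y, ρ y * |k⁻¹ * (v (t + k) y - v t y)| ≤ k⁻¹ * (ρ y * v (t + k) y + ρ y * v t y) := by
    intro t ht y
    rw [abs_mul, abs_of_pos hk']
    have a1 := h.nonneg t ht y
    have a2 := h.nonneg (t + k) (add_pos ht hk) y
    have : |v (t + k) y - v t y| ≤ v (t + k) y + v t y := by rw [abs_le]; constructor <;> linarith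
    have := mul_le_mul_of_nonneg_left this (mul_nonneg hk'.le (h.rpos y).le)
    linarith
  have idd : ∀ t, 0 < t → Integrable (fun y => ρ y * |k⁻¹ * (v (t + k) y - v t y)|) := by
    intro t ht
    have c1 := h.contx ht
    have c2 := h.contx (add_pos ht hk)
    have c3 := h.hρ
    refine (ibd t ht).mono' (by apply Continuous.aestronglyMeasurable; fun_prop) (Eventually.of_forall fun y => ?_)
    rw [Real.norm_eq_abs, abs_of_nonneg (mul_nonneg (h.rpos y).le (abs_nonneg _))]
    exact hbd t ht y
  refine ⟨fun t y => k⁻¹ * Vx t y, ?_⟩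
  refine { hW := h.hW, hΛ := h.hΛ, hρ := h.hρ, lo := h.lo, hi := h.hi, U0 := ?_, Ui := ?_, mass := ?_, dx := ?_, dxx := ?_, dt := ?_, dc := ?_, dct := ?_, di := idd, dK := ?_ }
  · intro t ht y
    exact mul_nonneg hk'.le (h.avg_nonneg ht (by linarith) y)
  · intro t ht
    refine ((h.avg_int ht (show t ≤ t + k by linarith)).const_mul k⁻¹).congr (Eventually.of_forall fun y => ?_)
    simp only; ring
  · intro t ht
    have e := h.avg_mass ht (show t ≤ t + k by linarith)
    have : (fun y => ρ y * (k⁻¹ * ∫ s in t..(t + k), v s y)) = fun y => k⁻¹ * (ρ y * ∫ s in t..(t + k), v s y) := by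
      funext y; ring
    rw [this, integral_const_mul, e]
    field_simp
    ring
  · intro t ht y
    exact ((hVx t ht y).1).const_mul _
  · intro t ht y
    refine (((hVx t ht y).2).const_mul _).congr_deriv ?_
    ring
  · intro t ht y
    exact (h.windd hk ht y).const_mul _
  · intro t ht
    have c1 := h.contx ht
    have c2 := h.contx (add_pos ht hk)
    fun_prop
  · intro t ht y
    have c1 := h.contt ht y
    have c2 : ContinuousAt (fun s => v (s + k) y) t := by
      have := h.contt (add_pos ht hk) y
      exact ContinuousAt.comp (g := fun s => v s y) (f := fun s => s + k) this (by fun_prop)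
    exact (c2.sub c1).const_mul _
  · intro t ht
    refine (integral_mono (idd t ht) (ibd t ht) (hbd t ht)).trans (le_of_eq ?_)
    rw [integral_const_mul, integral_add (h.intx (add_pos ht hk)) (h.intx ht), h.mass _ ht, h.mass _ (add_pos ht hk)]
    field_simp
    norm_num

/-- The Nash bound. -/
theorem nash (h : NSol W Λ ρ v) {t : ℝ} (ht : 0 < t) (y : ℝ) : v t y ≤ 4 * Λ / Real.sqrt t := by
  have hL : 0 < Λ := lt_of_lt_of_le one_pos h.hΛ
  have b1 : ∀ k, 0 < k → k⁻¹ * ∫ s in t..(t + k), v s y ≤ 4 * Λ / Real.sqrt t := by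
    intro k hk
    obtain ⟨Ux, hA⟩ := h.toASol hk
    have := hA.final (half_pos ht) y
    rw [show 2 * (t / 2) = t by ring] at this
    refine this.trans ?_
    have s1 : 0 < Real.sqrt (t / 2) := Real.sqrt_pos.2 (half_pos ht)
    have s2 : 0 < Real.sqrt t := Real.sqrt_pos.2 ht
    rw [div_le_div_iff₀ s1 s2]
    have s3 : Real.sqrt t ≤ 2 * Real.sqrt (t / 2) := by
      rw [show (2:ℝ) = Real.sqrt 4 by rw [show (4:ℝ) = 2 ^ 2 by norm_num, Real.sqrt_sq (by norm_num)], ← Real.sqrt_mul (by norm_num)]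
      refine Real.sqrt_le_sqrt ?_
      rw [show Real.sqrt 4 = 2 by rw [show (4:ℝ) = 2 ^ 2 by norm_num, Real.sqrt_sq (by norm_num)]]
      linarith
    nlinarith
  have d := h.primd ht ht y
  rw [hasDerivAt_iff_tendsto_slope] at d
  have d2 : Tendsto (slope (fun t' => ∫ s in t..t', v s y) t) (𝓝[>] t) (𝓝 (v t y)) :=
    d.mono_left (nhdsWithin_mono _ (fun x hx => ne_of_gt hx))
  refine le_of_tendsto d2 ?_
  filter_upwards [self_mem_nhdsWithin] with x hx
  have := b1 (x - t) (sub_pos.2 hx)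
  rw [slope_def_field]
  simp only [intervalIntegral.integral_same, sub_zero]
  rw [show t + (x - t) = x by ring] at this
  rw [div_eq_inv_mul]
  exact this

end NSol

end

section
open MeasureTheory Filter Set Topology

namespace NSol
variable {W Λ : ℝ} {ρ : ℝ → ℝ} {v : ℝ → ℝ → ℝ}

theorem barrier_alg {W Λ r c β ρ0 q ζ : ℝ} (hW : 0 ≤ W) (hΛ : 1 ≤ Λ) (hr : 0 < r) (hρ : 1 / Λ ≤ ρ0) (hρ' : ρ0 ≤ Λ)
    (hβ : β = (4 * (Λ * |c| + W) * r + 12) ^ 2 * Λ / (32 * r ^ 2)) (hq : 0 ≤ q) (hζ : |ζ| ≤ r) :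
    ρ0 * (-β * q ^ 2 + 4 * c * ζ * q) ≤ (8 * r ^ 2 - 12 * q) - W * (-4 * ζ * q) := by
  have hL : 0 < Λ := by linarith
  have hρ0 : 0 ≤ ρ0 := le_trans (by positivity) hρ
  set A := 4 * (Λ * |c| + W) * r + 12 with hA
  have hβ0 : 0 ≤ β := by rw [hβ]; positivity
  have k1 : A ^ 2 / (32 * r ^ 2) ≤ β * ρ0 := by
    have : β * (1 / Λ) ≤ β * ρ0 := mul_le_mul_of_nonneg_left hρ hβ0
    refine le_trans (le_of_eq ?_) this
    rw [hβ]; field_simp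
  have k2 : A * q ≤ A ^ 2 / (32 * r ^ 2) * q ^ 2 + 8 * r ^ 2 := by
    have : A ^ 2 / (32 * r ^ 2) * q ^ 2 + 8 * r ^ 2 - A * q = (A * q - 16 * r ^ 2) ^ 2 / (32 * r ^ 2) := by
      field_simp; ring
    have : 0 ≤ (A * q - 16 * r ^ 2) ^ 2 / (32 * r ^ 2) := by positivity
    linarith
  have k3 := mul_le_mul_of_nonneg_right k1 (sq_nonneg q)
  have k4 : ρ0 * (c * ζ) ≤ Λ * |c| * r := by
    have a1 : c * ζ ≤ |c| * r := by
      refine (le_abs_self _).trans ?_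
      rw [abs_mul]; exact mul_le_mul_of_nonneg_left hζ (abs_nonneg _)
    have a2 := mul_le_mul_of_nonneg_left a1 hρ0
    have a3 : ρ0 * (|c| * r) ≤ Λ * (|c| * r) := mul_le_mul_of_nonneg_right hρ' (by positivity)
    linarith
  have k5 : -(W * ζ) ≤ W * r := by
    have := mul_le_mul_of_nonneg_left (abs_le.1 hζ).1 hW
    linarith
  have k6 := mul_le_mul_of_nonneg_right k4 hq
  have k7 := mul_le_mul_of_nonneg_right k5 hq
  have k8 : A * q = 4 * (Λ * |c| * r) * q + 4 * (W * r) * q + 12 * q := by rw [hA]; ring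
  nlinarith

set_option maxHeartbeats 1000000 in
theorem barrier (h : NSol W Λ ρ v) {t1 t2 y1 y r η : ℝ} (h1 : 0 < t1) (h12 : t1 < t2) (hr : 0 < r) (hη : 0 < η)
    (hv : ∀ z, |z - y1| ≤ r → η ≤ v t1 z) : 0 < v t2 y := by
  set c := (y - y1) / (t2 - t1) with hc
  have h21 : 0 < t2 - t1 := by linarith
  set β := (4 * (Λ * |c| + W) * r + 12) ^ 2 * Λ / (32 * r ^ 2) with hβ
  have hL : 0 < Λ := lt_of_lt_of_le one_pos h.hΛ
  have hβ0 : 0 ≤ β := by positivity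
  set κ := η / r ^ 4 with hκ
  have hκ0 : 0 < κ := by positivity
  clear_value κ β c
  set ψ : ℝ → ℝ → ℝ := fun s z => κ * Real.exp (-(β * (s - t1))) * (r ^ 2 - (z - (y1 + c * (s - t1))) ^ 2) ^ 2 with hψ
  have hψc : Continuous (fun p : ℝ × ℝ => ψ p.1 p.2) := by simp only [hψ]; fun_prop
  set Kt : Set (ℝ × ℝ) := {p | t1 ≤ p.1 ∧ p.1 ≤ t2 ∧ |p.2 - (y1 + c * (p.1 - t1))| ≤ r} with hKt
  have hKc : IsCompact Kt := by
    refine Metric.isCompact_of_isClosed_isBounded ?_ ?_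
    · simp only [hKt]
      refine (isClosed_le continuous_const continuous_fst).inter ((isClosed_le continuous_fst continuous_const).inter
        (isClosed_le (f := fun p : ℝ × ℝ => |p.2 - (y1 + c * (p.1 - t1))|) (g := fun _ => r) (by fun_prop) continuous_const))
    · refine ((Metric.isBounded_Icc t1 t2).prod (Metric.isBounded_Icc (y1 - |c| * (t2 - t1) - r) (y1 + |c| * (t2 - t1) + r))).subset ?_
      rintro ⟨s, z⟩ ⟨a1, a2, a3⟩
      simp only at a1 a2 a3
      refine ⟨⟨a1, a2⟩, ?_⟩
      have b1 := abs_le.1 a3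
      have b2 : |c * (s - t1)| ≤ |c| * (t2 - t1) := by
        rw [abs_mul, abs_of_nonneg (by linarith : 0 ≤ s - t1)]
        exact mul_le_mul_of_nonneg_left (by linarith) (abs_nonneg _)
      have b3 := abs_le.1 b2
      exact ⟨by linarith [b1.1, b3.1], by linarith [b1.2, b3.2]⟩
  have key : ∀ ε, 0 < ε → ∀ p ∈ Kt, 0 ≤ v p.1 p.2 - ψ p.1 p.2 + ε * (p.1 - t1) := by
    intro ε hε
    have hlsc : LowerSemicontinuousOn (fun p : ℝ × ℝ => v p.1 p.2 + (- ψ p.1 p.2 + ε * (p.1 - t1))) Kt := by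
      intro p hp
      have hp0 : 0 < p.1 := lt_of_lt_of_le h1 hp.1
      have l1 : LowerSemicontinuousAt (fun p : ℝ × ℝ => v p.1 p.2) p := h.lsc p.1 hp0 p.2
      have l2 : LowerSemicontinuousAt (fun p : ℝ × ℝ => - ψ p.1 p.2 + ε * (p.1 - t1)) p := by
        refine Continuous.lowerSemicontinuous ?_ p
        fun_prop
      exact (l1.add l2).lowerSemicontinuousWithinAt _
    have hne : Kt.Nonempty := ⟨(t1, y1), le_refl _, h12.le, by simp [hr.le]⟩
    obtain ⟨p, hp, hmin⟩ := hlsc.exists_isMinOn hne hKc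
    have hmin' : ∀ q ∈ Kt, v p.1 p.2 + (- ψ p.1 p.2 + ε * (p.1 - t1)) ≤ v q.1 q.2 + (- ψ q.1 q.2 + ε * (q.1 - t1)) := fun q hq => hmin hq
    by_contra hcon
    push Not at hcon
    obtain ⟨q, hq, hq1⟩ := hcon
    have hneg : v p.1 p.2 + (- ψ p.1 p.2 + ε * (p.1 - t1)) < 0 := lt_of_le_of_lt (hmin' q hq) (by linarith)
    obtain ⟨s, z⟩ := p
    obtain ⟨a1, a2, a3⟩ := hp
    simp only at a1 a2 a3 hneg hmin'
    have hs0 : 0 < s := lt_of_lt_of_le h1 a1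
    have hε' : 0 ≤ ε * (s - t1) := mul_nonneg hε.le (by linarith)
    -- not on the lateral boundary
    have a3' : |z - (y1 + c * (s - t1))| < r := by
      refine lt_of_le_of_ne a3 fun he => ?_
      have : ψ s z = 0 := by
        simp only [hψ]
        rw [← sq_abs (z - _), he]; simp
      have := h.nonneg s hs0 z
      linarith
    have hq0 : 0 ≤ r ^ 2 - (z - (y1 + c * (s - t1))) ^ 2 := by
      rw [← sq_abs (z - _)]
      nlinarith [abs_nonneg (z - (y1 + c * (s - t1)))]
    have a1' : t1 < s := by
      refine lt_of_le_of_ne a1 fun he => ?_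
      subst he
      have e1 : v t1 z ≥ η := hv z (by simpa using a3)
      have e2 : ψ t1 z ≤ η := by
        simp only [hψ, sub_self, mul_zero, neg_zero, Real.exp_zero, mul_one, add_zero] at hq0 ⊢
        have : (r ^ 2 - (z - y1) ^ 2) ^ 2 ≤ (r ^ 2) ^ 2 := pow_le_pow_left₀ hq0 (by nlinarith [sq_nonneg (z - y1)]) 2
        have := mul_le_mul_of_nonneg_left this hκ0.le
        refine this.trans (le_of_eq ?_)
        rw [hκ]; field_simp
      simp at hneg
      linarith
    obtain ⟨vt, vx, vxx, H⟩ := h.eq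
    obtain ⟨dvt, dvx, dvxx, heq⟩ := H s hs0 z
    set E := κ * Real.exp (-(β * (s - t1))) with hE
    have hE0 : 0 < E := by positivity
    set ζ := z - (y1 + c * (s - t1)) with hζ
    set Q := r ^ 2 - ζ ^ 2 with hQ
    -- derivatives of psi
    have dψt : HasDerivAt (fun s => ψ s z) (E * (-β * Q ^ 2 + 4 * c * ζ * Q)) s := by
      have e1 : HasDerivAt (fun s => -(β * (s - t1))) (-β) s := by
        simpa using (((hasDerivAt_id s).sub_const t1).const_mul β).fun_neg
      have e2 : HasDerivAt (fun s => z - (y1 + c * (s - t1))) (-c) s := by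
        simpa using ((((hasDerivAt_id s).sub_const t1).const_mul c).const_add y1).const_sub z
      have e3 := (e1.exp.const_mul κ).fun_mul (((e2.fun_pow 2).const_sub (r ^ 2)).fun_pow 2)
      refine e3.congr_deriv ?_
      simp only [Nat.cast_ofNat, Nat.reduceSub, pow_one]
      rw [← hζ, ← hQ, hE]; ring
    have dψz : ∀ z, HasDerivAt (ψ s) (E * (-4 * (z - (y1 + c * (s - t1))) * (r ^ 2 - (z - (y1 + c * (s - t1))) ^ 2))) z := by
      intro z
      have e2 : HasDerivAt (fun z => z - (y1 + c * (s - t1))) 1 z := (hasDerivAt_id z).sub_const _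
      have e3 := (((e2.fun_pow 2).const_sub (r ^ 2)).fun_pow 2).const_mul E
      refine e3.congr_deriv ?_
      simp only [Nat.cast_ofNat, Nat.reduceSub, pow_one]
      ring
    have dψzz : HasDerivAt (fun z => E * (-4 * (z - (y1 + c * (s - t1))) * (r ^ 2 - (z - (y1 + c * (s - t1))) ^ 2))) (E * (8 * r ^ 2 - 12 * Q)) z := by
      have e2 : HasDerivAt (fun z => z - (y1 + c * (s - t1))) 1 z := (hasDerivAt_id z).sub_const _
      have e3 := ((e2.const_mul (-4)).fun_mul ((e2.fun_pow 2).const_sub (r ^ 2))).const_mul E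
      refine e3.congr_deriv ?_
      simp only [Nat.cast_ofNat, Nat.reduceSub, pow_one]
      rw [← hζ, hQ]; ring
    clear_value E Q ζ ψ
    have a3z : |z - (y1 + c * (s - t1))| < r := by rw [← hζ]; exact a3'
    have time : vt s z - E * (-β * Q ^ 2 + 4 * c * ζ * Q) + ε ≤ 0 := by
      have d : HasDerivAt (fun s => v s z + (- ψ s z + ε * (s - t1))) (vt s z + (-(E * (-β * Q ^ 2 + 4 * c * ζ * Q)) + ε * 1)) s :=
        dvt.add (dψt.neg.add (((hasDerivAt_id s).sub_const t1).const_mul ε))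
      rw [hasDerivAt_iff_tendsto_slope] at d
      have d2 := d.mono_left (nhdsWithin_mono s (fun x (hx : x ∈ Iio s) => ne_of_lt hx))
      have : vt s z + (-(E * (-β * Q ^ 2 + 4 * c * ζ * Q)) + ε * 1) ≤ 0 := by
        refine le_of_tendsto d2 ?_
        have ev1 : ∀ᶠ τ in 𝓝[<] s, |z - (y1 + c * (τ - t1))| < r := by
          have : Continuous (fun τ => |z - (y1 + c * (τ - t1))|) := by fun_prop
          exact (this.continuousAt.eventually (gt_mem_nhds a3z)).filter_mono nhdsWithin_le_nhds
        have ev2 : ∀ᶠ τ in 𝓝[<] s, t1 < τ := (lt_mem_nhds a1').filter_mono nhdsWithin_le_nhds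
        filter_upwards [ev1, ev2, self_mem_nhdsWithin] with τ b1 b2 b3
        have b3' : τ < s := b3
        have m := hmin' (τ, z) ⟨b2.le, by simp only; linarith, b1.le⟩
        simp only at m
        rw [slope_def_field]
        exact div_nonpos_of_nonneg_of_nonpos (by linarith) (by linarith)
      linarith
    -- space inequality
    have space : 0 ≤ (vxx s z - E * (8 * r ^ 2 - 12 * Q)) - W * (vx s z - E * (-4 * ζ * Q)) := by
      have L := Lam_tendsto (W := W) (f := fun z => v s z - ψ s z) (y := z)
        (f' := fun z => vx s z - E * (-4 * (z - (y1 + c * (s - t1))) * (r ^ 2 - (z - (y1 + c * (s - t1))) ^ 2)))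
        (Eventually.of_forall fun x => ((H s hs0 x).2.1).sub (dψz x)) (dvxx.sub dψzz)
      simp only [← hζ, ← hQ] at L
      refine ge_of_tendsto L ?_
      have near : ∀ᶠ k in 𝓝[>] (0:ℝ), |z + k - (y1 + c * (s - t1))| < r ∧ |z - k - (y1 + c * (s - t1))| < r := by
        have c1 : Continuous (fun k => |z + k - (y1 + c * (s - t1))|) := by fun_prop
        have c2 : Continuous (fun k => |z - k - (y1 + c * (s - t1))|) := by fun_prop
        refine Eventually.filter_mono nhdsWithin_le_nhds ((c1.continuousAt.eventually (gt_mem_nhds ?_)).and (c2.continuousAt.eventually (gt_mem_nhds ?_)))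
        · simpa using a3z
        · simpa using a3z
      filter_upwards [near] with k hk
      have m1 := hmin' (s, z + k) ⟨a1, a2, hk.1.le⟩
      have m2 := hmin' (s, z - k) ⟨a1, a2, hk.2.le⟩
      simp only at m1 m2
      refine div_nonneg ?_ (sq_nonneg k)
      simp only [Lam]
      refine add_nonneg (mul_nonneg (Real.exp_pos _).le (by linarith)) (mul_nonneg (Real.exp_pos _).le (by linarith))
    have alg := barrier_alg (q := Q) (ζ := ζ) h.hW h.hΛ hr (h.lo z) (h.hi z) hβ hq0 a3
    have alg2 := mul_le_mul_of_nonneg_left alg hE0.le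
    have hρz := h.rpos z
    have t2' := mul_le_mul_of_nonneg_left time hρz.le
    have : 0 < ρ z * ε := mul_pos hρz hε
    have r1 : ρ z * (vt s z - E * (-β * Q ^ 2 + 4 * c * ζ * Q) + ε)
        = ρ z * vt s z - E * (ρ z * (-β * Q ^ 2 + 4 * c * ζ * Q)) + ρ z * ε := by ring
    have r2 : E * ((8 * r ^ 2 - 12 * Q) - W * (-4 * ζ * Q))
        = E * (8 * r ^ 2 - 12 * Q) - W * (E * (-4 * ζ * Q)) := by ring
    have r3 : W * (vx s z - E * (-4 * ζ * Q)) = W * vx s z - W * (E * (-4 * ζ * Q)) := by ring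
    rw [r1, mul_zero] at t2'
    rw [r2] at alg2
    rw [r3] at space
    linarith
  have hmem : (t2, y) ∈ Kt := by
    refine ⟨h12.le, le_refl _, ?_⟩
    simp only
    rw [hc, div_mul_cancel₀ _ h21.ne']
    simp [hr.le]
  have hψpos : 0 < ψ t2 y := by
    simp only [hψ]
    rw [hc, div_mul_cancel₀ _ h21.ne']
    have : (y - (y1 + (y - y1))) = 0 := by ring
    rw [this]
    have : (0:ℝ) < r ^ 2 - 0 ^ 2 := by simp; positivity
    positivity
  have := key (ψ t2 y / (2 * (t2 - t1))) (by positivity) _ hmem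
  simp only at this
  have e : ψ t2 y / (2 * (t2 - t1)) * (t2 - t1) = ψ t2 y / 2 := by field_simp
  rw [e] at this
  linarith

theorem pos (h : NSol W Λ ρ v) {t : ℝ} (ht : 0 < t) (y : ℝ) : 0 < v t y := by
  have h1 : 0 < t / 2 := half_pos ht
  have hex : ∃ y1, 0 < v (t / 2) y1 := by
    by_contra hc
    push Not at hc
    have m := h.mass _ h1
    have : (fun y => ρ y * v (t / 2) y) = fun _ => 0 := by
      funext y
      rw [le_antisymm (hc y) (h.nonneg _ h1 y)]; simp
    rw [this] at m
    simp at m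
  obtain ⟨y1, hy1⟩ := hex
  have ev : ∀ᶠ z in 𝓝 y1, v (t / 2) y1 / 2 < v (t / 2) z :=
    (h.contx h1).continuousAt.eventually (lt_mem_nhds (by linarith))
  obtain ⟨r, hr, hrr⟩ := Metric.eventually_nhds_iff.1 ev
  refine h.barrier (y1 := y1) (r := r / 2) (η := v (t / 2) y1 / 2) h1 (half_lt_self ht) (half_pos hr) (half_pos hy1) ?_
  intro z hz
  refine (hrr (y := z) ?_).le
  rw [Real.dist_eq]; linarith

end NSol

end

section
open MeasureTheory Filter Set Topology

/-- joint lower semicontinuity of kernels satisfying Chapman-Kolmogorov. -/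
theorem lsc_of_CK {ν : ℝ → ℝ} {P : ℝ → ℝ → ℝ → ℝ} (hν : ∀ x, 0 ≤ ν x)
    (hcx : ∀ y t, 0 < t → Continuous (fun x => P t x y))
    (hct : ∀ y t, 0 < t → ∀ x, ContinuousAt (fun τ => P τ x y) t)
    (hnn : ∀ y t, 0 < t → ∀ x, 0 ≤ P t x y)
    (hCK : ∀ s t : ℝ, 0 < s → 0 < t → ∀ x y : ℝ, P (t + s) x y = ∫ z : ℝ, ν z * P t x z * P s z y)
    (y t : ℝ) (ht : 0 < t) (x : ℝ) :
    LowerSemicontinuousAt (fun p : ℝ × ℝ => P p.1 p.2 y) (t, x) := by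
  intro c hc
  simp only at hc
  rcases lt_or_ge c 0 with hc0 | hc0
  · have : ∀ᶠ p : ℝ × ℝ in 𝓝 (t, x), 0 < p.1 := continuous_fst.continuousAt.eventually (lt_mem_nhds ht)
    filter_upwards [this] with p hp
    exact hc0.trans_le (hnn _ _ hp _)
  -- choose a positive level
  obtain ⟨d, hcd, hd⟩ := exists_between hc
  have hd0 : 0 < d := hc0.trans_lt hcd
  by_contra hcon
  have hfr : ∃ᶠ p : ℝ × ℝ in 𝓝 (t, x), P p.1 p.2 y ≤ c := by
    intro h'; apply hcon; filter_upwards [h'] with p hp; exact not_le.1 hp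
  have hrow : ∀ᶠ p : ℝ × ℝ in 𝓝 (t, x), d < P t p.2 y := by
    have : ContinuousAt (fun p : ℝ × ℝ => P t p.2 y) (t, x) :=
      ((hcx y t ht).comp continuous_snd).continuousAt
    exact this.eventually (lt_mem_nhds hd)
  have hpos : ∀ᶠ p : ℝ × ℝ in 𝓝 (t, x), t / 2 < p.1 :=
    continuous_fst.continuousAt.eventually (lt_mem_nhds (half_lt_self ht))
  obtain ⟨p, hp, hpl⟩ := exists_seq_forall_of_frequently (hfr.and_eventually (hrow.and hpos))
  have hlev : ∀ n, ∃ s, t / 2 < s ∧ |s - t| ≤ |(p n).1 - t| ∧ P s (p n).2 y = d := by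
    intro n
    obtain ⟨q1, q2, q3⟩ := hpl n
    have hcon : ContinuousOn (fun τ => P τ (p n).2 y) (uIcc (p n).1 t) := by
      intro τ hτ
      refine (hct y τ ?_ _).continuousWithinAt
      have := hτ.1
      have : t / 2 < min (p n).1 t := lt_min q3 (half_lt_self ht)
      linarith [hτ.1]
    have hm : d ∈ uIcc (P (p n).1 (p n).2 y) (P t (p n).2 y) := by
      rw [uIcc_of_le (by linarith)]; exact ⟨by linarith, q2.le⟩
    obtain ⟨s, hs, hsd⟩ := intermediate_value_uIcc hcon hm
    refine ⟨s, ?_, ?_, hsd⟩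
    · have : t / 2 < min (p n).1 t := lt_min q3 (half_lt_self ht)
      exact this.trans_le hs.1
    · exact abs_sub_right_of_mem_uIcc hs |>.trans_eq' rfl |> fun h => by
        simpa [abs_sub_comm] using h
  choose s hs1 hs2 hs3 using hlev
  have hst : Tendsto s atTop (𝓝 t) := by
    have h1 : Tendsto (fun n => |(p n).1 - t|) atTop (𝓝 0) := by
      have := (continuous_fst.tendsto (t, x)).comp hp
      have := (this.sub_const t).abs
      simpa using this
    rw [tendsto_iff_dist_tendsto_zero]
    exact squeeze_zero (fun _ => dist_nonneg) (fun n => by rw [Real.dist_eq]; exact hs2 n) h1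
  have hpx : Tendsto (fun n => (p n).2) atTop (𝓝 x) := (continuous_snd.tendsto (t, x)).comp hp
  have ht2 : 0 < t / 2 := half_pos ht
  set F : ℕ → ℝ → ℝ := fun n z => ν z * P (t / 2) (p n).2 z * P (s n - t / 2) z y with hF
  set F0 : ℝ → ℝ := fun z => ν z * P (t / 2) x z * P (t / 2) z y with hF0
  have hFd : ∀ n, ∫ z, F n z = d := by
    intro n
    have := hCK (s n - t / 2) (t / 2) (by linarith [hs1 n]) ht2 (p n).2 y
    rw [← this, ← hs3 n]; congr 1; ring
  have hF0d : ∫ z, F0 z = P t x y := by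
    have := hCK (t / 2) (t / 2) ht2 ht2 x y
    rw [← this]; congr 1; ring
  have hFnn : ∀ n z, 0 ≤ F n z := fun n z =>
    mul_nonneg (mul_nonneg (hν z) (hnn _ _ ht2 _)) (hnn _ _ (by linarith [hs1 n]) _)
  have hF0nn : ∀ z, 0 ≤ F0 z := fun z =>
    mul_nonneg (mul_nonneg (hν z) (hnn _ _ ht2 _)) (hnn _ _ ht2 _)
  have hFi : ∀ n, Integrable (F n) := by
    intro n
    by_contra h
    have := hFd n
    rw [integral_undef h] at this
    linarith
  have hF0i : Integrable F0 := by
    by_contra h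
    rw [integral_undef h] at hF0d
    linarith
  have hlim : ∀ z, Tendsto (fun n => ENNReal.ofReal (F n z)) atTop (𝓝 (ENNReal.ofReal (F0 z))) := by
    intro z
    refine (ENNReal.continuous_ofReal.tendsto _).comp ?_
    have a1 : Tendsto (fun n => P (t / 2) (p n).2 z) atTop (𝓝 (P (t / 2) x z)) :=
      ((hcx z (t / 2) ht2).tendsto x).comp hpx
    have a2 : Tendsto (fun n => P (s n - t / 2) z y) atTop (𝓝 (P (t / 2) z y)) := by
      refine (hct y (t / 2) ht2 z).tendsto.comp ?_
      have := hst.sub_const (t / 2)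
      rwa [show t - t / 2 = t / 2 by ring] at this
    exact (a1.const_mul (ν z)).mul a2
  have hfat := lintegral_liminf_le' (μ := volume) (u := atTop) (f := fun n z => ENNReal.ofReal (F n z))
    (fun n => (hFi n).aestronglyMeasurable.aemeasurable.ennreal_ofReal)
  have e1 : (fun z => liminf (fun n => ENNReal.ofReal (F n z)) atTop) = fun z => ENNReal.ofReal (F0 z) := by
    funext z; exact (hlim z).liminf_eq
  have e2 : ∀ n, ∫⁻ z, ENNReal.ofReal (F n z) = ENNReal.ofReal d := by
    intro n
    rw [← hFd n, ofReal_integral_eq_lintegral_ofReal (hFi n) (Eventually.of_forall (hFnn n))]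
  rw [e1] at hfat
  simp only [e2, liminf_const] at hfat
  rw [← ofReal_integral_eq_lintegral_ofReal hF0i (Eventually.of_forall hF0nn), hF0d] at hfat
  have := (ENNReal.ofReal_le_ofReal_iff hd0.le).1 hfat
  linarith

end

section
open MeasureTheory Filter Set Topology

theorem exists_theta {m : ℝ → ℝ} (hm : Continuous m) {M : ℝ} (hM : 0 < M) (hpos : ∀ x, 0 < m x) (hmM : ∀ x, m x ≤ M) :
    ∃ θ : ℝ → ℝ, Function.Bijective θ ∧ ∀ τ, HasDerivAt θ (m (θ τ)) τ := by
  have hmi : Continuous (fun x => (m x)⁻¹) := hm.inv₀ (fun x => (hpos x).ne')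
  set T : ℝ → ℝ := fun x => ∫ s in (0:ℝ)..x, (m s)⁻¹ with hT
  have dT : ∀ x, HasDerivAt T (m x)⁻¹ x := fun x =>
    intervalIntegral.integral_hasDerivAt_right (hmi.intervalIntegrable _ _)
      hmi.aestronglyMeasurable.stronglyMeasurableAtFilter hmi.continuousAt
  have hT0 : T 0 = 0 := by simp [hT]
  have hmono : StrictMono T := strictMono_of_deriv_pos fun x => by
    rw [(dT x).deriv]; exact inv_pos.2 (hpos x)
  have hcont : Continuous T := continuous_iff_continuousAt.2 fun x => (dT x).continuousAt
  have hg : Monotone (fun x => T x - M⁻¹ * x) := by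
    refine monotone_of_deriv_nonneg (fun x => ?_) (fun x => ?_)
    · exact ((dT x).sub ((hasDerivAt_id x).const_mul M⁻¹)).differentiableAt
    · have : HasDerivAt (fun x => T x - M⁻¹ * x) ((m x)⁻¹ - M⁻¹ * 1) x := (dT x).sub ((hasDerivAt_id x).const_mul M⁻¹)
      rw [this.deriv, mul_one, sub_nonneg]
      exact inv_anti₀ (hpos x) (hmM x)
  have hsurj : Function.Surjective T := by
    refine hcont.surjective ?_ ?_
    · refine tendsto_atTop_mono' atTop (f₁ := fun x => M⁻¹ * x) ?_ (tendsto_id.const_mul_atTop (inv_pos.2 hM))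
      filter_upwards [eventually_ge_atTop 0] with x hx
      have := hg hx
      simp [hT0] at this
      linarith
    · refine tendsto_atBot_mono' atBot (f₂ := T) (f₁ := fun x => M⁻¹ * x) ?_ (tendsto_id.const_mul_atBot (inv_pos.2 hM))
      filter_upwards [eventually_le_atBot 0] with x hx
      have := hg hx
      simp [hT0] at this
      linarith
  set e := hmono.orderIsoOfSurjective T hsurj with he
  have heT : ∀ x, e x = T x := fun x => rfl
  refine ⟨e.symm, e.symm.bijective, fun τ => ?_⟩
  have := HasDerivAt.of_local_left_inverse (f := T) (g := e.symm) (a := τ) e.symm.continuous.continuousAt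
    (dT _) (inv_pos.2 (hpos _)).ne' (Eventually.of_forall fun y => by rw [← heT]; exact e.apply_symm_apply y)
  simpa using this

theorem nsol_of_fund {μ W : ℝ} {ν a : ℝ → ℝ} {P : ℝ → ℝ → ℝ → ℝ} (hμ : 1 ≤ μ) (hν : Continuous ν) (ha : Continuous a)
    (eν : Elliptic μ ν) (ea : Elliptic μ a) (hW : 0 ≤ W) (hP : IsFundSol ν a W P) :
    ∃ θ ρ : ℝ → ℝ, Function.Surjective θ ∧ ∀ y, NSol W (μ ^ 3) ρ (fun t τ => P t (θ τ) y) := by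
  obtain ⟨hsol, hnn, hmass, -, hCK⟩ := hP
  have hμ0 : 0 < μ := by linarith
  have hν0 : ∀ x, 0 < ν x := fun x => lt_of_lt_of_le (by positivity) (eν x).1
  have ha0 : ∀ x, 0 < a x := fun x => lt_of_lt_of_le (by positivity) (ea x).1
  have hm0 : ∀ x, 0 < ν x * a x := fun x => mul_pos (hν0 x) (ha0 x)
  obtain ⟨θ, hθb, dθ⟩ := exists_theta (m := fun x => ν x * a x) (hν.mul ha) (M := μ * μ) (by positivity) hm0
    (fun x => mul_le_mul (eν x).2 (ea x).2 (ha0 x).le hμ0.le)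
  have hθc : Continuous θ := continuous_iff_continuousAt.2 fun x => (dθ x).continuousAt
  have hcx : ∀ y t, 0 < t → Continuous (fun x => P t x y) := by
    intro y t ht
    obtain ⟨ut, ux, q, H⟩ := hsol y
    exact continuous_iff_continuousAt.2 fun x => (H t ht x).2.1.continuousAt
  have hct : ∀ y t, 0 < t → ∀ x, ContinuousAt (fun τ => P τ x y) t := by
    intro y t ht x
    obtain ⟨ut, ux, q, H⟩ := hsol y
    exact (H t ht x).1.continuousAt
  refine ⟨θ, fun τ => ν (θ τ) * (ν (θ τ) * a (θ τ)), hθb.2, fun y => ?_⟩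
  refine ⟨hW, one_le_pow₀ hμ, by fun_prop, fun τ => ?_, fun τ => ?_, ?_, fun t ht τ => hnn y t ht _, fun t ht => ?_, fun t ht τ => ?_⟩
  · have h1 := (eν (θ τ)).1
    have h2 := (ea (θ τ)).1
    have h3 : 1 / μ * (1 / μ) ≤ ν (θ τ) * a (θ τ) := mul_le_mul h1 h2 (by positivity) (hν0 _).le
    have h4 : 1 / μ * (1 / μ * (1 / μ)) ≤ ν (θ τ) * (ν (θ τ) * a (θ τ)) := mul_le_mul h1 h3 (by positivity) (hν0 _).le
    refine le_trans (le_of_eq ?_) h4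
    field_simp
  · have h1 := (eν (θ τ)).2
    have h2 := (ea (θ τ)).2
    have h3 : ν (θ τ) * a (θ τ) ≤ μ * μ := mul_le_mul h1 h2 (ha0 _).le hμ0.le
    have h4 : ν (θ τ) * (ν (θ τ) * a (θ τ)) ≤ μ * (μ * μ) := mul_le_mul h1 h3 (hm0 _).le hμ0.le
    refine h4.trans (le_of_eq (by ring))
  · obtain ⟨ut, ux, q, H⟩ := hsol y
    refine ⟨fun t τ => ut t (θ τ), fun t τ => ν (θ τ) * a (θ τ) * ux t (θ τ), fun t τ => q t (θ τ) * (ν (θ τ) * a (θ τ)), ?_⟩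
    intro t ht τ
    obtain ⟨H1, H2, H3, H4⟩ := H t ht (θ τ)
    refine ⟨H1, ?_, ?_, ?_⟩
    · have := H2.comp τ (dθ τ)
      rw [mul_comm] at this
      exact this
    · exact H3.comp τ (dθ τ)
    · have : ν (θ τ) * ut t (θ τ) = q t (θ τ) - W * ux t (θ τ) := by linarith
      calc ν (θ τ) * (ν (θ τ) * a (θ τ)) * ut t (θ τ) = (ν (θ τ) * a (θ τ)) * (ν (θ τ) * ut t (θ τ)) := by ring
        _ = _ := by rw [this]; ring
  · have := integral_image_eq_integral_abs_deriv_smul (s := univ) (f := θ) (f' := fun τ => ν (θ τ) * a (θ τ)) MeasurableSet.univ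
      (fun x _ => (dθ x).hasDerivWithinAt) hθb.1.injOn (fun x => ν x * P t x y)
    rw [image_univ, hθb.2.range_eq, setIntegral_univ, setIntegral_univ, hmass y t ht] at this
    rw [this]
    congr 1
    funext τ
    rw [abs_of_pos (hm0 _), smul_eq_mul]; ring
  · have l := lsc_of_CK (fun x => (hν0 x).le) hcx hct hnn hCK y t ht (θ τ)
    have c : ContinuousAt (fun p : ℝ × ℝ => (p.1, θ p.2)) (t, τ) := by fun_prop
    intro b hb
    exact c.eventually (l b hb)

theorem fund_pos_le {μ W : ℝ} {ν a : ℝ → ℝ} {P : ℝ → ℝ → ℝ → ℝ} (hμ : 1 ≤ μ) (hν : Continuous ν) (ha : Continuous a)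
    (eν : Elliptic μ ν) (ea : Elliptic μ a) (hW : 0 ≤ W) (hP : IsFundSol ν a W P) {t : ℝ} (ht : 0 < t) (x y : ℝ) :
    0 < P t x y ∧ P t x y ≤ 4 * μ ^ 3 / Real.sqrt t := by
  obtain ⟨θ, ρ, hs, h⟩ := nsol_of_fund hμ hν ha eν ea hW hP
  obtain ⟨τ, rfl⟩ := hs x
  exact ⟨(h y).pos ht τ, (h y).nash ht τ⟩

theorem l1_aux {μ : ℝ} (hμ : 1 ≤ μ) {ν a : ℝ → ℝ} (hν : Continuous ν) (ha : Continuous a)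
    (eν : Elliptic μ ν) (ea : Elliptic μ a) {W : ℝ} (hW : 0 ≤ W) {P : ℝ → ℝ → ℝ → ℝ} (hP : IsFundSol ν a W P)
    {p₀ q₀ : ℝ → ℝ} (hi : Integrable (fun y => p₀ y - q₀ y)) {t : ℝ} (ht : 0 < t) (x : ℝ) :
    |(∫ y : ℝ, ν y * P t x y * p₀ y) - ∫ y : ℝ, ν y * P t x y * q₀ y| ≤
          4 * μ ^ 4 / Real.sqrt t * ∫ y : ℝ, |p₀ y - q₀ y| := by
  have hb := fun t ht x y => fund_pos_le hμ hν ha eν ea hW hP (t := t) ht x y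
  have hμ0 : 0 < μ := by linarith
  have hν0 : ∀ x, 0 < ν x := fun x => lt_of_lt_of_le (by positivity) (eν x).1
  obtain ⟨hsol, hnn, hmass, -, hCK⟩ := hP
  have hcx : Continuous (fun x => P 1 x 0) := by
    obtain ⟨ut, ux, q, H⟩ := hsol 0
    exact continuous_iff_continuousAt.2 fun x => (H 1 (mem_Ioi.2 one_pos) x).2.1.continuousAt
  have hmeas : AEStronglyMeasurable (fun z => ν z * P t x z) volume := by
    have hinteg : Integrable (fun z => ν z * P t x z * P 1 z 0) := by
      by_contra hcon
      have := hCK 1 t one_pos ht x 0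
      rw [integral_undef hcon] at this
      have := (hb (t + 1) (by linarith) x 0).1
      linarith
    have hc : Continuous (fun z => (P 1 z 0)⁻¹) := hcx.inv₀ fun z => (hb 1 one_pos z 0).1.ne'
    have := hinteg.aestronglyMeasurable.mul hc.aestronglyMeasurable
    refine this.congr (Eventually.of_forall fun z => ?_)
    have := (hb 1 one_pos z 0).1.ne'
    simp only [Pi.mul_apply]
    field_simp
  have hbd : ∀ z, ‖ν z * P t x z‖ ≤ 4 * μ ^ 4 / Real.sqrt t := by
    intro z
    obtain ⟨b1, b2⟩ := hb t ht x z
    rw [Real.norm_eq_abs, abs_of_pos (mul_pos (hν0 z) b1)]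
    refine (mul_le_mul (eν z).2 b2 b1.le hμ0.le).trans (le_of_eq (by ring))
  have hdi : Integrable (fun z => ν z * P t x z * (p₀ z - q₀ z)) :=
    hi.bdd_mul hmeas (Eventually.of_forall hbd)
  have hnnI : 0 ≤ ∫ y : ℝ, |p₀ y - q₀ y| := integral_nonneg fun _ => abs_nonneg _
  by_cases hp : Integrable (fun z => ν z * P t x z * p₀ z)
  · have hq : Integrable (fun z => ν z * P t x z * q₀ z) := by
      refine (hp.sub hdi).congr (Eventually.of_forall fun z => ?_)
      simp only [Pi.sub_apply]; ring
    rw [← integral_sub hp hq, ← integral_const_mul]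
    refine (abs_integral_le_integral_abs).trans ?_
    refine integral_mono_of_nonneg (Eventually.of_forall fun _ => abs_nonneg _) (hi.abs.const_mul _) (Eventually.of_forall fun z => ?_)
    simp only
    rw [← mul_sub, abs_mul]
    exact mul_le_mul_of_nonneg_right (hbd z) (abs_nonneg _)
  · have hq : ¬ Integrable (fun z => ν z * P t x z * q₀ z) := by
      intro hq
      apply hp
      refine (hq.add hdi).congr (Eventually.of_forall fun z => ?_)
      simp only [Pi.add_apply]; ring
    rw [integral_undef hp, integral_undef hq]
    simp only [sub_zero, abs_zero]
    positivity

end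

/-- Proposition 1.4 (L¹–L∞ continuity): for every `μ ≥ 1` there is `C > 0`,
independent of `W`, such that two solutions of the canonical equation with bounded data
`p₀, q₀` and `p₀ − q₀ ∈ L¹` satisfy
`sup_x |p(t,x) − q(t,x)| ≤ (C/√t)·‖p₀ − q₀‖_{L¹}` for every `t > 0`. -/
theorem l1_linfty_estimate (μ : ℝ) (hμ : 1 ≤ μ) :
    ∃ C : ℝ, 0 < C ∧ ∀ ν a : ℝ → ℝ, Continuous ν → Continuous a →
      Elliptic μ ν → Elliptic μ a →
      ∀ W : ℝ, 0 ≤ W →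
      ∀ P : ℝ → ℝ → ℝ → ℝ, IsFundSol ν a W P →
      ∀ p₀ q₀ : ℝ → ℝ, (∃ B : ℝ, ∀ x, |p₀ x| ≤ B) → (∃ B : ℝ, ∀ x, |q₀ x| ≤ B) →
      Integrable (fun y => p₀ y - q₀ y) →
      ∀ t : ℝ, 0 < t → ∀ x : ℝ,
        |(∫ y : ℝ, ν y * P t x y * p₀ y) - ∫ y : ℝ, ν y * P t x y * q₀ y| ≤
          C / Real.sqrt t * ∫ y : ℝ, |p₀ y - q₀ y| := by
  refine ⟨4 * μ ^ 4, by positivity, ?_⟩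
  intro ν a hν ha eν ea W hW P hP p₀ q₀ _ _ hi t ht x
  exact l1_aux hμ hν ha eν ea hW hP hi ht x
end

section
/- Two-sided bounds for the resolvent Green function (Proposition of Section 1.4): There exists, for every C₀ > 0, a constant C > 0 depending only on C₀ with the following property. Let W > 0, λ > 0, let T : ℝ → ℝ be any function, and let P : (0,∞) × ℝ × ℝ → ℝ be measurable in t and satisfy, for all t > 0 and x, y ∈ ℝ, (1/(C₀ t^{1/2}))·exp(−C₀|T(x) − T(y) − Wt|²/t) ≤ P(t,x,y) ≤ (C₀/t^{1/2})·exp(−|T(x) − T(y) − Wt|²/(C₀ t)). Define G_λ(x,y) := ∫₀^∞ e^{−λW²t} P(t,x,y) dt. Then for all x, y ∈ ℝ with T(x) ≥ T(y): (1/(W C √(λ+C)))·exp(−2W√C(√(λ+C) − √C)(T(x) − T(y))) ≤ G_λ(x,y) ≤ (C/(W√(λC+1)))·exp(−(2W/C)(√(λC+1) − 1)(T(x) − T(y))). -/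
open MeasureTheory

open Real Set Filter Topology in
lemma gf_erf : ∃ E : ℝ → ℝ, (∀ x, HasDerivAt E (Real.exp (-x ^ 2)) x) ∧ E 0 = 0 ∧
    Tendsto E atTop (𝓝 (√π / 2)) ∧ Tendsto E atBot (𝓝 (-(√π / 2))) := by
  have hc : Continuous fun s : ℝ => Real.exp (-s ^ 2) := by fun_prop
  have hi : Integrable fun s : ℝ => Real.exp (-s ^ 2) := by
    simpa using integrable_exp_neg_mul_sq (b := 1) one_pos
  have hI : ∫ s in Ioi (0:ℝ), Real.exp (-s ^ 2) = √π / 2 := by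
    simpa using integral_gaussian_Ioi 1
  have hT : Tendsto (fun x => ∫ s in (0:ℝ)..x, Real.exp (-s ^ 2)) atTop (𝓝 (√π / 2)) := by
    rw [← hI]
    exact intervalIntegral_tendsto_integral_Ioi 0 hi.integrableOn tendsto_id
  refine ⟨fun x => ∫ s in (0:ℝ)..x, Real.exp (-s ^ 2), fun x => ?_, by simp, hT, ?_⟩
  · exact intervalIntegral.integral_hasDerivAt_right (hc.intervalIntegrable _ _)
      (hc.stronglyMeasurableAtFilter _ _) hc.continuousAt
  · have h2 := (hT.comp tendsto_neg_atBot_atTop).neg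
    refine h2.congr fun x => ?_
    have h := intervalIntegral.integral_comp_neg (a := 0) (b := x)
      (fun s : ℝ => Real.exp (-s ^ 2))
    simp only [even_two.neg_pow, neg_zero] at h
    simp only [Function.comp]
    rw [h, intervalIntegral.integral_symm, neg_neg]

open Real Set Filter Topology in
lemma gf_key (a b : ℝ) (ha : 0 < a) (hb : 0 ≤ b) :
    IntegrableOn (fun t : ℝ => 1 / √t * Real.exp (-(a ^ 2 * t) - b ^ 2 / t)) (Ioi 0) ∧
    ∫ t in Ioi (0:ℝ), 1 / √t * Real.exp (-(a ^ 2 * t) - b ^ 2 / t) =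
      √π / a * Real.exp (-2 * a * b) := by
  obtain ⟨E, hE, hE0, hEt, hEb⟩ := gf_erf
  set f : ℝ → ℝ := fun t => 1 / √t * Real.exp (-(a ^ 2 * t) - b ^ 2 / t) with hf
  set g : ℝ → ℝ := fun t => 1 / a * (Real.exp (-2 * a * b) * E (a * √t - b * (√t)⁻¹) +
    Real.exp (2 * a * b) * E (a * √t + b * (√t)⁻¹)) with hg
  have hderiv : ∀ t ∈ Ioi (0:ℝ), HasDerivAt g (f t) t := by
    intro t ht
    have ht' : (0:ℝ) < t := ht
    have hs : 0 < √t := Real.sqrt_pos.2 ht'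
    have hd := Real.hasDerivAt_sqrt ht'.ne'
    have hd1 := hd.const_mul a
    have hd2 := (hd.inv hs.ne').const_mul b
    have h1 := ((hE _).comp t (hd1.sub hd2)).const_mul (Real.exp (-2 * a * b))
    have h2 := ((hE _).comp t (hd1.add hd2)).const_mul (Real.exp (2 * a * b))
    have h3 := (h1.add h2).const_mul (1 / a)
    refine h3.congr_deriv ?_
    have e1 : Real.exp (-2 * a * b) * Real.exp (-(a * √t - b * (√t)⁻¹) ^ 2) =
        Real.exp (-(a ^ 2 * t) - b ^ 2 / t) := by
      rw [← Real.exp_add]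
      congr 1
      have : t = √t ^ 2 := (Real.sq_sqrt ht'.le).symm
      generalize √t = s at *
      subst this
      field_simp
      ring
    have e2 : Real.exp (2 * a * b) * Real.exp (-(a * √t + b * (√t)⁻¹) ^ 2) =
        Real.exp (-(a ^ 2 * t) - b ^ 2 / t) := by
      rw [← Real.exp_add]
      congr 1
      have : t = √t ^ 2 := (Real.sq_sqrt ht'.le).symm
      generalize √t = s at *
      subst this
      field_simp
      ring
    simp only [Pi.sub_apply, Pi.add_apply, Pi.inv_apply, hf] at *
    rw [← mul_assoc, ← mul_assoc, e1, e2]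
    field_simp
    ring
  have hpos : ∀ t ∈ Ioi (0:ℝ), 0 ≤ f t := fun t _ => by positivity
  have hsT : Tendsto (fun t : ℝ => √t) atTop atTop := Real.tendsto_sqrt_atTop
  have hs0 : Tendsto (fun t : ℝ => √t) (𝓝[>] 0) (𝓝[>] 0) := by
    refine tendsto_nhdsWithin_iff.2 ⟨?_, ?_⟩
    · have := (Real.continuous_sqrt.tendsto 0)
      rw [Real.sqrt_zero] at this
      exact this.mono_left nhdsWithin_le_nhds
    · filter_upwards [self_mem_nhdsWithin] with t ht using Real.sqrt_pos.2 ht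
  have hiT : Tendsto (fun t : ℝ => b * (√t)⁻¹) atTop (𝓝 0) := by
    simpa using (tendsto_inv_atTop_zero.comp hsT).const_mul b
  have haT : Tendsto (fun t : ℝ => a * √t) atTop atTop := hsT.const_mul_atTop ha
  have ha0 : Tendsto (fun t : ℝ => a * √t) (𝓝[>] 0) (𝓝 0) := by
    simpa using (tendsto_nhds_of_tendsto_nhdsWithin hs0).const_mul a
  have hgT : Tendsto g atTop (𝓝 (1 / a * (Real.exp (-2 * a * b) * (√π / 2) +
      Real.exp (2 * a * b) * (√π / 2)))) := by
    refine (((hEt.comp ?_).const_mul _).add ((hEt.comp ?_).const_mul _)).const_mul _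
    · simpa [sub_eq_add_neg] using haT.atTop_add hiT.neg
    · exact haT.atTop_add hiT
  have hg0 : Tendsto g (𝓝[>] 0) (𝓝 (1 / a * (Real.exp (2 * a * b) * (√π / 2) -
      Real.exp (-2 * a * b) * (√π / 2)))) := by
    rcases hb.eq_or_lt with rfl | hb
    · have hc : Tendsto E (𝓝 0) (𝓝 0) := by
        simpa [hE0] using (hE 0).continuousAt.tendsto
      have := hc.comp ha0
      have h2 := (this.add this).const_mul (1 / a)
      simpa [hg, Function.comp_def] using h2
    · have hi0 : Tendsto (fun t : ℝ => b * (√t)⁻¹) (𝓝[>] 0) atTop :=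
        (tendsto_inv_nhdsGT_zero.comp hs0).const_mul_atTop hb
      rw [show Real.exp (2 * a * b) * (√π / 2) - Real.exp (-2 * a * b) * (√π / 2) =
        Real.exp (-2 * a * b) * (-(√π / 2)) + Real.exp (2 * a * b) * (√π / 2) by ring]
      refine (((hEb.comp ?_).const_mul _).add ((hEt.comp ?_).const_mul _)).const_mul _
      · simpa [sub_eq_add_neg] using ha0.add_atBot (tendsto_neg_atTop_atBot.comp hi0)
      · exact ha0.add_atTop hi0
  set L := 1 / a * (Real.exp (2 * a * b) * (√π / 2) - Real.exp (-2 * a * b) * (√π / 2)) with hL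
  set G := Function.update g 0 L with hG
  have hGc : ContinuousWithinAt G (Ici 0) 0 := by
    rw [hG, continuousWithinAt_update_same, Ici_sdiff_left]
    exact hg0
  have hGe : ∀ t ∈ Ioi (0:ℝ), G =ᶠ[𝓝 t] g := fun t ht => by
    filter_upwards [Ioi_mem_nhds ht] with s hs
    exact Function.update_of_ne (ne_of_gt hs) _ _
  have hGd : ∀ t ∈ Ioi (0:ℝ), HasDerivAt G (f t) t := fun t ht =>
    (hderiv t ht).congr_of_eventuallyEq (hGe t ht)
  have hGT := hgT.congr' (f₂ := G) (by
    filter_upwards [eventually_gt_atTop 0] with s hs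
    exact (Function.update_of_ne (ne_of_gt hs) _ _).symm)
  refine ⟨integrableOn_Ioi_deriv_of_nonneg hGc hGd hpos hGT, ?_⟩
  rw [integral_Ioi_of_hasDerivAt_of_nonneg hGc hGd hpos hGT]
  simp only [hG, Function.update_self, hL]
  field_simp
  ring

/-- Integrated Gaussian: exponent constant `k`. -/
lemma gf_gauss (k W lam D : ℝ) (hk : 0 < k) (hW : 0 < W) (hl : 0 < lam) (hD : 0 ≤ D) :
    IntegrableOn (fun t : ℝ => Real.exp (-lam * W ^ 2 * t) *
      (1 / √t * Real.exp (-k * |D - W * t| ^ 2 / t))) (Set.Ioi 0) ∧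
    ∫ t in Set.Ioi (0:ℝ), Real.exp (-lam * W ^ 2 * t) *
      (1 / √t * Real.exp (-k * |D - W * t| ^ 2 / t)) =
      √Real.pi / (W * √(lam + k)) * Real.exp (-2 * W * √k * (√(lam + k) - √k) * D) := by
  have hs : 0 < √(lam + k) := Real.sqrt_pos.2 (by positivity)
  obtain ⟨h1, h2⟩ := gf_key (W * √(lam + k)) (√k * D) (by positivity) (by positivity)
  have hq1 : √(lam + k) ^ 2 = lam + k := Real.sq_sqrt (by positivity)
  have hq2 : √k ^ 2 = k := Real.sq_sqrt (by positivity)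
  have he : ∀ t ∈ Set.Ioi (0:ℝ), Real.exp (2 * k * W * D) * (1 / √t *
      Real.exp (-((W * √(lam + k)) ^ 2 * t) - (√k * D) ^ 2 / t)) =
      Real.exp (-lam * W ^ 2 * t) * (1 / √t * Real.exp (-k * |D - W * t| ^ 2 / t)) := by
    intro t ht
    have ht' : (0:ℝ) < t := ht
    rw [mul_left_comm, mul_left_comm (Real.exp (-lam * W ^ 2 * t)), ← Real.exp_add,
      ← Real.exp_add, sq_abs, mul_pow, mul_pow, hq1, hq2]
    congr 2
    field_simp
    ring
  refine ⟨IntegrableOn.congr_fun (h1.const_mul (Real.exp (2 * k * W * D))) he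
    measurableSet_Ioi, ?_⟩
  rw [← setIntegral_congr_fun measurableSet_Ioi he, integral_const_mul, h2, mul_left_comm,
    ← Real.exp_add]
  congr 2
  linear_combination (-2 * W * D) * hq2

/-- Monotonicity of the lower rate. -/
lemma gf_rate1 (lam c C : ℝ) (hl : 0 < lam) (hc : 0 < c) (h : c ≤ C) :
    √c * (√(lam + c) - √c) ≤ √C * (√(lam + C) - √C) := by
  have hC : 0 < C := hc.trans_le h
  have e : ∀ k : ℝ, 0 < k → √k * (√(lam + k) - √k) = lam / (√(lam / k + 1) + 1) := by
    intro k hk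
    have h1 : √(lam + k) = √k * √(lam / k + 1) := by
      rw [← Real.sqrt_mul hk.le]
      congr 1
      field_simp
    have h2 : √k ^ 2 = k := Real.sq_sqrt hk.le
    have h3 : √(lam / k + 1) ^ 2 = lam / k + 1 := Real.sq_sqrt (by positivity)
    rw [eq_div_iff (by positivity), h1]
    have : k * (lam / k) = lam := by field_simp
    linear_combination (√(lam / k + 1) ^ 2 - 1) * h2 + k * h3 + this
  rw [e c hc, e C hC]
  gcongr

/-- Monotonicity of the upper rate. -/
lemma gf_rate2 (lam c C : ℝ) (hl : 0 < lam) (hc : 0 < c) (h : c ≤ C) :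
    1 / C * (√(lam * C + 1) - 1) ≤ 1 / c * (√(lam * c + 1) - 1) := by
  have hC : 0 < C := hc.trans_le h
  have e : ∀ k : ℝ, 0 < k → 1 / k * (√(lam * k + 1) - 1) = lam / (√(lam * k + 1) + 1) := by
    intro k hk
    have h3 : √(lam * k + 1) ^ 2 = lam * k + 1 := Real.sq_sqrt (by positivity)
    rw [eq_div_iff (by positivity)]
    generalize √(lam * k + 1) = s at *
    field_simp
    linear_combination h3
  rw [e c hc, e C hC]
  gcongr

/-- Two-sided bounds for the resolvent Green function
`G_λ(x,y) = ∫₀^∞ e^{−λW²t}P(t,x,y)dt` of a kernel `P` satisfying two-sided Gaussian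
bounds with constant `C₀`: for every `C₀ > 0` there is `C > 0` depending only on `C₀`
such that, whenever `T(x) ≥ T(y)`,
`(1/(WC√(λ+C)))e^{−2W√C(√(λ+C)−√C)(T(x)−T(y))} ≤ G_λ(x,y)
  ≤ (C/(W√(λC+1)))e^{−(2W/C)(√(λC+1)−1)(T(x)−T(y))}`. -/
theorem green_function_bounds (C₀ : ℝ) (hC₀ : 0 < C₀) :
    ∃ C : ℝ, 0 < C ∧ ∀ W : ℝ, 0 < W → ∀ lam : ℝ, 0 < lam →
      ∀ T : ℝ → ℝ, ∀ P : ℝ → ℝ → ℝ → ℝ,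
      (∀ x y : ℝ, Measurable fun t => P t x y) →
      (∀ t : ℝ, 0 < t → ∀ x y : ℝ,
        1 / (C₀ * Real.sqrt t) * Real.exp (-C₀ * |T x - T y - W * t| ^ 2 / t) ≤ P t x y ∧
        P t x y ≤ C₀ / Real.sqrt t * Real.exp (-|T x - T y - W * t| ^ 2 / (C₀ * t))) →
      ∀ x y : ℝ, T y ≤ T x →
        1 / (W * C * Real.sqrt (lam + C)) *
            Real.exp (-2 * W * Real.sqrt C * (Real.sqrt (lam + C) - Real.sqrt C) *
              (T x - T y)) ≤
          (∫ t in Set.Ioi (0 : ℝ), Real.exp (-lam * W ^ 2 * t) * P t x y) ∧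
        (∫ t in Set.Ioi (0 : ℝ), Real.exp (-lam * W ^ 2 * t) * P t x y) ≤
          C / (W * Real.sqrt (lam * C + 1)) *
            Real.exp (-(2 * W / C) * (Real.sqrt (lam * C + 1) - 1) * (T x - T y)) := by
  refine ⟨C₀ + 4 * C₀ ^ 2, by positivity, ?_⟩
  intro W hW lam hl T P hm hP x y hxy
  set C := C₀ + 4 * C₀ ^ 2 with hCdef
  have hC : 0 < C := by positivity
  have hCC : C₀ ≤ C := by rw [hCdef]; nlinarith [sq_nonneg C₀]
  have hD : 0 ≤ T x - T y := sub_nonneg.2 hxy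
  generalize hDe : T x - T y = D at *
  have hP' : ∀ t : ℝ, 0 < t →
      1 / (C₀ * Real.sqrt t) * Real.exp (-C₀ * |D - W * t| ^ 2 / t) ≤ P t x y ∧
      P t x y ≤ C₀ / Real.sqrt t * Real.exp (-|D - W * t| ^ 2 / (C₀ * t)) := by
    intro t ht
    have := hP t ht x y
    rwa [hDe] at this
  obtain ⟨i1, v1⟩ := gf_gauss C₀ W lam D hC₀ hW hl hD
  obtain ⟨i2, v2⟩ := gf_gauss (1 / C₀) W lam D (by positivity) hW hl hD
  have i1' := i1.const_mul (1 / C₀)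
  have i2' := i2.const_mul C₀
  have b1 : ∀ t ∈ Set.Ioi (0:ℝ), 1 / C₀ * (Real.exp (-lam * W ^ 2 * t) *
      (1 / √t * Real.exp (-C₀ * |D - W * t| ^ 2 / t))) ≤
      Real.exp (-lam * W ^ 2 * t) * P t x y := by
    intro t ht
    have ht' : (0:ℝ) < t := ht
    refine le_of_eq_of_le ?_ (mul_le_mul_of_nonneg_left (hP' t ht).1 (Real.exp_pos _).le)
    have := Real.sqrt_pos.2 ht'
    field_simp
  have b2 : ∀ t ∈ Set.Ioi (0:ℝ), Real.exp (-lam * W ^ 2 * t) * P t x y ≤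
      C₀ * (Real.exp (-lam * W ^ 2 * t) *
      (1 / √t * Real.exp (-(1 / C₀) * |D - W * t| ^ 2 / t))) := by
    intro t ht
    have ht' : (0:ℝ) < t := ht
    refine (mul_le_mul_of_nonneg_left (hP' t ht).2 (Real.exp_pos _).le).trans_eq ?_
    have := Real.sqrt_pos.2 ht'
    rw [show -(1 / C₀) * |D - W * t| ^ 2 / t = -|D - W * t| ^ 2 / (C₀ * t) by field_simp]
    ring
  have i0 : IntegrableOn (fun t => Real.exp (-lam * W ^ 2 * t) * P t x y) (Set.Ioi 0) := by
    refine Integrable.mono' i2' ?_ ?_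
    · have := hm x y
      exact (Measurable.mul (by fun_prop) this).aestronglyMeasurable
    · filter_upwards [ae_restrict_mem measurableSet_Ioi] with t ht
      have ht' : (0:ℝ) < t := ht
      rw [Real.norm_of_nonneg]
      · exact b2 t ht
      · exact le_trans (by positivity) (b1 t ht)
  have r1 := gf_rate1 lam C₀ C hl hC₀ hCC
  have r2 := gf_rate2 lam C₀ C hl hC₀ hCC
  have hpi1 : 1 ≤ √Real.pi := Real.one_le_sqrt.2 (by linarith [Real.pi_gt_three])
  have hpi2 : √Real.pi ≤ 2 := by
    rw [Real.sqrt_le_left (by norm_num)]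
    linarith [Real.pi_le_four]
  constructor
  · refine le_trans ?_ (setIntegral_mono_on i1' i0 measurableSet_Ioi b1)
    rw [integral_const_mul, v1, ← mul_assoc]
    refine mul_le_mul ?_ (Real.exp_le_exp.2 ?_) (Real.exp_pos _).le (by positivity)
    · rw [show 1 / C₀ * (√Real.pi / (W * √(lam + C₀))) =
        √Real.pi / (W * C₀ * √(lam + C₀)) by field_simp]
      have : 0 < √(lam + C₀) := Real.sqrt_pos.2 (by positivity)
      gcongr
    · have := mul_le_mul_of_nonneg_left r1 (show 0 ≤ 2 * W * D by positivity)
      linarith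
  · refine (setIntegral_mono_on i0 i2' measurableSet_Ioi b2).trans ?_
    rw [integral_const_mul, v2, ← mul_assoc]
    have hs : 0 < √C₀ := Real.sqrt_pos.2 hC₀
    have hs2 : √C₀ ^ 2 = C₀ := Real.sq_sqrt hC₀.le
    have hu : 0 < √(lam * C₀ + 1) := Real.sqrt_pos.2 (by positivity)
    have hU : 0 < √(lam * C + 1) := Real.sqrt_pos.2 (by positivity)
    have q1 : √(1 / C₀) = 1 / √C₀ := by rw [Real.sqrt_div zero_le_one, Real.sqrt_one]
    have q2 : √(lam + 1 / C₀) = √(lam * C₀ + 1) / √C₀ := by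
      rw [← Real.sqrt_div (by positivity)]
      congr 1
      field_simp
    rw [q1, q2]
    refine mul_le_mul ?_ (Real.exp_le_exp.2 ?_) (Real.exp_pos _).le (by positivity)
    · rw [show C₀ * (√Real.pi / (W * (√(lam * C₀ + 1) / √C₀))) =
        (C₀ * √Real.pi * √C₀) / (W * √(lam * C₀ + 1)) by field_simp]
      rw [div_le_div_iff₀ (by positivity) (by positivity)]
      have key : (C₀ * 2 * √C₀) * √(lam * C + 1) ≤ C * √(lam * C₀ + 1) := by
        refine (sq_le_sq₀ (by positivity) (by positivity)).1 ?_
        rw [mul_pow, mul_pow, mul_pow, mul_pow, hs2, Real.sq_sqrt (by positivity),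
          Real.sq_sqrt (by positivity)]
        have h1 : 4 * C₀ ^ 3 ≤ C ^ 2 := by
          rw [hCdef]; nlinarith [pow_pos hC₀ 3, pow_pos hC₀ 2, pow_pos hC₀ 4]
        have h2 : 4 * C₀ ^ 2 ≤ C := by rw [hCdef]; linarith
        have h3 := mul_le_mul_of_nonneg_left h2 (show 0 ≤ lam * C₀ * C by positivity)
        nlinarith
      have k2 : C₀ * √Real.pi * √C₀ * √(lam * C + 1) ≤ (C₀ * 2 * √C₀) * √(lam * C + 1) := by
        gcongr
      have k3 := mul_le_mul_of_nonneg_left (k2.trans key) hW.le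
      linarith
    · have := mul_le_mul_of_nonneg_left r2 (show 0 ≤ 2 * W * D by positivity)
      have e1 : -2 * W * (1 / √C₀) * (√(lam * C₀ + 1) / √C₀ - 1 / √C₀) * D =
          -(2 * W * D * (1 / C₀ * (√(lam * C₀ + 1) - 1))) := by
        rw [← hs2]
        simp only [hs2]
        field_simp
        rw [hs2]
      rw [e1, show -(2 * W / C) * (√(lam * C + 1) - 1) * D =
        -(2 * W * D * (1 / C * (√(lam * C + 1) - 1))) by ring]
      linarith
end
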